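/- arXiv:math/9605202 — 4 statements merged into one kernel-verified Lean document; each statement's English description precedes it below -/
import Mathlib

section
/- Let (d_n)_{n∈ℕ} be a sequence of integers with d_n ≥ 2 and (q_n)_{n∈ℕ} a sequence of prime powers such that: (1) whenever d_n = 2, then q_n > 3; and (2) there does NOT exist an infinite subset I of ℕ and an integer d such that d_n = d for all n ∈ I and the q_n for n ∈ I are strictly increasing (i.e., q_n < q_m whenever n, m ∈ I and n < m). Then c(∏_{n∈ℕ} SL(d_n, GF(q_n))) > ω; that is, the full direct product of the special linear groups SL_{d_n}(GF(q_n)) cannot be written as the union of a countable increasing chain of proper subgroups. -/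
section BoolChain

/-- A power set is not a countable increasing union of proper Boolean subalgebras. -/
theorem bool_chain {A : Type*} (B : ℕ → Set (Set A)) (hm : Monotone B)
    (hu : ∀ X, ∃ t, X ∈ B t) (hc : ∀ t X, X ∈ B t → Xᶜ ∈ B t)
    (hi : ∀ t X Y, X ∈ B t → Y ∈ B t → X ∩ Y ∈ B t) : ∃ t, ∀ X, X ∈ B t := by
  classical
  have hun : ∀ t X Y, X ∈ B t → Y ∈ B t → X ∪ Y ∈ B t := by
    intro t X Y hX hY
    have := hc t _ (hi t _ _ (hc t _ hX) (hc t _ hY))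
    rwa [Set.compl_inter, compl_compl, compl_compl] at this
  set good : Set A → Prop := fun X => ∃ t, ∀ Y ⊆ X, Y ∈ B t with hgood
  have good_union : ∀ X Y, good X → good Y → good (X ∪ Y) := by
    rintro X Y ⟨s, hs⟩ ⟨t, ht⟩
    refine ⟨max s t, fun Z hZ => ?_⟩
    have : Z = (Z ∩ X) ∪ (Z ∩ Y) := by
      rw [← Set.inter_union_distrib_left, Set.inter_eq_left.mpr hZ]
    rw [this]
    exact hun _ _ _ (hm (le_max_left s t) (hs _ Set.inter_subset_right))
      (hm (le_max_right s t) (ht _ Set.inter_subset_right))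
  have good_sub : ∀ X Y, X ⊆ Y → good Y → good X := by
    rintro X Y h ⟨s, hs⟩
    exact ⟨s, fun Z hZ => hs Z (hZ.trans h)⟩
  have hdisj : ∀ C : ℕ → Set A, (∀ i j, i < j → Disjoint (C i) (C j)) → ∃ k, good (C k) := by
    intro C hC
    by_contra hbad
    push Not at hbad
    choose s hs using fun k => hu (C k)
    have : ∀ k, ∃ Y ⊆ C k, Y ∉ B (max k (s k)) := by
      intro k
      by_contra h
      push Not at h
      exact hbad k ⟨_, h⟩
    choose Y hYC hYB using this
    obtain ⟨t, ht⟩ := hu (⋃ k, Y k)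
    apply hYB t
    have : Y t = (⋃ k, Y k) ∩ C t := by
      ext a
      simp only [Set.mem_inter_iff, Set.mem_iUnion]
      constructor
      · exact fun h => ⟨⟨t, h⟩, hYC t h⟩
      · rintro ⟨⟨k, hk⟩, hat⟩
        rcases lt_trichotomy k t with h | h | h
        · exact absurd hat (Set.disjoint_left.mp (hC k t h) (hYC k hk))
        · exact h ▸ hk
        · exact absurd (hYC k hk) (Set.disjoint_left.mp (hC t k h) hat)
    rw [this]
    exact hi _ _ _ (hm (le_max_left _ _) ht) (hm (le_max_right _ _) (hs t))
  by_contra hcon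
  have huniv : ¬ good Set.univ := by
    rintro ⟨t, ht⟩
    exact hcon ⟨t, fun X => ht X (Set.subset_univ _)⟩
  have hsplit : ∃ D, ¬ good D ∧ ∀ X ⊆ D, good X ∨ good (D \ X) := by
    by_contra h
    push Not at h
    choose f hf1 hf2 hf3 using h
    let C : ℕ → {D : Set A // ¬ good D} := fun n =>
      Nat.rec ⟨Set.univ, huniv⟩ (fun _ D => ⟨f D.1 D.2, hf2 D.1 D.2⟩) n
    have hCs : ∀ k, (C (k+1)).1 = f (C k).1 (C k).2 := fun k => rfl
    have hanti : Antitone fun k => (C k).1 :=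
      antitone_nat_of_succ_le fun k => by rw [hCs]; exact hf1 _ _
    obtain ⟨k, hk⟩ := hdisj (fun k => (C k).1 \ (C (k+1)).1) (by
      intro i j hij
      rw [Set.disjoint_left]
      rintro a ⟨_, h2⟩ ⟨h3, _⟩
      exact h2 (hanti (Nat.succ_le_of_lt hij) h3))
    exact hf3 _ (C k).2 hk
  obtain ⟨D, hD, hsp⟩ := hsplit
  have hall : ∃ t, ∀ X ⊆ D, good X → X ∈ B t := by
    by_contra h
    push Not at h
    have step : ∀ (Y : {Y : Set A // good Y ∧ Y ⊆ D}) (k : ℕ),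
        ∃ Y' : {Y : Set A // good Y ∧ Y ⊆ D}, Y.1 ⊆ Y'.1 ∧ Y'.1 \ Y.1 ∉ B k := by
      rintro ⟨Y, ⟨s, hs⟩, hYD⟩ k
      obtain ⟨X, hXD, hX, hXB⟩ := h (max s k)
      refine ⟨⟨Y ∪ X, good_union _ _ ⟨s, hs⟩ hX, Set.union_subset hYD hXD⟩,
        Set.subset_union_left, fun hmem => hXB ?_⟩
      have e : X = (X ∩ Y) ∪ ((Y ∪ X) \ Y) := by
        ext a; simp
      rw [e]
      exact hun _ _ _ (hm (le_max_left _ _) (hs _ Set.inter_subset_right))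
        (hm (le_max_right _ _) hmem)
    choose f hf1 hf2 using step
    let C : ℕ → {Y : Set A // good Y ∧ Y ⊆ D} := fun n =>
      Nat.rec ⟨∅, ⟨(hu ∅).choose, fun Y hY => by
        rw [Set.subset_empty_iff.mp hY]; exact (hu ∅).choose_spec⟩, Set.empty_subset _⟩
        (fun k Y => f Y k) n
    have hCs : ∀ k, C (k+1) = f (C k) k := fun k => rfl
    have hmono : Monotone fun k => (C k).1 :=
      monotone_nat_of_le_succ fun k => by rw [hCs]; exact hf1 _ _
    have hX : ∀ k, (C (k+1)).1 \ (C k).1 ∉ B k := fun k => by rw [hCs]; exact hf2 _ _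
    have hdis : ∀ i j a, i < j → a ∈ (C (i+1)).1 \ (C i).1 → a ∈ (C (j+1)).1 \ (C j).1 → False := by
      rintro i j a hij ⟨h1, _⟩ ⟨_, h4⟩
      exact h4 (hmono (Nat.succ_le_of_lt hij) h1)
    let Z : Set A := ⋃ k, (C (2*k+1)).1 \ (C (2*k)).1
    have hZD : Z ⊆ D := Set.iUnion_subset fun k => Set.sdiff_subset.trans (C (2*k+1)).2.2
    rcases hsp Z hZD with ⟨s, hs⟩ | ⟨s, hs⟩
    · exact hX (2*s) (hm (by omega : s ≤ 2*s) (hs _ (Set.subset_iUnion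
        (fun k => (C (2*k+1)).1 \ (C (2*k)).1) s)))
    · refine hX (2*s+1) (hm (by omega : s ≤ 2*s+1) (hs _ ?_))
      intro a ha
      refine ⟨(C (2*s+1+1)).2.2 ha.1, fun haZ => ?_⟩
      obtain ⟨k, hk⟩ := Set.mem_iUnion.mp haZ
      rcases lt_or_gt_of_ne (show 2*k ≠ 2*s+1 by omega) with h | h
      · exact hdis _ _ a h hk ha
      · exact hdis _ _ a h ha hk
  obtain ⟨t, ht⟩ := hall
  obtain ⟨s, hs⟩ := hu D
  refine hD ⟨max s t, fun X hXD => ?_⟩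
  rcases hsp X hXD with h | h
  · exact hm (le_max_right _ _) (ht X hXD h)
  · have e : X = D ∩ (D \ X)ᶜ := by
      ext a; simp only [Set.mem_inter_iff, Set.mem_compl_iff, Set.mem_sdiff]
      have := @hXD a
      tauto
    rw [e]
    exact hi _ _ _ (hm (le_max_left _ _) hs)
      (hc _ _ (hm (le_max_right _ _) (ht _ Set.sdiff_subset h)))

open Classical in
/-- The function equal to `g` on `B` and `1` elsewhere, as a homomorphism in `g`. -/
noncomputable def indHom {A Γ : Type*} [Group Γ] (B : Set A) : Γ →* (A → Γ) where
  toFun g a := if a ∈ B then g else 1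
  map_one' := by ext; simp
  map_mul' x y := by ext a; by_cases h : a ∈ B <;> simp [h]

open scoped commutatorElement in
/-- Koppelberg and Tits: powers of a finite perfect group have uncountable cofinality. -/
theorem koppelberg_tits {A Γ : Type*} [Group Γ] [Finite Γ] (hp : commutator Γ = ⊤)
    (H : ℕ → Subgroup (A → Γ)) (hm : Monotone H) (hu : ∀ g, ∃ t, g ∈ H t) :
    ∃ t, ∀ g, g ∈ H t := by
  classical
  have := Fintype.ofFinite Γ
  have fin : ∀ B : Set A, ∃ t, ∀ g : Γ, indHom B g ∈ H t := by
    intro B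
    choose s hs using fun g : Γ => hu (indHom B g)
    exact ⟨Finset.univ.sup s, fun g => hm (Finset.le_sup (Finset.mem_univ g)) (hs g)⟩
  obtain ⟨t0, ht0⟩ := fin Set.univ
  obtain ⟨t, ht⟩ := bool_chain (fun t => {B : Set A | ∀ g : Γ, indHom B g ∈ H (t0 + t)})
    (fun s t h B hB g => hm (by omega) (hB g))
    (fun X => by
      obtain ⟨t, ht⟩ := fin X
      exact ⟨t, fun g => hm (by omega) (ht g)⟩)
    (fun t X hX g => by
      have : indHom Xᶜ g = indHom Set.univ g * (indHom X g)⁻¹ := by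
        ext a; by_cases h : a ∈ X <;> simp [indHom, h]
      rw [this]
      exact mul_mem (hm (by omega) (ht0 g)) (inv_mem (hX g)))
    (fun t X Y hX hY g => by
      have : commutator Γ ≤ (H (t0 + t)).comap (indHom (X ∩ Y)) := by
        rw [commutator_def, Subgroup.commutator_le]
        intro x _ y _
        have : indHom (X ∩ Y) ⁅x, y⁆ = ⁅indHom X x, indHom Y y⁆ := by
          ext a; by_cases h : a ∈ X <;> by_cases h' : a ∈ Y <;>
            simp [indHom, h, h', commutatorElement_def]
        rw [Subgroup.mem_comap, this, commutatorElement_def]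
        exact mul_mem (mul_mem (mul_mem (hX x) (hY y)) (inv_mem (hX x))) (inv_mem (hY y))
      rw [hp] at this
      exact this (Subgroup.mem_top g))
  refine ⟨t0 + t, fun f => ?_⟩
  have key : ∀ s : Finset Γ, (fun a => if f a ∈ s then f a else 1) ∈ H (t0 + t) := by
    intro s
    induction s using Finset.induction_on with
    | empty =>
      have : (fun a => if f a ∈ (∅ : Finset Γ) then f a else 1) = 1 := by ext a; simp
      rw [this]
      exact one_mem _
    | insert g s hg ih =>
      have : (fun a => if f a ∈ insert g s then f a else 1) =
          (fun a => if f a ∈ s then f a else 1) * indHom (f ⁻¹' {g}) g := by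
        ext a
        by_cases h : f a = g
        · simp [indHom, h, hg]
        · simp [indHom, h]
      rw [this]
      exact mul_mem ih (ht _ g)
  simpa using key Finset.univ

end BoolChain

section Bounded

/-- The box `∏ S n` is contained in one of the members of the chain. -/
def Bd {N : Type*} {G : N → Type*} [∀ n, Group (G n)] (H : ℕ → Subgroup (∀ n, G n))
    (S : ∀ n, Set (G n)) : Prop :=
  ∃ t, ∀ g : ∀ n, G n, (∀ n, g n ∈ S n) → g ∈ H t

open scoped Pointwise

variable {N : Type*} {G : N → Type*} [∀ n, Group (G n)] {H : ℕ → Subgroup (∀ n, G n)}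

theorem Bd.mono {S T : ∀ n, Set (G n)} (h : Bd H T) (hST : ∀ n, S n ⊆ T n) : Bd H S := by
  obtain ⟨t, ht⟩ := h
  exact ⟨t, fun g hg => ht g fun n => hST n (hg n)⟩

theorem Bd.single (hu : ∀ g, ∃ t, g ∈ H t) (w : ∀ n, G n) : Bd H (fun n => {w n}) := by
  obtain ⟨t, ht⟩ := hu w
  refine ⟨t, fun g hg => ?_⟩
  have : g = w := funext fun n => hg n
  rwa [this]

theorem Bd.mul (hm : Monotone H) {S T : ∀ n, Set (G n)} (hS : Bd H S) (hT : Bd H T) :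
    Bd H (fun n => S n * T n) := by
  obtain ⟨s, hs⟩ := hS
  obtain ⟨t, ht⟩ := hT
  refine ⟨max s t, fun g hg => ?_⟩
  choose x hx y hy hxy using fun n => Set.mem_mul.mp (hg n)
  have : g = x * y := funext fun n => (hxy n).symm
  rw [this]
  exact mul_mem (hm (le_max_left _ _) (hs x hx)) (hm (le_max_right _ _) (ht y hy))

theorem Bd.inv {S : ∀ n, Set (G n)} (hS : Bd H S) : Bd H (fun n => (S n)⁻¹) := by
  obtain ⟨s, hs⟩ := hS
  exact ⟨s, fun g hg => by simpa using inv_mem (hs g⁻¹ fun n => hg n)⟩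

end Bounded

section Supp

open Matrix

variable {ι : Type*} [Fintype ι] [DecidableEq ι] {F : Type*} [Field F]

/-- `M` is supported on `S × T`. -/
def Supp (S T : Set ι) (M : Matrix ι ι F) : Prop := ∀ a b, M a b ≠ 0 → a ∈ S ∧ b ∈ T

/-- matrices `1 + M` with `M` supported on `S × T`. -/
def USet (F : Type*) [Field F] (S T : Set ι) : Set (SpecialLinearGroup ι F) :=
  {g | Supp S T (g.1 - 1)}

theorem Supp.mul {S T S' T' : Set ι} {M M' : Matrix ι ι F} (h : Supp S T M) (h' : Supp S' T' M') :
    Supp S T' (M * M') := by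
  intro a b hab
  rw [Matrix.mul_apply] at hab
  obtain ⟨c, _, hc⟩ := Finset.exists_ne_zero_of_sum_ne_zero hab
  exact ⟨(h a c (left_ne_zero_of_mul hc)).1, (h' c b (right_ne_zero_of_mul hc)).2⟩

theorem Supp.mul_eq_zero {S T S' T' : Set ι} {M M' : Matrix ι ι F} (h : Supp S T M)
    (h' : Supp S' T' M') (hd : Disjoint T S') : M * M' = 0 := by
  ext a b
  rw [Matrix.mul_apply]
  refine Finset.sum_eq_zero fun c _ => ?_
  by_contra hc
  exact Set.disjoint_left.mp hd (h a c (left_ne_zero_of_mul hc)).2 (h' c b (right_ne_zero_of_mul hc)).1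

theorem Supp.det_one_add {S T : Set ι} {M : Matrix ι ι F} (h : Supp S T M) (hd : Disjoint S T) :
    (1 + M).det = 1 := by
  classical
  let D : Matrix ι ι F := Matrix.diagonal fun a => if a ∈ T then 1 else 0
  have h1 : M = M * D := by
    ext a b
    rw [Matrix.mul_diagonal]
    by_cases hb : b ∈ T
    · simp [hb]
    · have : M a b = 0 := by
        by_contra h0
        exact hb (h a b h0).2
      simp [this]
  have h2 : D * M = 0 := by
    ext a b
    rw [Matrix.diagonal_mul]
    by_cases ha : a ∈ T
    · have : M a b = 0 := by
        by_contra h0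
        exact Set.disjoint_left.mp hd (h a b h0).1 ha
      simp [this]
    · simp [ha]
  rw [h1, Matrix.det_one_add_mul_comm, h2, add_zero, Matrix.det_one]

/-- `1 + M` as an element of `SL`. -/
def Supp.toSL {S T : Set ι} {M : Matrix ι ι F} (h : Supp S T M) (hd : Disjoint S T) :
    SpecialLinearGroup ι F := ⟨1 + M, h.det_one_add hd⟩

theorem Supp.toSL_mem {S T : Set ι} {M : Matrix ι ι F} (h : Supp S T M) (hd : Disjoint S T) :
    h.toSL hd ∈ USet F S T := by
  show Supp S T ((1 + M) - 1)
  rwa [add_sub_cancel_left]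

/-- the basic commutator formula -/
theorem comm_formula {g x y : SpecialLinearGroup ι F} {P Q : Matrix ι ι F} (hg : g.1 = 1 + P)
    (hx : x.1 = 1 + Q) (hy : y.1 = 1 + P * Q) (h1 : Q * P = 0) (h2 : Q * Q = 0) :
    y = g * x * g⁻¹ * x⁻¹ := by
  have : y * (x * g) = g * x := by
    apply Subtype.ext
    show y.1 * (x.1 * g.1) = g.1 * x.1
    rw [hg, hx, hy]
    simp only [mul_add, add_mul, mul_one, one_mul, mul_assoc, h1, h2, mul_zero, add_zero]
    abel
  rw [← this]; group

theorem exists_match (S R : Finset ι) (h : S.card ≤ R.card) : ∃ Q Q' : Matrix ι ι F,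
    Supp (S : Set ι) R Q ∧ Supp (R : Set ι) S Q' ∧
    (∀ (T : Set ι) (M : Matrix ι ι F), Supp S T M → Q * (Q' * M) = M) ∧
    (∀ (T : Set ι) (M : Matrix ι ι F), Supp T S M → (M * Q) * Q' = M) := by
  classical
  obtain ⟨θ, hθ1, hθ2⟩ : ∃ θ : ι → ι, (∀ a ∈ S, θ a ∈ R) ∧ Set.InjOn θ S := by
    by_cases hR : R.Nonempty
    · obtain ⟨r, hr⟩ := hR
      obtain ⟨f⟩ : Nonempty (S ↪ R) :=
        Function.Embedding.nonempty_of_card_le (by simpa using h)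
      refine ⟨fun a => if ha : a ∈ S then (f ⟨a, ha⟩ : ι) else r, fun a ha => by simp [ha], ?_⟩
      intro a ha b hb hab
      have ha' : a ∈ S := ha
      have hb' : b ∈ S := hb
      simp only [ha', hb', dite_true] at hab
      simpa using f.injective (Subtype.ext hab)
    · rw [Finset.not_nonempty_iff_eq_empty] at hR
      subst hR
      have : S = ∅ := by simpa using h
      subst this
      exact ⟨id, by simp, by simp⟩
  let Q : Matrix ι ι F := fun a b => if a ∈ S ∧ b = θ a then 1 else 0
  have hQa : ∀ a b, Q a b = if a ∈ S ∧ b = θ a then 1 else 0 := fun _ _ => rfl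
  have hQ : Supp (S : Set ι) R Q := by
    intro a b hab
    have : a ∈ S ∧ b = θ a := by
      by_contra h0
      exact hab (if_neg h0)
    exact ⟨this.1, this.2 ▸ hθ1 a this.1⟩
  have hQQ : Q * Qᵀ = Matrix.diagonal fun a => if a ∈ S then 1 else 0 := by
    ext a b
    rw [Matrix.mul_apply, Matrix.diagonal_apply]
    by_cases ha : a ∈ S
    · rw [Finset.sum_eq_single (θ a)]
      · by_cases hab : a = b
        · subst hab; simp [hQa, Matrix.transpose_apply, ha]
        · have : ¬ (b ∈ S ∧ θ a = θ b) := fun hb => hab (hθ2 ha hb.1 hb.2)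
          simp [hQa, Matrix.transpose_apply, hab, this]
      · intro c _ hc
        simp [hQa, Matrix.transpose_apply, hc]
      · simp
    · rw [Finset.sum_eq_zero]
      · simp [ha]
      · intro c _; simp [hQa, Matrix.transpose_apply, ha]
  refine ⟨Q, Qᵀ, hQ, fun a b hab => (hQ b a hab).symm, ?_, ?_⟩
  · intro T M hM
    rw [← mul_assoc, hQQ]
    ext a b
    rw [Matrix.diagonal_mul]
    by_cases ha : a ∈ S
    · simp [ha]
    · have : M a b = 0 := by
        by_contra h0
        exact ha (hM a b h0).1
      simp [this]
  · intro T M hM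
    rw [mul_assoc, hQQ]
    ext a b
    rw [Matrix.mul_diagonal]
    by_cases ha : b ∈ S
    · simp [ha]
    · have : M a b = 0 := by
        by_contra h0
        exact ha (hM a b h0).2
      simp [this]

open scoped Pointwise in
theorem USet_split_right {S T T' : Set ι} (h : Disjoint S T) (h' : Disjoint S T') :
    USet F S (T ∪ T') ⊆ USet F S T * USet F S T' := by
  classical
  intro g hg
  let A : Matrix ι ι F := fun a b => if b ∈ T then (g.1 - 1) a b else 0
  let B : Matrix ι ι F := fun a b => if b ∈ T then 0 else (g.1 - 1) a b
  have hA : Supp S T A := by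
    intro a b hab
    by_cases hb : b ∈ T
    · exact ⟨(hg a b (by simpa [A, hb] using hab)).1, hb⟩
    · simp [A, hb] at hab
  have hB : Supp S T' B := by
    intro a b hab
    by_cases hb : b ∈ T
    · simp [B, hb] at hab
    · have := hg a b (by simpa [B, hb] using hab)
      exact ⟨this.1, this.2.resolve_left hb⟩
  refine Set.mem_mul.mpr ⟨_, hA.toSL_mem h, _, hB.toSL_mem h', ?_⟩
  apply Subtype.ext
  have h0 : A * B = 0 := hA.mul_eq_zero hB h.symm
  have hs : A + B = g.1 - 1 := by
    ext a b
    show A a b + B a b = _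
    by_cases hb : b ∈ T <;> simp [A, B, hb]
  show (1 + A) * (1 + B) = g.1
  simp only [mul_add, add_mul, mul_one, one_mul, h0, add_zero]
  rw [add_assoc, hs]; abel

open scoped Pointwise in
theorem USet_split_left {S S' T : Set ι} (h : Disjoint S T) (h' : Disjoint S' T) :
    USet F (S ∪ S') T ⊆ USet F S T * USet F S' T := by
  classical
  intro g hg
  let A : Matrix ι ι F := fun a b => if a ∈ S then (g.1 - 1) a b else 0
  let B : Matrix ι ι F := fun a b => if a ∈ S then 0 else (g.1 - 1) a b
  have hA : Supp S T A := by
    intro a b hab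
    by_cases hb : a ∈ S
    · exact ⟨hb, (hg a b (by simpa [A, hb] using hab)).2⟩
    · simp [A, hb] at hab
  have hB : Supp S' T B := by
    intro a b hab
    by_cases hb : a ∈ S
    · simp [B, hb] at hab
    · have := hg a b (by simpa [B, hb] using hab)
      exact ⟨this.1.resolve_left hb, this.2⟩
  refine Set.mem_mul.mpr ⟨_, hA.toSL_mem h, _, hB.toSL_mem h', ?_⟩
  apply Subtype.ext
  have h0 : A * B = 0 := hA.mul_eq_zero hB h'.symm
  have hs : A + B = g.1 - 1 := by
    ext a b
    show A a b + B a b = _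
    by_cases hb : a ∈ S <;> simp [A, B, hb]
  show (1 + A) * (1 + B) = g.1
  simp only [mul_add, add_mul, mul_one, one_mul, h0, add_zero]
  rw [add_assoc, hs]; abel

end Supp

section Move

open Matrix
open scoped Pointwise

variable {N : Type*} {ι : N → Type*} [∀ n, Fintype (ι n)] [∀ n, DecidableEq (ι n)]
  {F : N → Type*} [∀ n, Field (F n)]
  {H : ℕ → Subgroup (∀ n, SpecialLinearGroup (ι n) (F n))}

theorem move_col (hm : Monotone H) (hu : ∀ g, ∃ t, g ∈ H t) {S R T : ∀ n, Finset (ι n)}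
    (hSR : ∀ n, Disjoint (S n) (R n)) (hST : ∀ n, Disjoint (S n) (T n))
    (hRT : ∀ n, Disjoint (R n) (T n)) (hc : ∀ n, (T n).card ≤ (R n).card)
    (h : Bd H (fun n => USet (F n) (S n : Set (ι n)) (R n : Set (ι n)))) :
    Bd H (fun n => USet (F n) (S n : Set (ι n)) (T n : Set (ι n))) := by
  have hSR' := fun n => Finset.disjoint_coe.mpr (hSR n)
  have hST' := fun n => Finset.disjoint_coe.mpr (hST n)
  have hRT' := fun n => Finset.disjoint_coe.mpr (hRT n)
  choose Q Q' hQ hQ' _ hQM using fun n => exists_match (F := F n) (T n) (R n) (hc n)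
  let w : ∀ n, SpecialLinearGroup (ι n) (F n) := fun n => (hQ' n).toSL (hRT' n)
  refine (((h.mul hm (Bd.single hu w)).mul hm h.inv).mul hm (Bd.single hu w).inv).mono ?_
  intro n g hg
  have hP : Supp (S n : Set (ι n)) (R n) ((g.1 - 1) * Q n) := Supp.mul hg (hQ n)
  have e : g = hP.toSL (hSR' n) * w n * (hP.toSL (hSR' n))⁻¹ * (w n)⁻¹ := by
    apply comm_formula (P := (g.1 - 1) * Q n) (Q := Q' n) rfl rfl
    · rw [hQM n _ _ hg]; abel
    · exact (hQ' n).mul_eq_zero hP (hST' n).symm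
    · exact (hQ' n).mul_eq_zero (hQ' n) (hRT' n).symm
  rw [e]
  refine Set.mul_mem_mul (Set.mul_mem_mul (Set.mul_mem_mul (hP.toSL_mem _) rfl) ?_) ?_
  · exact Set.inv_mem_inv.mpr (hP.toSL_mem _)
  · exact Set.inv_mem_inv.mpr rfl

theorem move_row (hm : Monotone H) (hu : ∀ g, ∃ t, g ∈ H t) {S R T : ∀ n, Finset (ι n)}
    (hSR : ∀ n, Disjoint (S n) (R n)) (hST : ∀ n, Disjoint (S n) (T n))
    (hRT : ∀ n, Disjoint (R n) (T n)) (hc : ∀ n, (S n).card ≤ (R n).card)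
    (h : Bd H (fun n => USet (F n) (R n : Set (ι n)) (T n : Set (ι n)))) :
    Bd H (fun n => USet (F n) (S n : Set (ι n)) (T n : Set (ι n))) := by
  have hSR' := fun n => Finset.disjoint_coe.mpr (hSR n)
  have hST' := fun n => Finset.disjoint_coe.mpr (hST n)
  have hRT' := fun n => Finset.disjoint_coe.mpr (hRT n)
  choose Q Q' hQ hQ' hQM _ using fun n => exists_match (F := F n) (S n) (R n) (hc n)
  let w : ∀ n, SpecialLinearGroup (ι n) (F n) := fun n => (hQ n).toSL (hSR' n)
  refine ((((Bd.single hu w).mul hm h).mul hm (Bd.single hu w).inv).mul hm h.inv).mono ?_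
  intro n g hg
  have hP : Supp (R n : Set (ι n)) (T n) (Q' n * (g.1 - 1)) := Supp.mul (hQ' n) hg
  have e : g = w n * hP.toSL (hRT' n) * (w n)⁻¹ * (hP.toSL (hRT' n))⁻¹ := by
    apply comm_formula (P := Q n) (Q := Q' n * (g.1 - 1)) rfl rfl
    · rw [hQM n _ _ hg]; abel
    · exact hP.mul_eq_zero (hQ n) (hST' n).symm
    · exact hP.mul_eq_zero hP (hRT' n).symm
  rw [e]
  refine Set.mul_mem_mul (Set.mul_mem_mul (Set.mul_mem_mul rfl (hP.toSL_mem _)) ?_) ?_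
  · exact Set.inv_mem_inv.mpr rfl
  · exact Set.inv_mem_inv.mpr (hP.toSL_mem _)

theorem all_U (hm : Monotone H) (hu : ∀ g, ∃ t, g ∈ H t) (e : N → ℕ) (m : ℕ)
    (he : ∀ n, 4 * e n ≤ Fintype.card (ι n)) (hM : ∀ n, Fintype.card (ι n) ≤ m * e n)
    (I J : ∀ n, Finset (ι n)) (hI : ∀ n, (I n).card = e n) (hJ : ∀ n, (J n).card = e n)
    (hIJ : ∀ n, Disjoint (I n) (J n))
    (h : Bd H (fun n => USet (F n) (I n : Set (ι n)) (J n : Set (ι n))))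
    (S T : ∀ n, Finset (ι n)) (hST : ∀ n, Disjoint (S n) (T n)) :
    Bd H (fun n => USet (F n) (S n : Set (ι n)) (T n : Set (ι n))) := by
  classical
  have room : ∀ A B C : ∀ n, Finset (ι n), (∀ n, (A n).card ≤ e n) → (∀ n, (B n).card ≤ e n) →
      (∀ n, (C n).card ≤ e n) → ∃ R : ∀ n, Finset (ι n), ∀ n, (R n).card = e n ∧
        Disjoint (A n) (R n) ∧ Disjoint (B n) (R n) ∧ Disjoint (C n) (R n) := by
    intro A B C hA hB hC
    have : ∀ n, ∃ R : Finset (ι n), R.card = e n ∧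
        Disjoint (A n) R ∧ Disjoint (B n) R ∧ Disjoint (C n) R := by
      intro n
      have h1 : e n ≤ ((A n ∪ B n ∪ C n)ᶜ).card := by
        rw [Finset.card_compl]
        have := Finset.card_union_le (A n ∪ B n) (C n)
        have := Finset.card_union_le (A n) (B n)
        have := hA n
        have := hB n
        have := hC n
        have := he n
        omega
      obtain ⟨R, hR, hRc⟩ := Finset.exists_subset_card_eq h1
      refine ⟨R, hRc, ?_, ?_, ?_⟩ <;>
      · rw [Finset.disjoint_left]
        intro a ha haR
        have := hR haR
        simp at this
        tauto
    choose R hR using this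
    exact ⟨R, hR⟩
  have col : ∀ S T1 T : ∀ n, Finset (ι n), (∀ n, (S n).card ≤ e n) → (∀ n, (T1 n).card = e n) →
      (∀ n, (T n).card ≤ e n) → (∀ n, Disjoint (S n) (T1 n)) → (∀ n, Disjoint (S n) (T n)) →
      Bd H (fun n => USet (F n) (S n : Set (ι n)) (T1 n : Set (ι n))) →
      Bd H (fun n => USet (F n) (S n : Set (ι n)) (T n : Set (ι n))) := by
    intro S T1 T hS hT1 hT h1 h2 hB
    obtain ⟨R, hR⟩ := room S T1 T hS (fun n => (hT1 n).le) hT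
    refine move_col hm hu (R := R) (fun n => (hR n).2.1) h2 (fun n => (hR n).2.2.2.symm)
      (fun n => by rw [(hR n).1]; exact hT n) ?_
    exact move_col hm hu h1 (fun n => (hR n).2.1) (fun n => (hR n).2.2.1)
      (fun n => by rw [(hR n).1, hT1]) hB
  have row : ∀ S S1 T : ∀ n, Finset (ι n), (∀ n, (S n).card ≤ e n) → (∀ n, (S1 n).card = e n) →
      (∀ n, (T n).card ≤ e n) → (∀ n, Disjoint (S1 n) (T n)) → (∀ n, Disjoint (S n) (T n)) →
      Bd H (fun n => USet (F n) (S1 n : Set (ι n)) (T n : Set (ι n))) →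
      Bd H (fun n => USet (F n) (S n : Set (ι n)) (T n : Set (ι n))) := by
    intro S S1 T hS hS1 hT h1 h2 hB
    obtain ⟨R, hR⟩ := room S S1 T hS (fun n => (hS1 n).le) hT
    refine move_row hm hu (R := R) (fun n => (hR n).2.1) h2 (fun n => (hR n).2.2.2.symm)
      (fun n => by rw [(hR n).1]; exact hS n) ?_
    exact move_row hm hu (fun n => (hR n).2.2.1.symm) (fun n => (hR n).2.2.2.symm) h1
      (fun n => by rw [(hR n).1, hS1]) hB
  have small : ∀ S T : ∀ n, Finset (ι n), (∀ n, (S n).card ≤ e n) → (∀ n, (T n).card ≤ e n) →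
      (∀ n, Disjoint (S n) (T n)) →
      Bd H (fun n => USet (F n) (S n : Set (ι n)) (T n : Set (ι n))) := by
    intro S T hS hT hd
    obtain ⟨T1, hT1⟩ := room I S S (fun n => (hI n).le) hS hS
    refine col S T1 T hS (fun n => (hT1 n).1) hT (fun n => (hT1 n).2.2.1) hd ?_
    refine row S I T1 hS hI (fun n => (hT1 n).1.le) (fun n => (hT1 n).2.1)
      (fun n => (hT1 n).2.2.1) ?_
    exact col I J T1 (fun n => (hI n).le) hJ (fun n => (hT1 n).1.le) hIJ
      (fun n => (hT1 n).2.1) h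
  have cut : ∀ (k : ℕ) (T : ∀ n, Finset (ι n)), (∀ n, (T n).card ≤ (k + 1) * e n) →
      ∃ T1 T2 : ∀ n, Finset (ι n), ∀ n, T n = T1 n ∪ T2 n ∧ (T1 n).card ≤ k * e n ∧
        (T2 n).card ≤ e n := by
    intro k T hT
    have : ∀ n, ∃ T1 T2 : Finset (ι n), T n = T1 ∪ T2 ∧ T1.card ≤ k * e n ∧ T2.card ≤ e n := by
      intro n
      have := hT n
      rw [add_mul, one_mul] at this
      obtain ⟨X, hX, hXc⟩ := Finset.exists_subset_card_eq (min_le_right (e n) (T n).card)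
      refine ⟨T n \ X, X, (Finset.sdiff_union_of_subset hX).symm, ?_, ?_⟩
      · rw [Finset.card_sdiff_of_subset hX]; omega
      · omega
    choose T1 T2 h using this
    exact ⟨T1, T2, h⟩
  have medium : ∀ (k : ℕ) (S T : ∀ n, Finset (ι n)), (∀ n, (S n).card ≤ e n) →
      (∀ n, (T n).card ≤ k * e n) → (∀ n, Disjoint (S n) (T n)) →
      Bd H (fun n => USet (F n) (S n : Set (ι n)) (T n : Set (ι n))) := by
    intro k
    induction k with
    | zero =>
      intro S T hS hT hd
      exact small S T hS (fun n => (hT n).trans (by simp)) hd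
    | succ k ih =>
      intro S T hS hT hd
      obtain ⟨T1, T2, hh⟩ := cut k T hT
      have hd1 : ∀ n, Disjoint (S n) (T1 n) := fun n =>
        (hd n).mono_right (by rw [(hh n).1]; exact Finset.subset_union_left)
      have hd2 : ∀ n, Disjoint (S n) (T2 n) := fun n =>
        (hd n).mono_right (by rw [(hh n).1]; exact Finset.subset_union_right)
      refine ((ih S T1 hS (fun n => (hh n).2.1) hd1).mul hm
        (small S T2 hS (fun n => (hh n).2.2) hd2)).mono fun n => ?_
      rw [(hh n).1, Finset.coe_union]
      exact USet_split_right (Finset.disjoint_coe.mpr (hd1 n)) (Finset.disjoint_coe.mpr (hd2 n))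
  have large : ∀ (k : ℕ) (S T : ∀ n, Finset (ι n)), (∀ n, (S n).card ≤ k * e n) →
      (∀ n, Disjoint (S n) (T n)) →
      Bd H (fun n => USet (F n) (S n : Set (ι n)) (T n : Set (ι n))) := by
    intro k
    induction k with
    | zero =>
      intro S T hS hd
      exact medium m S T (fun n => (hS n).trans (by simp))
        (fun n => (Finset.card_le_univ _).trans (hM n)) hd
    | succ k ih =>
      intro S T hS hd
      obtain ⟨T1, T2, hh⟩ := cut k S hS
      have hd1 : ∀ n, Disjoint (T1 n) (T n) := fun n =>
        (hd n).mono_left (by rw [(hh n).1]; exact Finset.subset_union_left)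
      have hd2 : ∀ n, Disjoint (T2 n) (T n) := fun n =>
        (hd n).mono_left (by rw [(hh n).1]; exact Finset.subset_union_right)
      refine ((ih T1 T (fun n => (hh n).2.1) hd1).mul hm
        (medium m T2 T (fun n => (hh n).2.2)
          (fun n => (Finset.card_le_univ _).trans (hM n)) hd2)).mono fun n => ?_
      rw [(hh n).1, Finset.coe_union]
      exact USet_split_left (Finset.disjoint_coe.mpr (hd1 n)) (Finset.disjoint_coe.mpr (hd2 n))
  exact large m S T (fun n => (Finset.card_le_univ _).trans (hM n)) hST

end Move

set_option linter.unusedSectionVars false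
set_option linter.unusedSimpArgs false

section Perm

open Matrix

variable {ι κ μ : Type*} [Fintype ι] [DecidableEq ι] [Fintype κ] [DecidableEq κ]
  [Fintype μ] [DecidableEq μ] {F : Type*} [Field F]

/-- The 0/1 matrix of a map. -/
def pm (F : Type*) [Field F] {ι κ : Type*} [DecidableEq ι] (α : κ → ι) : Matrix ι κ F :=
  Matrix.of fun i k => if i = α k then 1 else 0

theorem pm_apply (α : κ → ι) (i : ι) (k : κ) : pm F α i k = if i = α k then 1 else 0 := rfl

theorem pm_t_mul {lam : Type*} (α : κ → ι) (M : Matrix ι lam F) (k : κ) (l : lam) :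
    ((pm F α)ᵀ * M) k l = M (α k) l := by
  simp [Matrix.mul_apply, pm_apply]

theorem mul_pm {lam : Type*} (α : κ → ι) (M : Matrix lam ι F) (k : κ) (l : lam) :
    (M * pm F α) l k = M l (α k) := by
  simp [Matrix.mul_apply, pm_apply]

theorem pm_t_pm {α : κ → ι} (h : Function.Injective α) : (pm F α)ᵀ * pm F α = 1 := by
  ext k l
  rw [pm_t_mul, pm_apply, Matrix.one_apply]
  simp [h.eq_iff]

theorem pm_t_pm_disj {α : κ → ι} {β : μ → ι} (h : Disjoint (Set.range α) (Set.range β)) :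
    (pm F α)ᵀ * pm F β = 0 := by
  ext k l
  rw [pm_t_mul, pm_apply, if_neg]
  · rfl
  · intro hh
    exact Set.disjoint_left.mp h ⟨k, rfl⟩ ⟨l, hh.symm⟩

theorem pm_comp (α : κ → ι) (γ : μ → κ) : pm F (α ∘ γ) = pm F α * pm F γ := by
  ext i m
  rw [mul_pm]
  rfl

theorem pm_sub (α : κ → ι) (u : Matrix ι ι F) : (pm F α)ᵀ * u * pm F α = u.submatrix α α := by
  ext i j
  rw [mul_pm, pm_t_mul]; rfl

theorem supp_pm (α : κ → ι) (β : μ → ι) (X : Matrix κ μ F) :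
    Supp (Set.range α) (Set.range β) (pm F α * X * (pm F β)ᵀ) := by
  intro a b hab
  constructor
  · rw [Matrix.mul_assoc, Matrix.mul_apply] at hab
    obtain ⟨c, _, hc⟩ := Finset.exists_ne_zero_of_sum_ne_zero hab
    have := left_ne_zero_of_mul hc
    rw [pm_apply] at this
    by_contra h0
    apply this
    rw [if_neg]
    rintro rfl
    exact h0 ⟨c, rfl⟩
  · rw [Matrix.mul_apply] at hab
    obtain ⟨c, _, hc⟩ := Finset.exists_ne_zero_of_sum_ne_zero hab
    have := right_ne_zero_of_mul hc
    rw [Matrix.transpose_apply, pm_apply] at this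
    by_contra h0
    apply this
    rw [if_neg]
    rintro rfl
    exact h0 ⟨c, rfl⟩

/-- Whitehead identity -/
theorem whitehead (a b : Matrix ι κ F) (a' b' : Matrix κ ι F) (A A' : Matrix κ κ F)
    (haa : a' * a = 1) (hbb : b' * b = 1) (hab : a' * b = 0) (hba : b' * a = 0)
    (h1 : A * A' = 1) (h2 : A' * A = 1) :
    (1 + a * A * b') * (1 + b * (-A') * a') * (1 + a * A * b') *
      ((1 + a * (-1 : Matrix κ κ F) * b') * (1 + b * (1 : Matrix κ κ F) * a') *
        (1 + a * (-1 : Matrix κ κ F) * b'))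
      = 1 + a * (A - 1) * a' + b * (A' - 1) * b' := by
  have raa : ∀ Z : Matrix κ ι F, a' * (a * Z) = Z := fun Z => by
    rw [← Matrix.mul_assoc, haa, Matrix.one_mul]
  have rbb : ∀ Z : Matrix κ ι F, b' * (b * Z) = Z := fun Z => by
    rw [← Matrix.mul_assoc, hbb, Matrix.one_mul]
  have rab : ∀ Z : Matrix κ ι F, a' * (b * Z) = 0 := fun Z => by
    rw [← Matrix.mul_assoc, hab, Matrix.zero_mul]
  have rba : ∀ Z : Matrix κ ι F, b' * (a * Z) = 0 := fun Z => by
    rw [← Matrix.mul_assoc, hba, Matrix.zero_mul]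
  have r1 : ∀ Z : Matrix κ ι F, A * (A' * Z) = Z := fun Z => by
    rw [← Matrix.mul_assoc, h1, Matrix.one_mul]
  have r2 : ∀ Z : Matrix κ ι F, A' * (A * Z) = Z := fun Z => by
    rw [← Matrix.mul_assoc, h2, Matrix.one_mul]
  simp only [Matrix.mul_add, Matrix.add_mul, Matrix.mul_sub, Matrix.sub_mul, Matrix.mul_one,
    Matrix.one_mul, Matrix.mul_assoc, Matrix.mul_neg, Matrix.neg_mul, raa, rbb, rab, rba, r1, r2,
    Matrix.mul_zero, neg_zero, add_zero, zero_add, neg_neg]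
  abel

/-- corner embedding -/
def crn (α : κ → ι) (X : Matrix κ κ F) : Matrix ι ι F := 1 + pm F α * (X - 1) * (pm F α)ᵀ

theorem crn_mul {α : κ → ι} (h : Function.Injective α) (X Y : Matrix κ κ F) :
    crn α (X * Y) = crn α X * crn α Y := by
  have raa : ∀ Z : Matrix κ ι F, (pm F α)ᵀ * (pm F α * Z) = Z := fun Z => by
    rw [← Matrix.mul_assoc, pm_t_pm h, Matrix.one_mul]
  simp only [crn, Matrix.mul_add, Matrix.add_mul, Matrix.mul_sub, Matrix.sub_mul, Matrix.mul_one,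
    Matrix.one_mul, Matrix.mul_assoc, raa]
  abel

theorem crn_comp (α : κ → ι) (γ : μ → κ) (X : Matrix μ μ F) :
    crn (α ∘ γ) X = crn α (crn γ X) := by
  simp only [crn, pm_comp, Matrix.transpose_mul, Matrix.mul_assoc, add_sub_cancel_left]

theorem crn_mul_disj {α : κ → ι} {β : μ → ι} (h : Disjoint (Set.range α) (Set.range β))
    (X : Matrix κ κ F) (Y : Matrix μ μ F) : crn α X * crn β Y =
      1 + pm F α * (X - 1) * (pm F α)ᵀ + pm F β * (Y - 1) * (pm F β)ᵀ := by
  have r : ∀ Z : Matrix μ ι F, (pm F α)ᵀ * (pm F β * Z) = 0 := fun Z => by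
    rw [← Matrix.mul_assoc, pm_t_pm_disj h, Matrix.zero_mul]
  simp only [crn, Matrix.mul_add, Matrix.add_mul, Matrix.mul_one,
    Matrix.one_mul, Matrix.mul_assoc, r, Matrix.mul_zero, add_zero]

theorem crn_comm {α : κ → ι} {β : μ → ι} (h : Disjoint (Set.range α) (Set.range β))
    (X : Matrix κ κ F) (Y : Matrix μ μ F) : crn α X * crn β Y = crn β Y * crn α X := by
  rw [crn_mul_disj h, crn_mul_disj h.symm]; abel

theorem crn_one (α : κ → ι) : crn α (1 : Matrix κ κ F) = 1 := by simp [crn]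

theorem peel {κ₁ κ₂ : Type*} [Fintype κ₁] [DecidableEq κ₁] [Fintype κ₂] [DecidableEq κ₂]
    (a₁ : Matrix ι κ₁ F) (a₂ : Matrix ι κ₂ F) (b₁ : Matrix κ₁ ι F) (b₂ : Matrix κ₂ ι F)
    (h11 : b₁ * a₁ = 1) (h22 : b₂ * a₂ = 1) (h12 : b₁ * a₂ = 0) (h21 : b₂ * a₁ = 0)
    (hs : a₁ * b₁ + a₂ * b₂ = 1) (u : Matrix ι ι F) (hu : b₂ * u * a₁ = 0) :
    u = (1 + a₂ * (b₂ * u * a₂ - 1) * b₂) * (1 + a₁ * (b₁ * u * a₂) * b₂) *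
      (1 + a₁ * (b₁ * u * a₁ - 1) * b₁) := by
  have e2 : 1 + a₂ * (b₂ * u * a₂ - 1) * b₂ = a₁ * b₁ + a₂ * (b₂ * u * a₂) * b₂ := by
    rw [← hs, Matrix.mul_sub, Matrix.sub_mul, Matrix.mul_one]; abel
  have e1 : 1 + a₁ * (b₁ * u * a₁ - 1) * b₁ = a₁ * (b₁ * u * a₁) * b₁ + a₂ * b₂ := by
    rw [← hs, Matrix.mul_sub, Matrix.sub_mul, Matrix.mul_one]; abel
  have r11 : ∀ Z : Matrix κ₁ ι F, b₁ * (a₁ * Z) = Z := fun Z => by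
    rw [← Matrix.mul_assoc, h11, Matrix.one_mul]
  have r22 : ∀ Z : Matrix κ₂ ι F, b₂ * (a₂ * Z) = Z := fun Z => by
    rw [← Matrix.mul_assoc, h22, Matrix.one_mul]
  have r12 : ∀ Z : Matrix κ₂ ι F, b₁ * (a₂ * Z) = 0 := fun Z => by
    rw [← Matrix.mul_assoc, h12, Matrix.zero_mul]
  have r21 : ∀ Z : Matrix κ₁ ι F, b₂ * (a₁ * Z) = 0 := fun Z => by
    rw [← Matrix.mul_assoc, h21, Matrix.zero_mul]
  have hu' : ∀ Z : Matrix κ₁ ι F, b₂ * (u * (a₁ * Z)) = 0 := fun Z => by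
    rw [← Matrix.mul_assoc, ← Matrix.mul_assoc, hu, Matrix.zero_mul]
  have e0 : u = (a₁ * b₁ + a₂ * b₂) * u * (a₁ * b₁ + a₂ * b₂) := by
    rw [hs, one_mul, mul_one]
  rw [e1, e2]
  conv_lhs => rw [e0]
  simp only [Matrix.mul_add, Matrix.add_mul, Matrix.mul_one,
    Matrix.one_mul, Matrix.mul_assoc, r11, r22, r12, r21, hu', Matrix.mul_zero, add_zero, zero_add]
  abel

end Perm

section Corner

open Matrix

variable {F : Type*} [Field F]

theorem pm_conj_apply {ι κ : Type*} [Fintype ι] [DecidableEq ι] [Fintype κ] [DecidableEq κ]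
    {α : κ → ι} (h : Function.Injective α) (X : Matrix κ κ F) (i j : κ) :
    (pm F α * X * (pm F α)ᵀ) (α i) (α j) = X i j := by
  have h1 : (pm F α)ᵀ * (pm F α * X * (pm F α)ᵀ) * pm F α = X := by
    rw [Matrix.mul_assoc, Matrix.mul_assoc, pm_t_pm h, Matrix.mul_one, ← Matrix.mul_assoc,
      pm_t_pm h, Matrix.one_mul]
  have := congrFun (congrFun h1 i) j
  rwa [mul_pm, pm_t_mul] at this

theorem upper_mul_apply_zero {k : ℕ} {u : Matrix (Fin (k + 1)) (Fin (k + 1)) F}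
    (hu : ∀ i j, j < i → u i j = 0) (w : Fin (k + 1) → F) (i : Fin (k + 1))
    (hw : ∀ l, i ≤ l → w l = 0) : (u *ᵥ w) i = 0 := by
  rw [Matrix.mulVec, dotProduct]
  refine Finset.sum_eq_zero fun l _ => ?_
  rcases lt_or_ge l i with h | h
  · rw [hu i l h, zero_mul]
  · rw [hw l h, mul_zero]

theorem upper_mul_apply_diag {k : ℕ} {u : Matrix (Fin (k + 1)) (Fin (k + 1)) F}
    (hu : ∀ i j, j < i → u i j = 0) (w : Fin (k + 1) → F) (i : Fin (k + 1))
    (hw : ∀ l, i < l → w l = 0) : (u *ᵥ w) i = u i i * w i := by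
  rw [Matrix.mulVec, dotProduct, Finset.sum_eq_single i]
  · intro l _ hl
    rcases lt_or_gt_of_ne hl with h | h
    · rw [hu i l h, zero_mul]
    · rw [hw l h, mul_zero]
  · simp

/-- the auxiliary recursive columns -/
def colv {k : ℕ} (u : Matrix (Fin (k + 1)) (Fin (k + 1)) F) : ℕ → Fin (k + 1) → F
  | 0 => u *ᵥ Fin.cons 1 (fun _ => 0)
  | j + 1 => u *ᵥ Fin.cons 0 (fun i => colv u j i.castSucc)

theorem colv_upper {k : ℕ} {u : Matrix (Fin (k + 1)) (Fin (k + 1)) F}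
    (hu : ∀ i j, j < i → u i j = 0) (j : ℕ) : ∀ i : Fin (k + 1), j < i.val → colv u j i = 0 := by
  induction j with
  | zero =>
    intro i hi
    refine upper_mul_apply_zero hu _ i fun l hl => ?_
    obtain ⟨l', rfl⟩ : ∃ l', l = Fin.succ l' :=
      Fin.exists_succ_eq.mpr (by rintro rfl; simp at hl; subst hl; simp at hi) |>.imp fun _ h => h.symm
    rfl
  | succ j ih =>
    intro i hi
    refine upper_mul_apply_zero hu _ i fun l hl => ?_
    rcases Fin.eq_zero_or_eq_succ l with rfl | ⟨l', rfl⟩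
    · rfl
    · rw [Fin.cons_succ]
      apply ih
      have : i.val ≤ l'.val + 1 := by simpa [Fin.le_def] using hl
      simp; omega

theorem colv_diag {k : ℕ} {u : Matrix (Fin (k + 1)) (Fin (k + 1)) F}
    (hu : ∀ i j, j < i → u i j = 0) (j : ℕ) : ∀ i : Fin (k + 1), j = i.val →
      colv u j i = ∏ l : Fin (k + 1), if l ≤ i then u l l else 1 := by
  induction j with
  | zero =>
    intro i hi
    obtain rfl : i = 0 := Fin.ext hi.symm
    rw [colv, upper_mul_apply_diag hu]
    · rw [Finset.prod_eq_single 0]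
      · simp
      · intro b _ hb
        simp [hb]
      · simp
    · intro l hl
      rcases Fin.eq_zero_or_eq_succ l with rfl | ⟨l', rfl⟩
      · simp at hl
      · rfl
  | succ j ih =>
    intro i hi
    rcases Fin.eq_zero_or_eq_succ i with rfl | ⟨i', rfl⟩
    · simp at hi
    rw [colv, upper_mul_apply_diag hu]
    · rw [Fin.cons_succ, ih _ (by simpa using hi)]
      rw [← Finset.mul_prod_erase _ _ (Finset.mem_univ i'.succ)]
      rw [← Finset.mul_prod_erase Finset.univ _ (Finset.mem_univ i'.succ)]
      rw [if_neg (by simp [Fin.le_def]), if_pos le_rfl, one_mul]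
      congr 1
      refine Finset.prod_congr rfl fun l hl => ?_
      have hne : l.val ≠ i'.val + 1 := fun h => (Finset.mem_erase.mp hl).1 (Fin.ext (by simpa using h))
      have : (l ≤ i'.castSucc) ↔ (l ≤ i'.succ) := by
        simp only [Fin.le_def, Fin.val_castSucc, Fin.val_succ]; omega
      simp only [this]
    · intro l hl
      rcases Fin.eq_zero_or_eq_succ l with rfl | ⟨l', rfl⟩
      · rfl
      · rw [Fin.cons_succ]
        apply colv_upper hu
        have : i'.val < l'.val := Fin.succ_lt_succ_iff.mp hl
        rw [Fin.val_succ] at hi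
        rw [Fin.val_castSucc]; omega

theorem corner_decomp {k : ℕ} (u : Matrix (Fin (k + 1)) (Fin (k + 1)) F)
    (hu : ∀ i j, j < i → u i j = 0) (hdet : ∏ i, u i i = 1) :
    ∃ (g g' : Matrix (Fin k) (Fin k) F) (τ : Matrix (Fin (k + 1)) (Fin (k + 1)) F),
      g * g' = 1 ∧ g' * g = 1 ∧ Supp (Set.range Fin.castSucc) {Fin.last k} (τ - 1) ∧
      u = crn Fin.castSucc g * τ * crn Fin.succ g' := by
  let g : Matrix (Fin k) (Fin k) F := Matrix.of fun i j => colv u j i.castSucc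
  have hgup : g.BlockTriangular id := fun i j hij => colv_upper hu j _ (by simpa using hij)
  have hne : ∀ i, u i i ≠ 0 := fun i h0 => by
    have := Finset.prod_eq_zero (f := fun i => u i i) (Finset.mem_univ i) h0
    rw [hdet] at this
    exact one_ne_zero this
  have hgdet : IsUnit g.det := by
    rw [Matrix.det_of_isUpperTriangular hgup, isUnit_iff_ne_zero, Finset.prod_ne_zero_iff]
    intro i _
    show colv u i i.castSucc ≠ 0
    rw [colv_diag hu _ _ (by simp), Finset.prod_ne_zero_iff]
    intro l _
    split_ifs
    · exact hne l
    · exact one_ne_zero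
  have h1 : g * g⁻¹ = 1 := Matrix.mul_nonsing_inv _ hgdet
  have h2 : g⁻¹ * g = 1 := Matrix.nonsing_inv_mul _ hgdet
  have is : Function.Injective (Fin.castSucc : Fin k → Fin (k + 1)) := Fin.castSucc_injective k
  have it : Function.Injective (Fin.succ : Fin k → Fin (k + 1)) := Fin.succ_injective k
  let V := u * crn Fin.succ g
  have hV : ∀ i j, V i j = colv u j.val i := by
    intro i j
    have hcol : ∀ l, crn Fin.succ g l j = (Fin.cases (Fin.cons 1 (fun _ => 0) : Fin (k+1) → F)
        (fun j' => Fin.cons 0 (fun i => g i j')) j : Fin (k+1) → F) l := by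
      intro l
      rw [crn, Matrix.add_apply]
      rcases Fin.eq_zero_or_eq_succ j with rfl | ⟨j', rfl⟩
      · have : (pm F (Fin.succ : Fin k → Fin (k + 1)) * (g - 1) *
            (pm F (Fin.succ : Fin k → Fin (k + 1)))ᵀ : Matrix (Fin (k + 1)) (Fin (k + 1)) F) l 0 = 0 := by
          by_contra h0
          obtain ⟨-, x, hx⟩ := supp_pm _ _ _ _ _ h0
          exact Fin.succ_ne_zero x hx
        rw [this]
        rcases Fin.eq_zero_or_eq_succ l with rfl | ⟨l', rfl⟩
        · simp
        · simp
      · rcases Fin.eq_zero_or_eq_succ l with rfl | ⟨l', rfl⟩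
        · have : (pm F (Fin.succ : Fin k → Fin (k + 1)) * (g - 1) *
            (pm F (Fin.succ : Fin k → Fin (k + 1)))ᵀ : Matrix (Fin (k + 1)) (Fin (k + 1)) F) 0 j'.succ = 0 := by
            by_contra h0
            obtain ⟨⟨x, hx⟩, -⟩ := supp_pm _ _ _ _ _ h0
            exact Fin.succ_ne_zero x hx
          rw [this]
          simp [Matrix.one_apply, (Fin.succ_ne_zero j').symm]
        · rw [pm_conj_apply it]
          simp [Matrix.one_apply]
    show (u * crn Fin.succ g) i j = _
    rw [Matrix.mul_apply]
    simp only [hcol]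
    rcases Fin.eq_zero_or_eq_succ j with rfl | ⟨j', rfl⟩
    · rfl
    · rfl
  let P : Matrix (Fin (k + 1)) (Fin k) F := pm F Fin.castSucc
  have hPa : ∀ i j, P i j = if i = Fin.castSucc j then 1 else 0 := fun _ _ => rfl
  have hVs : V * P = P * g := by
    ext i j
    rw [mul_pm, hV, Matrix.mul_apply]
    rcases Fin.eq_castSucc_or_eq_last i with ⟨i', rfl⟩ | rfl
    · rw [Finset.sum_eq_single i']
      · simp [hPa, g]
      · intro b _ hb
        rw [hPa, if_neg (fun h => hb (is h).symm), zero_mul]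
      · simp
    · rw [colv_upper hu _ _ (by simp), Finset.sum_eq_zero]
      intro x _
      rw [hPa, if_neg (Fin.castSucc_lt_last x).ne', zero_mul]
  have hVl : ∀ j, V (Fin.last k) j = (1 : Matrix _ _ F) (Fin.last k) j := by
    intro j
    rw [hV]
    by_cases hj : j = Fin.last k
    · subst hj
      rw [colv_diag hu _ _ rfl, Matrix.one_apply_eq, ← hdet]
      exact Finset.prod_congr rfl fun l _ => if_pos (Fin.le_last l)
    · rw [Matrix.one_apply_ne (Ne.symm hj)]
      exact colv_upper hu _ _ (Fin.lt_last_iff_ne_last.mpr hj)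
  refine ⟨g, g⁻¹, crn Fin.castSucc g⁻¹ * V, h1, h2, ?_, ?_⟩
  · have hc : (crn Fin.castSucc g⁻¹ * V) * P = P := by
      have hP : Pᵀ * P = 1 := pm_t_pm is
      have hcr : crn Fin.castSucc g⁻¹ = 1 + P * (g⁻¹ - 1) * Pᵀ := rfl
      rw [Matrix.mul_assoc, hVs, hcr, Matrix.add_mul, Matrix.one_mul, Matrix.mul_assoc _ _ (_ * g),
        ← Matrix.mul_assoc _ _ g, hP, Matrix.one_mul, Matrix.mul_assoc, ← Matrix.mul_add,
        Matrix.sub_mul, h2, Matrix.one_mul, add_sub_cancel, Matrix.mul_one]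
    have hr : ∀ j, (crn Fin.castSucc g⁻¹ * V) (Fin.last k) j = (1 : Matrix _ _ F) (Fin.last k) j := by
      intro j
      rw [crn, Matrix.add_mul, Matrix.one_mul, Matrix.add_apply, hVl, Matrix.mul_assoc,
        Matrix.mul_assoc, Matrix.mul_apply, Finset.sum_eq_zero, add_zero]
      intro x _
      rw [pm_apply, if_neg (Fin.castSucc_lt_last x).ne', zero_mul]
    intro a b hab
    constructor
    · rcases Fin.eq_castSucc_or_eq_last a with ⟨a', rfl⟩ | rfl
      · exact ⟨a', rfl⟩
      · exact absurd (by rw [Matrix.sub_apply, hr, sub_self]) hab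
    · rcases Fin.eq_castSucc_or_eq_last b with ⟨b', rfl⟩ | rfl
      · refine absurd ?_ hab
        have := congrFun (congrFun hc a) b'
        rw [mul_pm, hPa] at this
        rw [Matrix.sub_apply, this, Matrix.one_apply, sub_self]
      · rfl
  · show u = crn Fin.castSucc g * (crn Fin.castSucc g⁻¹ * (u * crn Fin.succ g)) * crn Fin.succ g⁻¹
    rw [← Matrix.mul_assoc (crn Fin.castSucc g), ← crn_mul is, h1, crn_one, Matrix.one_mul,
      Matrix.mul_assoc, ← crn_mul it, h1, crn_one, Matrix.mul_one]

end Corner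

section CornerBd

open Matrix
open scoped Pointwise

variable {N : Type*} {ι : N → Type*} [∀ n, Fintype (ι n)] [∀ n, DecidableEq (ι n)]
  {F : N → Type*} [∀ n, Field (F n)]
  {H : ℕ → Subgroup (∀ n, SpecialLinearGroup (ι n) (F n))}

/-- Whitehead diagonal elements -/
def WD (F : Type*) [Field F] {ι κ : Type*} [Fintype ι] [DecidableEq ι] [Fintype κ] [DecidableEq κ]
    (α β : κ → ι) : Set (SpecialLinearGroup ι F) :=
  {g | ∃ A A' : Matrix κ κ F, A * A' = 1 ∧ A' * A = 1 ∧ g.1 = crn α A * crn β A'}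

theorem WD_exists {F : Type*} [Field F] {ι κ : Type*} [Fintype ι] [DecidableEq ι] [Fintype κ]
    [DecidableEq κ] {α β : κ → ι} (hα : Function.Injective α) (hβ : Function.Injective β)
    (hd : Disjoint (Set.range α) (Set.range β)) : ∃ w : SpecialLinearGroup ι F,
    ∀ A A' : Matrix κ κ F, A * A' = 1 → A' * A = 1 →
    ∃ g ∈ USet F (Set.range α) (Set.range β) * USet F (Set.range β) (Set.range α) *
      USet F (Set.range α) (Set.range β) * {w}, g.1 = crn α A * crn β A' := by
  let x : Matrix κ κ F → SpecialLinearGroup ι F := fun X => (supp_pm α β X).toSL hd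
  let y : Matrix κ κ F → SpecialLinearGroup ι F := fun X => (supp_pm β α X).toSL hd.symm
  refine ⟨x (-1) * y 1 * x (-1), fun A A' h1 h2 => ⟨x A * y (-A') * x A * (x (-1) * y 1 * x (-1)),
    ?_, ?_⟩⟩
  · exact Set.mul_mem_mul (Set.mul_mem_mul (Set.mul_mem_mul (Supp.toSL_mem _ _)
      (Supp.toSL_mem _ _)) (Supp.toSL_mem _ _)) rfl
  · rw [crn_mul_disj hd]
    exact whitehead (pm F α) (pm F β) (pm F α)ᵀ (pm F β)ᵀ A A' (pm_t_pm hα) (pm_t_pm hβ)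
      (pm_t_pm_disj hd) (pm_t_pm_disj hd.symm) h1 h2

theorem WD_mem {F : Type*} [Field F] {ι κ : Type*} [Fintype ι] [DecidableEq ι] [Fintype κ]
    [DecidableEq κ] {α β : κ → ι} (hα : Function.Injective α) (hβ : Function.Injective β)
    (hd : Disjoint (Set.range α) (Set.range β)) (A A' : Matrix κ κ F) (h1 : A * A' = 1)
    (h2 : A' * A = 1) : ∃ g ∈ WD F α β, g.1 = crn α A * crn β A' := by
  obtain ⟨w, hw⟩ := WD_exists (F := F) hα hβ hd
  obtain ⟨g, -, hg⟩ := hw A A' h1 h2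
  exact ⟨g, ⟨A, A', h1, h2, hg⟩, hg⟩

/-- all the block-unipotent boxes are bounded. -/
def AllU (H : ℕ → Subgroup (∀ n, SpecialLinearGroup (ι n) (F n))) : Prop :=
  ∀ S T : ∀ n, Set (ι n), (∀ n, Disjoint (S n) (T n)) → Bd H (fun n => USet (F n) (S n) (T n))

theorem Bd_WD (hm : Monotone H) (hu : ∀ g, ∃ t, g ∈ H t) (hall : AllU H)
    {κ : N → Type*} [∀ n, Fintype (κ n)] [∀ n, DecidableEq (κ n)] {α β : ∀ n, κ n → ι n}
    (hα : ∀ n, Function.Injective (α n)) (hβ : ∀ n, Function.Injective (β n))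
    (hd : ∀ n, Disjoint (Set.range (α n)) (Set.range (β n))) :
    Bd H (fun n => WD (F n) (α n) (β n)) := by
  choose w hw using fun n => WD_exists (F := F n) (hα n) (hβ n) (hd n)
  refine (((((hall _ _ hd).mul hm (hall _ _ fun n => (hd n).symm)).mul hm (hall _ _ hd))).mul hm
    (Bd.single hu w)).mono fun n g hg => ?_
  obtain ⟨A, A', h1, h2, h⟩ := hg
  obtain ⟨g', hg', h'⟩ := hw n A A' h1 h2
  have : g = g' := Subtype.ext (h.trans h'.symm)
  rwa [this]

/-- upper triangular determinant one matrices in a corner -/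
def CU (F : Type*) [Field F] {ι : Type*} [Fintype ι] [DecidableEq ι] {k : ℕ}
    (α : Fin k → ι) : Set (SpecialLinearGroup ι F) :=
  {g | ∃ u : Matrix (Fin k) (Fin k) F, (∀ i j, j < i → u i j = 0) ∧ ∏ i, u i i = 1 ∧
    g.1 = crn α u}

theorem CU_mem {F : Type*} [Field F] {ι : Type*} [Fintype ι] [DecidableEq ι] {k : ℕ}
    {α : Fin (k + 1) → ι} {β : Fin k → ι} (hα : Function.Injective α) (hβ : Function.Injective β)
    (hd : Disjoint (Set.range α) (Set.range β))
    (u : Matrix (Fin (k + 1)) (Fin (k + 1)) F) (hu : ∀ i j, j < i → u i j = 0)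
    (hdet : ∏ i, u i i = 1) :
    ∃ g ∈ WD F (α ∘ Fin.castSucc) β * USet F (Set.range (α ∘ Fin.castSucc)) {α (Fin.last k)} *
      WD F β (α ∘ Fin.succ), g.1 = crn α u := by
  obtain ⟨g, g', τ, h1, h2, hτ, e⟩ := corner_decomp u hu hdet
  have is : Function.Injective (Fin.castSucc : Fin k → Fin (k + 1)) := Fin.castSucc_injective k
  have it : Function.Injective (Fin.succ : Fin k → Fin (k + 1)) := Fin.succ_injective k
  obtain ⟨W1, hW1, e1⟩ := WD_mem (hα.comp is) hβ (hd.mono_left (Set.range_comp_subset_range _ _))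
    g g' h1 h2
  obtain ⟨W2, hW2, e2⟩ := WD_mem hβ (hα.comp it)
    (hd.mono_left (Set.range_comp_subset_range _ _)).symm g g' h1 h2
  have hs : Supp (Set.range (α ∘ Fin.castSucc)) {α (Fin.last k)}
      (pm F α * (τ - 1) * (pm F α)ᵀ) := by
    intro a b hab
    obtain ⟨⟨a, rfl⟩, ⟨b, rfl⟩⟩ := supp_pm _ _ _ _ _ hab
    rw [pm_conj_apply hα] at hab
    obtain ⟨⟨c, rfl⟩, hb⟩ := hτ _ _ hab
    exact ⟨⟨c, rfl⟩, by rw [Set.mem_singleton_iff] at hb ⊢; rw [hb]⟩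
  have hds : Disjoint (Set.range (α ∘ Fin.castSucc)) {α (Fin.last k)} := by
    rw [Set.disjoint_singleton_right]
    rintro ⟨c, hc⟩
    exact (Fin.castSucc_lt_last c).ne (hα hc)
  refine ⟨W1 * hs.toSL hds * W2, Set.mul_mem_mul (Set.mul_mem_mul hW1 (hs.toSL_mem hds)) hW2, ?_⟩
  show W1.1 * crn α τ * W2.1 = crn α u
  rw [e1, e2, e, crn_mul hα, crn_mul hα, crn_comp, crn_comp]
  calc _ = crn α (crn Fin.castSucc g) * (crn β g' * crn α τ) * (crn β g * crn α (crn Fin.succ g')) := by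
        simp only [Matrix.mul_assoc]
    _ = crn α (crn Fin.castSucc g) * crn α τ * (crn β g' * crn β g) * crn α (crn Fin.succ g') := by
        rw [crn_comm hd.symm]; simp only [Matrix.mul_assoc]
    _ = _ := by rw [← crn_mul hβ, h2, crn_one, Matrix.mul_one]

theorem Bd_CU (hm : Monotone H) (hu : ∀ g, ∃ t, g ∈ H t) (hall : AllU H)
    {k : N → ℕ} {α : ∀ n, Fin (k n + 1) → ι n} {β : ∀ n, Fin (k n) → ι n}
    (hα : ∀ n, Function.Injective (α n)) (hβ : ∀ n, Function.Injective (β n))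
    (hd : ∀ n, Disjoint (Set.range (α n)) (Set.range (β n))) :
    Bd H (fun n => CU (F n) (α n)) := by
  have is : ∀ k, Function.Injective (Fin.castSucc : Fin k → Fin (k + 1)) := Fin.castSucc_injective
  have it : ∀ k, Function.Injective (Fin.succ : Fin k → Fin (k + 1)) := Fin.succ_injective
  have b1 := Bd_WD hm hu hall (fun n => (hα n).comp (is (k n))) hβ
    (fun n => (hd n).mono_left (Set.range_comp_subset_range _ _))
  have b2 := Bd_WD hm hu hall hβ (fun n => (hα n).comp (it (k n)))
    (fun n => ((hd n).mono_left (Set.range_comp_subset_range _ _)).symm)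
  have b3 := hall (fun n => Set.range (α n ∘ Fin.castSucc)) (fun n => {α n (Fin.last (k n))})
    (fun n => by
      rw [Set.disjoint_singleton_right]
      rintro ⟨c, hc⟩
      exact (Fin.castSucc_lt_last c).ne (hα n hc))
  refine ((b1.mul hm b3).mul hm b2).mono fun n g hg => ?_
  obtain ⟨u, h1, h2, h⟩ := hg
  obtain ⟨g', hg', h'⟩ := CU_mem (hα n) (hβ n) (hd n) u h1 h2
  have : g = g' := Subtype.ext (h.trans h'.symm)
  rwa [this]

end CornerBd

section UpperBd

open Matrix
open scoped Pointwise

theorem crn_single {F : Type*} [Field F] {ι : Type*} [Fintype ι] [DecidableEq ι] (z : ι) (a : F) :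
    crn (fun _ : Fin 1 => z) (Matrix.of fun _ _ => a) =
      Matrix.diagonal (fun i => if i = z then a else 1) := by
  have inj : Function.Injective (fun _ : Fin 1 => z) := fun a b _ => Subsingleton.elim a b
  ext i j
  rw [crn, Matrix.add_apply]
  by_cases h : i = z ∧ j = z
  · obtain ⟨rfl, rfl⟩ := h
    have := pm_conj_apply (F := F) inj ((Matrix.of fun _ _ => a) - 1) 0 0
    rw [this]
    simp
  · have : (pm F (fun _ : Fin 1 => z) * ((Matrix.of fun _ _ => a : Matrix (Fin 1) (Fin 1) F) - 1) *
        (pm F (fun _ : Fin 1 => z))ᵀ : Matrix ι ι F) i j = 0 := by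
      by_contra h0
      obtain ⟨⟨_, h1⟩, ⟨_, h2⟩⟩ := supp_pm _ _ _ _ _ h0
      exact h ⟨h1.symm, h2.symm⟩
    rw [this, add_zero, Matrix.diagonal_apply, Matrix.one_apply]
    by_cases hij : i = j
    · subst hij
      have : i ≠ z := fun h' => h ⟨h', h'⟩
      simp [this]
    · simp [hij]

variable {N : Type*} {ι : N → Type*} [∀ n, Fintype (ι n)] [∀ n, DecidableEq (ι n)]
  {F : N → Type*} [∀ n, Field (F n)]
  {H : ℕ → Subgroup (∀ n, SpecialLinearGroup (ι n) (F n))}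

theorem upper_Bd (hm : Monotone H) (hu : ∀ g, ∃ t, g ∈ H t) (hall : AllU H)
    {k₁ k₂ : N → ℕ} (h12 : ∀ n, k₁ n ≤ k₂ n + 1) (h21 : ∀ n, k₂ n ≤ k₁ n + 1)
    (φ : ∀ n, Fin (k₁ n + 1 + (k₂ n + 1)) ≃ ι n) :
    Bd H (fun n => {g | ∀ i j, j < i → g.1 (φ n i) (φ n j) = 0}) := by
  let α₁ : ∀ n, Fin (k₁ n + 1) → ι n := fun n => φ n ∘ Fin.castAdd _
  let α₂ : ∀ n, Fin (k₂ n + 1) → ι n := fun n => φ n ∘ Fin.natAdd _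
  have i₁ : ∀ n, Function.Injective (α₁ n) := fun n =>
    (φ n).injective.comp (Fin.castAdd_injective _ _)
  have i₂ : ∀ n, Function.Injective (α₂ n) := fun n =>
    (φ n).injective.comp (Fin.natAdd_injective _ _)
  have hd : ∀ n, Disjoint (Set.range (α₁ n)) (Set.range (α₂ n)) := by
    intro n
    rw [Set.disjoint_left]
    rintro _ ⟨x, rfl⟩ ⟨y, hy⟩
    have := congrArg Fin.val ((φ n).injective hy)
    simp at this
    omega
  have j₁ : ∀ n, Function.Injective (α₂ n ∘ Fin.castLE (h12 n)) := fun n =>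
    (i₂ n).comp (Fin.castLE_injective _)
  have j₂ : ∀ n, Function.Injective (α₁ n ∘ Fin.castLE (h21 n)) := fun n =>
    (i₁ n).comp (Fin.castLE_injective _)
  have d₁ : ∀ n, Disjoint (Set.range (α₁ n)) (Set.range (α₂ n ∘ Fin.castLE (h12 n))) := fun n =>
    (hd n).mono_right (Set.range_comp_subset_range _ _)
  have d₂ : ∀ n, Disjoint (Set.range (α₂ n)) (Set.range (α₁ n ∘ Fin.castLE (h21 n))) := fun n =>
    (hd n).symm.mono_right (Set.range_comp_subset_range _ _)
  have c1 := Bd_CU hm hu hall i₁ j₁ d₁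
  have c2 := Bd_CU hm hu hall i₂ j₂ d₂
  have c3 := hall _ _ hd
  have hprod : ∀ n (g : SpecialLinearGroup (ι n) (F n)),
      (∀ i j, j < i → g.1 (φ n i) (φ n j) = 0) →
      (∏ i, g.1 (α₁ n i) (α₁ n i)) * ∏ i, g.1 (α₂ n i) (α₂ n i) = 1 := by
    intro n g hup
    have hdet : (g.1.submatrix (φ n) (φ n)).det = 1 := by
      rw [Matrix.det_submatrix_equiv_self]; exact g.2
    have hbt : (g.1.submatrix (φ n) (φ n)).IsUpperTriangular := fun i j hij => hup i j hij
    rw [Matrix.det_of_isUpperTriangular hbt, Fin.prod_univ_add] at hdet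
    exact hdet
  have step1 : Bd H (fun n => {g | (∀ i j, j < i → g.1 (φ n i) (φ n j) = 0) ∧
      ∏ i, g.1 (α₁ n i) (α₁ n i) = 1}) := by
    refine ((c2.mul hm c3).mul hm c1).mono fun n g hg => ?_
    obtain ⟨hup, hp⟩ := hg
    have hs : pm (F n) (α₁ n) * (pm (F n) (α₁ n))ᵀ + pm (F n) (α₂ n) * (pm (F n) (α₂ n))ᵀ = 1 := by
      ext a b
      obtain ⟨b, rfl⟩ := (φ n).surjective b
      rw [Matrix.add_apply, Matrix.one_apply, Matrix.mul_apply, Matrix.mul_apply]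
      simp only [Matrix.transpose_apply, pm_apply]
      show (∑ j, (if a = φ n (Fin.castAdd _ j) then (1 : F n) else 0) *
          (if φ n b = φ n (Fin.castAdd _ j) then 1 else 0)) +
        (∑ j, (if a = φ n (Fin.natAdd _ j) then (1 : F n) else 0) *
          (if φ n b = φ n (Fin.natAdd _ j) then 1 else 0)) = _
      rw [← Fin.sum_univ_add (f := fun i => (if a = φ n i then (1 : F n) else 0) *
        (if φ n b = φ n i then 1 else 0))]
      rw [Finset.sum_eq_single b]
      · simp
      · intro c _ hc
        rw [if_neg (fun h => hc ((φ n).injective h).symm), mul_zero]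
      · simp
    have h21' : (pm (F n) (α₂ n))ᵀ * g.1 * pm (F n) (α₁ n) = 0 := by
      ext i j
      rw [mul_pm, pm_t_mul]
      exact hup _ _ (by simp [Fin.lt_def]; omega)
    have hpe := peel _ _ _ _ (pm_t_pm (i₁ n)) (pm_t_pm (i₂ n)) (pm_t_pm_disj (hd n))
      (pm_t_pm_disj (hd n).symm) hs g.1 h21'
    rw [pm_sub, pm_sub] at hpe
    have hp2 : ∏ i, g.1 (α₂ n i) (α₂ n i) = 1 := by
      have := hprod n g hup
      rwa [hp, one_mul] at this
    have hup1 : ∀ i j, j < i → (g.1.submatrix (α₁ n) (α₁ n)) i j = 0 := fun i j hij =>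
      hup _ _ (by rw [Fin.lt_def] at hij ⊢; simpa using hij)
    have hup2 : ∀ i j, j < i → (g.1.submatrix (α₂ n) (α₂ n)) i j = 0 := fun i j hij =>
      hup _ _ (by simpa using hij)
    obtain ⟨x1, -, hx1⟩ := CU_mem (i₁ n) (j₁ n) (d₁ n) _ hup1 hp
    obtain ⟨x2, -, hx2⟩ := CU_mem (i₂ n) (j₂ n) (d₂ n) _ hup2 hp2
    have hU := supp_pm (α₁ n) (α₂ n) ((pm (F n) (α₁ n))ᵀ * g.1 * pm (F n) (α₂ n))
    refine Set.mem_mul.mpr ⟨x2 * hU.toSL (hd n), Set.mul_mem_mul ⟨_, hup2, hp2, hx2⟩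
      (hU.toSL_mem (hd n)), x1, ⟨_, hup1, hp, hx1⟩, ?_⟩
    apply Subtype.ext
    refine Eq.trans ?_ hpe.symm
    show x2.1 * _ * x1.1 = _
    rw [hx1, hx2]
    rfl
  let z₁ : ∀ n, ι n := fun n => α₁ n 0
  let z₂ : ∀ n, ι n := fun n => α₂ n 0
  have injc : ∀ n (z : ι n), Function.Injective (fun _ : Fin 1 => z) :=
    fun n z a b _ => Subsingleton.elim a b
  have hz : ∀ n, z₁ n ≠ z₂ n := fun n h =>
    Set.disjoint_left.mp (hd n) ⟨0, rfl⟩ ⟨0, h.symm⟩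
  have hdz : ∀ n, Disjoint (Set.range (fun _ : Fin 1 => z₁ n)) (Set.range (fun _ : Fin 1 => z₂ n)) := by
    intro n
    rw [Set.disjoint_left]
    rintro _ ⟨x, rfl⟩ ⟨y, hy⟩
    exact hz n hy.symm
  have c4 := Bd_WD hm hu hall (fun n => injc n (z₁ n)) (fun n => injc n (z₂ n)) hdz
  refine (step1.mul hm c4.inv).mono fun n g hup => ?_
  set c := ∏ i, g.1 (α₁ n i) (α₁ n i) with hc
  have hc0 : c ≠ 0 := by
    intro h0
    have := hprod n g hup
    rw [← hc, h0, zero_mul] at this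
    exact zero_ne_one this
  obtain ⟨h, hhW, hh⟩ := WD_mem (F := F n) (injc n (z₁ n)) (injc n (z₂ n)) (hdz n)
    (Matrix.of fun _ _ => c⁻¹) (Matrix.of fun _ _ => c)
    (by ext i j; simp [Matrix.mul_apply, hc0, Matrix.one_apply, Subsingleton.elim i j])
    (by ext i j; simp [Matrix.mul_apply, hc0, Matrix.one_apply, Subsingleton.elim i j])
  rw [crn_single, crn_single, Matrix.diagonal_mul_diagonal] at hh
  refine Set.mem_mul.mpr ⟨g * h, ?_, h⁻¹, Set.inv_mem_inv.mpr hhW, by group⟩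
  have hgh : ∀ i j, (g * h).1 i j = g.1 i j *
      ((if j = z₁ n then c⁻¹ else 1) * if j = z₂ n then c else 1) := by
    intro i j
    show (g.1 * h.1) i j = _
    rw [hh, Matrix.mul_diagonal]
  refine ⟨fun i j hij => by rw [hgh, hup i j hij, zero_mul], ?_⟩
  simp only [hgh]
  rw [Finset.prod_mul_distrib, ← hc]
  rw [Finset.prod_eq_single 0]
  · rw [if_pos rfl, if_neg (hz n), mul_one, mul_inv_cancel₀ hc0]
  · intro b _ hb
    rw [if_neg (fun h' => hb (i₁ n h')), if_neg, mul_one]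
    intro h'
    exact Set.disjoint_left.mp (hd n) ⟨b, rfl⟩ ⟨0, h'.symm⟩
  · simp

end UpperBd

section ABC

open Matrix
open scoped Pointwise

variable {F : Type*} [Field F]

/-- a matrix made of four blocks -/
def blk {n : ℕ} (a : F) (r c : Fin n → F) (D : Matrix (Fin n) (Fin n) F) :
    Matrix (Fin (n + 1)) (Fin (n + 1)) F :=
  Matrix.of (Fin.cons (Fin.cons a r) (fun i => Fin.cons (c i) (D i)))

section
variable {n : ℕ} (a : F) (r c : Fin n → F) (D : Matrix (Fin n) (Fin n) F)

theorem blk_00 : blk a r c D 0 0 = a := rfl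
theorem blk_0s (j : Fin n) : blk a r c D 0 j.succ = r j := rfl
theorem blk_s0 (i : Fin n) : blk a r c D i.succ 0 = c i := rfl
theorem blk_ss (i j : Fin n) : blk a r c D i.succ j.succ = D i j := rfl
end

theorem blk_eta {n : ℕ} (M : Matrix (Fin (n + 1)) (Fin (n + 1)) F) :
    M = blk (M 0 0) (fun j => M 0 j.succ) (fun i => M i.succ 0) (M.submatrix Fin.succ Fin.succ) := by
  ext i j
  rcases Fin.eq_zero_or_eq_succ i with rfl | ⟨i, rfl⟩ <;>
  rcases Fin.eq_zero_or_eq_succ j with rfl | ⟨j, rfl⟩ <;> rfl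

theorem blk_mul {n : ℕ} (a a' : F) (r c r' c' : Fin n → F) (D D' : Matrix (Fin n) (Fin n) F) :
    blk a r c D * blk a' r' c' D' = blk (a * a' + r ⬝ᵥ c') (a • r' + r ᵥ* D')
      (a' • c + D *ᵥ c') (vecMulVec c r' + D * D') := by
  ext i j
  rw [Matrix.mul_apply, Fin.sum_univ_succ]
  rcases Fin.eq_zero_or_eq_succ i with rfl | ⟨i, rfl⟩ <;>
  rcases Fin.eq_zero_or_eq_succ j with rfl | ⟨j, rfl⟩ <;>
  simp [blk_00, blk_0s, blk_s0, blk_ss, dotProduct, Matrix.mulVec, Matrix.vecMul,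
    Matrix.vecMulVec_apply, Matrix.mul_apply, mul_comm]

theorem abc (n : ℕ) : ∀ M : Matrix (Fin n) (Fin n) F, ∃ A B C : Matrix (Fin n) (Fin n) F,
    M = A * B * C ∧ (∀ i j, j < i → A i j = 0) ∧ (∀ i, A i i = 1) ∧
      (∀ i j, i < j → B i j = 0) ∧ (∀ i, B i i = 1) ∧ (∀ i j, j < i → C i j = 0) := by
  induction n with
  | zero => intro M; exact ⟨1, 1, M, by simp, fun i => i.elim0, fun i => i.elim0, fun i => i.elim0,
      fun i => i.elim0, fun i => i.elim0⟩
  | succ n ih =>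
    intro M
    have up : ∀ (a : F) (r : Fin n → F) (D : Matrix (Fin n) (Fin n) F), (∀ i j, j < i → D i j = 0) →
        ∀ i j, j < i → blk a r 0 D i j = 0 := by
      intro a r D hD i j hij
      rcases Fin.eq_zero_or_eq_succ i with rfl | ⟨i, rfl⟩
      · exact absurd hij (Fin.not_lt_zero j)
      · rcases Fin.eq_zero_or_eq_succ j with rfl | ⟨j, rfl⟩
        · rfl
        · exact hD i j (Fin.succ_lt_succ_iff.mp hij)
    have low : ∀ (a : F) (c : Fin n → F) (D : Matrix (Fin n) (Fin n) F), (∀ i j, i < j → D i j = 0) →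
        ∀ i j, i < j → blk a 0 c D i j = 0 := by
      intro a r D hD i j hij
      rcases Fin.eq_zero_or_eq_succ j with rfl | ⟨j, rfl⟩
      · exact absurd hij (Fin.not_lt_zero i)
      · rcases Fin.eq_zero_or_eq_succ i with rfl | ⟨i, rfl⟩
        · rfl
        · exact hD i j (Fin.succ_lt_succ_iff.mp hij)
    have one : ∀ (r c : Fin n → F) (D : Matrix (Fin n) (Fin n) F), (∀ i, D i i = 1) →
        ∀ i, blk 1 r c D i i = 1 := by
      intro r c D hD i
      rcases Fin.eq_zero_or_eq_succ i with rfl | ⟨i, rfl⟩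
      · rfl
      · exact hD i
    rw [blk_eta M]
    generalize M 0 0 = a
    generalize (fun j => M 0 (Fin.succ j)) = r
    generalize (fun j => M (Fin.succ j) 0) = c
    generalize M.submatrix Fin.succ Fin.succ = D
    by_cases hc : c = 0
    · subst hc
      obtain ⟨A, B, C, h, h1, h2, h3, h4, h5⟩ := ih D
      refine ⟨blk 1 0 0 A, blk 1 0 0 B, blk a r 0 C, ?_, up _ _ _ h1, one _ _ _ h2, low _ _ _ h3,
        one _ _ _ h4, up _ _ _ h5⟩
      rw [blk_mul, blk_mul, h]
      simp
    · obtain ⟨e, he⟩ : ∃ e : Fin n → F, a + e ⬝ᵥ c ≠ 0 := by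
        by_cases ha : a = 0
        · obtain ⟨i, hi⟩ := Function.ne_iff.mp hc
          refine ⟨Pi.single i 1, ?_⟩
          simpa [ha] using hi
        · exact ⟨0, by simpa using ha⟩
      set a₁ := a + e ⬝ᵥ c with ha₁
      set r₁ := r + e ᵥ* D with hr₁
      obtain ⟨A, B, C, h, h1, h2, h3, h4, h5⟩ := ih (D - vecMulVec (a₁⁻¹ • c) r₁)
      have hdet : IsUnit A.det := by
        have hbt : A.IsUpperTriangular := fun i j hij => h1 i j hij
        rw [Matrix.det_of_isUpperTriangular hbt]
        simp [h2]
      refine ⟨blk 1 (-e ᵥ* A) 0 A, blk 1 0 (A⁻¹ *ᵥ (a₁⁻¹ • c)) B, blk a₁ r₁ 0 C, ?_, up _ _ _ h1,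
        one _ _ _ h2, low _ _ _ h3, one _ _ _ h4, up _ _ _ h5⟩
      have e1 : blk 1 (-e ᵥ* A) 0 A = blk 1 (-e) 0 1 * blk 1 0 0 A := by
        rw [blk_mul]; simp
      have e2 : blk a r c D = blk 1 (-e) 0 1 * blk a₁ r₁ c D := by
        rw [blk_mul]; simp [ha₁, hr₁, Matrix.neg_vecMul]
      have e3 : blk a₁ r₁ c D = blk 1 0 0 A * blk 1 0 (A⁻¹ *ᵥ (a₁⁻¹ • c)) B * blk a₁ r₁ 0 C := by
        rw [blk_mul, blk_mul, Matrix.mulVec_mulVec, Matrix.mul_nonsing_inv _ hdet]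
        simp only [Matrix.one_mulVec, zero_dotProduct, Matrix.zero_vecMul, zero_smul, smul_zero,
          Matrix.zero_vecMulVec, Matrix.mulVec_zero, add_zero, zero_add, one_smul, one_mul, mul_one,
          dotProduct_zero, Matrix.vecMulVec_zero, zero_mul]
        rw [← h, smul_smul, mul_inv_cancel₀ he, one_smul, add_sub_cancel]
      rw [e1, e2, e3]
      simp only [Matrix.mul_assoc]

variable {N : Type*} {d : N → ℕ} {F : N → Type*} [∀ n, Field (F n)]
  {H : ℕ → Subgroup (∀ n, SpecialLinearGroup (Fin (d n)) (F n))}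

theorem big (hd : ∀ n, 2 ≤ d n) (hm : Monotone H) (hu : ∀ g, ∃ t, g ∈ H t) (hall : AllU H) :
    ∃ t, ∀ g, g ∈ H t := by
  have hk : ∀ n, (d n - 1) / 2 + 1 + ((d n - 2) / 2 + 1) = d n := fun n => by
    have := hd n; omega
  have b1 := upper_Bd hm hu hall (k₁ := fun n => (d n - 1) / 2) (k₂ := fun n => (d n - 2) / 2)
    (fun n => by have := hd n; omega) (fun n => by have := hd n; omega) (fun n => finCongr (hk n))
  have b2 := upper_Bd hm hu hall (k₁ := fun n => (d n - 1) / 2) (k₂ := fun n => (d n - 2) / 2)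
    (fun n => by have := hd n; omega) (fun n => by have := hd n; omega)
    (fun n => (finCongr (hk n)).trans Fin.revPerm)
  have b : Bd H (fun _ => Set.univ) := by
    refine ((b1.mul hm b2).mul hm b1).mono fun n g _ => ?_
    obtain ⟨A, B, C, h, h1, h2, h3, h4, h5⟩ := abc (d n) g.1
    have hA : A.det = 1 := by
      have hbt : A.IsUpperTriangular := fun i j hij => h1 i j hij
      rw [Matrix.det_of_isUpperTriangular hbt]
      simp [h2]
    have hB : B.det = 1 := by
      have hbt : Bᵀ.IsUpperTriangular := fun i j hij => h3 j i hij
      rw [← Matrix.det_transpose, Matrix.det_of_isUpperTriangular hbt]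
      simp [h4]
    have hC : C.det = 1 := by
      have h0 : g.1.det = 1 := g.2
      rw [h, Matrix.det_mul, Matrix.det_mul, hA, hB, one_mul, one_mul] at h0
      exact h0
    refine Set.mem_mul.mpr ⟨⟨A, hA⟩ * ⟨B, hB⟩, Set.mul_mem_mul ?_ ?_, ⟨C, hC⟩, ?_, ?_⟩
    · intro i j hij
      exact h1 _ _ (Fin.lt_def.mpr (Fin.lt_def.mp hij))
    · intro i j hij
      exact h3 _ _ (Fin.rev_lt_rev.mpr (Fin.lt_def.mpr (Fin.lt_def.mp hij)))
    · intro i j hij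
      exact h5 _ _ (Fin.lt_def.mpr (Fin.lt_def.mp hij))
    · exact Subtype.ext h.symm
  obtain ⟨t, ht⟩ := b
  exact ⟨t, fun g => ht g fun n => trivial⟩

end ABC

section Diag

open Matrix
open scoped Pointwise

variable {N : Type*} {ι : N → Type*} [∀ n, Fintype (ι n)] [∀ n, DecidableEq (ι n)]
  {F : N → Type*} [∀ n, Field (F n)]
  {H : ℕ → Subgroup (∀ n, SpecialLinearGroup (ι n) (F n))}

theorem diag_step (hm : Monotone H) (hu : ∀ g, ∃ t, g ∈ H t) (A B C : ℕ → ∀ n, Finset (ι n))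
    (hBB : ∀ n j k, j ≠ k → Disjoint (B j n) (B k n)) (hBC : ∀ n j k, Disjoint (B j n) (C k n))
    (hAC : ∀ n j k, Disjoint (A j n) (C k n)) (hAB : ∀ n j, Disjoint (A j n) (B j n))
    (hc : ∀ n j, (A j n).card ≤ (B j n).card) :
    ∃ j, Bd H (fun n => USet (F n) (A j n : Set (ι n)) (C j n : Set (ι n))) := by
  classical
  by_contra hcon
  have hcon' : ∀ j t, ∃ Y : ∀ n, SpecialLinearGroup (ι n) (F n),
      (∀ n, Y n ∈ USet (F n) (A j n : Set (ι n)) (C j n : Set (ι n))) ∧ Y ∉ H t := by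
    intro j t
    by_contra h
    push Not at h
    exact hcon ⟨j, t, h⟩
  have hAB' := fun n j => Finset.disjoint_coe.mpr (hAB n j)
  choose Q Q' hQ hQ' hQM _ using fun j n => exists_match (F := F n) (A j n) (B j n) (hc n j)
  let p : ℕ → ∀ n, SpecialLinearGroup (ι n) (F n) := fun j n => (hQ j n).toSL (hAB' n j)
  choose s hs using fun j => hu (p j)
  choose Y hY hYn using fun j => hcon' j (max j (s j))
  let M : ℕ → ∀ n, Matrix (ι n) (ι n) (F n) := fun j n => Q' j n * ((Y j n).1 - 1)
  have hM : ∀ j n, Supp (B j n : Set (ι n)) (C j n) (M j n) := fun j n =>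
    Supp.mul (hQ' j n) (hY j n)
  let L : ∀ n, Matrix (ι n) (ι n) (F n) := fun n => Matrix.of fun a b =>
    if h : ∃ j, a ∈ B j n then M h.choose n a b else 0
  have hL : ∀ n j a b, a ∈ B j n → L n a b = M j n a b := by
    intro n j a b ha
    have hex : ∃ j, a ∈ B j n := ⟨j, ha⟩
    have hj : hex.choose = j := by
      by_contra hne
      exact Finset.disjoint_left.mp (hBB n _ _ hne) hex.choose_spec ha
    show (if h : ∃ j, a ∈ B j n then M h.choose n a b else 0) = _
    rw [dif_pos hex, hj]
  have hLs : ∀ n, Supp (⋃ j, (B j n : Set (ι n))) (⋃ j, (C j n : Set (ι n))) (L n) := by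
    intro n a b hab
    have hex : ∃ j, a ∈ B j n := by
      by_contra h
      exact hab (dif_neg h)
    obtain ⟨j, hj⟩ := hex
    rw [hL n j a b hj] at hab
    exact ⟨Set.mem_iUnion.mpr ⟨j, hj⟩, Set.mem_iUnion.mpr ⟨j, (hM j n a b hab).2⟩⟩
  have hd : ∀ n, Disjoint (⋃ j, (B j n : Set (ι n))) (⋃ j, (C j n : Set (ι n))) := by
    intro n
    rw [Set.disjoint_iUnion_left]
    intro j
    rw [Set.disjoint_iUnion_right]
    exact fun k => Finset.disjoint_coe.mpr (hBC n j k)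
  let x : ∀ n, SpecialLinearGroup (ι n) (F n) := fun n => (hLs n).toSL (hd n)
  obtain ⟨t, ht⟩ := hu x
  apply hYn t
  have hPL : ∀ n, Q t n * L n = (Y t n).1 - 1 := by
    intro n
    have : Q t n * L n = Q t n * M t n := by
      ext a b
      rw [Matrix.mul_apply, Matrix.mul_apply]
      refine Finset.sum_congr rfl fun c _ => ?_
      by_cases h0 : Q t n a c = 0
      · rw [h0, zero_mul, zero_mul]
      · rw [hL n t c b (hQ t n a c h0).2]
    rw [this]
    exact hQM t n _ _ (hY t n)
  have key : Y t = p t * x * (p t)⁻¹ * x⁻¹ := by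
    funext n
    refine comm_formula (P := Q t n) (Q := L n) rfl rfl ?_ ?_ ?_
    · rw [hPL]; abel
    · refine (hLs n).mul_eq_zero (hQ t n) ?_
      rw [Set.disjoint_iUnion_left]
      exact fun k => (Finset.disjoint_coe.mpr (hAC n t k)).symm
    · exact (hLs n).mul_eq_zero (hLs n) (hd n).symm
  rw [key]
  have h1 := hm (le_max_right t (s t)) (hs t)
  have h2 := hm (le_max_left t (s t)) ht
  exact mul_mem (mul_mem (mul_mem h1 h2) (inv_mem h1)) (inv_mem h2)

end Diag

section BigStep

open Matrix

/-- an interval in `Fin d` -/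
def ivl (d lo hi : ℕ) : Finset (Fin d) := Finset.univ.filter fun a => lo ≤ a.val ∧ a.val < hi

theorem ivl_card {d lo hi : ℕ} (h : hi ≤ d) : (ivl d lo hi).card = hi - lo := by
  have : (ivl d lo hi).map Fin.valEmbedding = Finset.Ico lo hi := by
    ext x
    simp only [ivl, Finset.mem_map, Finset.mem_filter, Finset.mem_univ, true_and, Finset.mem_Ico,
      Fin.valEmbedding_apply]
    constructor
    · rintro ⟨a, ha, rfl⟩; exact ha
    · intro hx; exact ⟨⟨x, by omega⟩, hx, rfl⟩
  rw [← Finset.card_map Fin.valEmbedding, this, Nat.card_Ico]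

theorem ivl_disj {d lo hi lo' hi' : ℕ} (h : hi ≤ lo' ∨ hi' ≤ lo) :
    Disjoint (ivl d lo hi) (ivl d lo' hi') := by
  rw [Finset.disjoint_left]
  intro a ha hb
  simp only [ivl, Finset.mem_filter, Finset.mem_univ, true_and] at ha hb
  omega

variable {N : Type*} {d : N → ℕ} {F : N → Type*} [∀ n, Field (F n)]
  {H : ℕ → Subgroup (∀ n, SpecialLinearGroup (Fin (d n)) (F n))}

theorem big_step (hm : Monotone H) (hu : ∀ g, ∃ t, g ∈ H t) :
    ∃ D t, ∀ g : ∀ n, SpecialLinearGroup (Fin (d n)) (F n), (∀ n, d n < D → g n = 1) → g ∈ H t := by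
  classical
  let e : ℕ → N → ℕ := fun j n => d n / 2 ^ (j + 3)
  have he8 : ∀ j n, 8 * e j n ≤ d n := by
    intro j n
    have h1 : 2 ^ (j + 3) * e j n ≤ d n := Nat.mul_div_le _ _
    have h2 : 8 ≤ 2 ^ (j + 3) := by
      rw [pow_add]; have := Nat.one_le_two_pow (n := j); omega
    exact (Nat.mul_le_mul_right _ h2).trans h1
  have hestep : ∀ j n, 2 * e (j + 1) n ≤ e j n := by
    intro j n
    show 2 * (d n / 2 ^ (j + 1 + 3)) ≤ d n / 2 ^ (j + 3)
    have : d n / 2 ^ (j + 1 + 3) = d n / 2 ^ (j + 3) / 2 := by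
      rw [Nat.div_div_eq_div_mul]; congr 1
    rw [this]; omega
  have hlt : ∀ n j k, j < k → 2 * e k n ≤ e j n := by
    intro n j k hjk
    induction k, hjk using Nat.le_induction with
    | base => exact hestep j n
    | succ k hk ih => have := hestep k n; omega
  obtain ⟨j, hj⟩ := diag_step hm hu (fun j n => ivl (d n) (4 * e j n) (5 * e j n))
    (fun j n => ivl (d n) (5 * e j n) (6 * e j n)) (fun j n => ivl (d n) (6 * e j n) (7 * e j n))
    (by
      intro n j k hjk
      apply ivl_disj
      rcases lt_or_gt_of_ne hjk with h | h
      · have := hlt n _ _ h; omega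
      · have := hlt n _ _ h; omega)
    (by
      intro n j k
      apply ivl_disj
      rcases lt_trichotomy j k with h | h | h
      · have := hlt n _ _ h; omega
      · subst h; omega
      · have := hlt n _ _ h; omega)
    (by
      intro n j k
      apply ivl_disj
      rcases lt_trichotomy j k with h | h | h
      · have := hlt n _ _ h; omega
      · subst h; omega
      · have := hlt n _ _ h; omega)
    (by intro n j; apply ivl_disj; omega)
    (by
      intro n j
      have := he8 j n
      rw [ivl_card (by omega), ivl_card (by omega)]; omega)
  let N' := {n : N // 2 ^ (j + 3) ≤ d n}
  let ext : (∀ n : N', SpecialLinearGroup (Fin (d n.1)) (F n.1)) →*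
      (∀ n, SpecialLinearGroup (Fin (d n)) (F n)) :=
    { toFun := fun g n => if h : 2 ^ (j + 3) ≤ d n then g ⟨n, h⟩ else 1
      map_one' := by funext n; by_cases h : 2 ^ (j + 3) ≤ d n <;> simp [h]
      map_mul' := by intro g g'; funext n; by_cases h : 2 ^ (j + 3) ≤ d n <;> simp [h] }
  let H' : ℕ → Subgroup (∀ n : N', SpecialLinearGroup (Fin (d n.1)) (F n.1)) :=
    fun t => (H t).comap ext
  have hm' : Monotone H' := fun s t hst => Subgroup.comap_mono (hm hst)
  have hu' : ∀ g, ∃ t, g ∈ H' t := fun g => hu (ext g)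
  have he1 : ∀ n : N', 1 ≤ e j n.1 := fun n =>
    (Nat.one_le_div_iff (by positivity)).mpr n.2
  have hall : AllU H' := by
    intro S T hST
    have := all_U hm' hu' (fun n => e j n.1) (2 ^ (j + 4))
      (fun n => by rw [Fintype.card_fin]; have := he8 j n.1; omega)
      (fun n => by
        rw [Fintype.card_fin]
        have h1 := Nat.lt_div_mul_add (a := d n.1) (b := 2 ^ (j + 3)) (by positivity)
        have h2 : (2 : ℕ) ^ (j + 4) = 2 * 2 ^ (j + 3) := by ring
        have h3 : 2 ^ (j + 3) ≤ e j n.1 * 2 ^ (j + 3) := Nat.le_mul_of_pos_left _ (he1 n)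
        have h4 : d n.1 < e j n.1 * 2 ^ (j + 3) + 2 ^ (j + 3) := h1
        rw [h2, mul_assoc, mul_comm (2 ^ (j + 3))]; omega)
      (fun n => ivl (d n.1) (4 * e j n.1) (5 * e j n.1))
      (fun n => ivl (d n.1) (6 * e j n.1) (7 * e j n.1))
      (fun n => by have := he8 j n.1; rw [ivl_card (by omega)]; omega)
      (fun n => by have := he8 j n.1; rw [ivl_card (by omega)]; omega)
      (fun n => ivl_disj (by omega))
      (by
        obtain ⟨t, ht⟩ := hj
        refine ⟨t, fun g hg => ht (ext g) fun n => ?_⟩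
        by_cases h : 2 ^ (j + 3) ≤ d n
        · have : ext g n = g ⟨n, h⟩ := dif_pos h
          rw [this]
          exact hg ⟨n, h⟩
        · have : ext g n = 1 := dif_neg h
          rw [this]
          intro a b hab
          exact absurd (by show (1 - 1 : Matrix _ _ _) a b = 0; rw [sub_self]; rfl) hab)
      (fun n => (S n).toFinset) (fun n => (T n).toFinset)
      (fun n => by rw [Set.disjoint_toFinset]; exact hST n)
    simpa only [Set.coe_toFinset] using this
  obtain ⟨t, ht⟩ := big (H := H') (d := fun n : N' => d n.1) (fun n => by
    have : 2 ≤ 2 ^ (j + 3) := by rw [pow_add]; have := Nat.one_le_two_pow (n := j); omega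
    exact this.trans n.2) hm' hu' hall
  refine ⟨2 ^ (j + 3), t, fun g hg => ?_⟩
  have h1 : ext (fun n => g n.1) ∈ H t := ht (fun n => g n.1)
  have h2 : ext (fun n => g n.1) = g := by
    funext n
    by_cases h : 2 ^ (j + 3) ≤ d n
    · exact dif_pos h
    · rw [hg n (not_le.mp h)]; exact dif_neg h
  rwa [h2] at h1

end BigStep

section Glue

open Matrix

variable {d : ℕ → ℕ} {F : ℕ → Type*} [∀ n, Field (F n)] [∀ n, Fintype (F n)]
  {H : ℕ → Subgroup (∀ n, SpecialLinearGroup (Fin (d n)) (F n))}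

/-- all elements supported on `A` lie in one subgroup -/
def Good (H : ℕ → Subgroup (∀ n, SpecialLinearGroup (Fin (d n)) (F n))) (A : Set ℕ) : Prop :=
  ∃ t, ∀ g : ∀ n, SpecialLinearGroup (Fin (d n)) (F n), (∀ n, n ∉ A → g n = 1) → g ∈ H t

theorem Good.union (hm : Monotone H) {A B : Set ℕ} (hA : Good H A) (hB : Good H B) :
    Good H (A ∪ B) := by
  classical
  obtain ⟨s, hs⟩ := hA
  obtain ⟨t, ht⟩ := hB
  refine ⟨max s t, fun g hg => ?_⟩
  have h1 : (fun n => if n ∈ A then g n else 1) ∈ H s := hs _ fun n hn => if_neg hn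
  have h2 : (fun n => if n ∈ A then 1 else g n) ∈ H t := ht _ fun n hn => by
    by_cases h : n ∈ A
    · exact if_pos h
    · show (if n ∈ A then 1 else g n) = 1
      rw [if_neg h, hg n (by simp [h, hn])]
  have h3 : g = (fun n => if n ∈ A then g n else 1) * (fun n => if n ∈ A then 1 else g n) := by
    funext n
    by_cases h : n ∈ A <;> simp [h]
  rw [h3]
  exact mul_mem (hm (le_max_left _ _) h1) (hm (le_max_right _ _) h2)

theorem Good.empty : Good H ∅ :=
  ⟨0, fun g hg => by
    have : g = 1 := funext fun n => hg n (Set.notMem_empty n)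
    rw [this]; exact one_mem _⟩

theorem Good.mono {A B : Set ℕ} (h : A ⊆ B) (hB : Good H B) : Good H A := by
  obtain ⟨t, ht⟩ := hB
  exact ⟨t, fun g hg => ht g fun n hn => hg n fun hA => hn (h hA)⟩

theorem Good.biUnion (hm : Monotone H) {κ : Type*} (s : Set κ) (hs : s.Finite) (A : κ → Set ℕ)
    (h : ∀ k ∈ s, Good H (A k)) : Good H (⋃ k ∈ s, A k) := by
  induction s, hs using Set.Finite.induction_on with
  | empty => simpa using Good.empty
  | insert _ _ ih =>
    rw [Set.biUnion_insert]
    exact Good.union hm (h _ (Set.mem_insert _ _))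
      (ih fun k hk => h k (Set.mem_insert_of_mem _ hk))

theorem finite_cards (d₀ : ℕ)
    (h2 : ¬ ∃ (I : Set ℕ) (d₀ : ℕ), I.Infinite ∧ (∀ n ∈ I, d n = d₀) ∧
        ∀ n ∈ I, ∀ m ∈ I, n < m → Fintype.card (F n) < Fintype.card (F m)) :
    ((fun n => Fintype.card (F n)) '' {n | d n = d₀}).Finite := by
  by_contra hinf
  apply h2
  refine ⟨{n | d n = d₀ ∧ ∀ m < n, d m = d₀ → Fintype.card (F m) < Fintype.card (F n)}, d₀, ?_,
    fun n hn => hn.1, fun n hn m hm hnm => hm.2 n hnm hn.1⟩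
  intro hfin
  obtain ⟨B, hB⟩ := hfin.bddAbove
  have hinf' : ((fun n => Fintype.card (F n)) '' {n | d n = d₀}).Infinite := hinf
  -- a card larger than all cards at indices up to B
  obtain ⟨q, ⟨n, hn, hnq⟩, hq⟩ := hinf'.exists_gt
    ((Finset.range (B + 1)).sup fun n => Fintype.card (F n))
  classical
  have hex : ∃ n, d n = d₀ ∧ ((Finset.range (B + 1)).sup fun n => Fintype.card (F n))
      < Fintype.card (F n) := ⟨n, hn, by rw [← hnq] at hq; exact hq⟩
  obtain ⟨hk1, hk2⟩ := Nat.find_spec hex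
  have hle : Nat.find hex ≤ B := hB ⟨hk1, fun m hm hdm => by
    have := Nat.find_min hex hm
    push Not at this
    exact (this hdm).trans_lt hk2⟩
  exact absurd hk2 (not_lt.mpr (Finset.le_sup (f := fun n => Fintype.card (F n))
    (Finset.mem_range.mpr (Nat.lt_succ_of_le hle))))

theorem class_good (d₀ q₀ : ℕ) (hperf : ∀ n, commutator (SpecialLinearGroup (Fin (d n)) (F n)) = ⊤)
    (hm : Monotone H) (hu : ∀ g, ∃ t, g ∈ H t) :
    Good H {n | d n = d₀ ∧ Fintype.card (F n) = q₀} := by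
  classical
  by_cases hne : ∃ n₀, d n₀ = d₀ ∧ Fintype.card (F n₀) = q₀
  swap
  · refine Good.mono (fun n hn => hne ⟨n, hn⟩) Good.empty
  obtain ⟨n₀, hd₀, hq₀⟩ := hne
  have iso : ∀ n, d n = d₀ ∧ Fintype.card (F n) = q₀ →
      Nonempty (SpecialLinearGroup (Fin (d n₀)) (F n₀) ≃* SpecialLinearGroup (Fin (d n)) (F n)) := by
    rintro n ⟨h1, h2⟩
    have e := FiniteField.ringEquivOfCardEq (K := F n₀) (K' := F n) (hq₀.trans h2.symm)
    rw [hd₀, h1]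
    refine ⟨MonoidHom.toMulEquiv (SpecialLinearGroup.map e.toRingHom)
      (SpecialLinearGroup.map e.symm.toRingHom) ?_ ?_⟩
    · ext g i j; simp
    · ext g i j; simp
  let Φ := fun n h => (iso n h).some
  let A := {n // d n = d₀ ∧ Fintype.card (F n) = q₀}
  let ext : (A → SpecialLinearGroup (Fin (d n₀)) (F n₀)) →*
      (∀ n, SpecialLinearGroup (Fin (d n)) (F n)) :=
    { toFun := fun g n => if h : d n = d₀ ∧ Fintype.card (F n) = q₀ then Φ n h (g ⟨n, h⟩) else 1
      map_one' := by
        funext n; by_cases h : d n = d₀ ∧ Fintype.card (F n) = q₀ <;> simp [h]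
      map_mul' := by
        intro g g'; funext n
        by_cases h : d n = d₀ ∧ Fintype.card (F n) = q₀ <;> simp [h] }
  obtain ⟨t, ht⟩ := koppelberg_tits (hperf n₀) (fun t => (H t).comap ext)
    (fun s t hst => Subgroup.comap_mono (hm hst)) (fun g => hu (ext g))
  refine ⟨t, fun g hg => ?_⟩
  have h1 : ext (fun a => (Φ a.1 a.2).symm (g a.1)) ∈ H t := ht _
  have h2 : ext (fun a => (Φ a.1 a.2).symm (g a.1)) = g := by
    funext n
    by_cases h : d n = d₀ ∧ Fintype.card (F n) = q₀
    · exact (dif_pos h).trans ((Φ n h).apply_symm_apply (g n))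
    · rw [hg n h]; exact dif_neg h
  rwa [h2] at h1

theorem glue (hperf : ∀ n, commutator (SpecialLinearGroup (Fin (d n)) (F n)) = ⊤)
    (h2 : ¬ ∃ (I : Set ℕ) (d₀ : ℕ), I.Infinite ∧ (∀ n ∈ I, d n = d₀) ∧
        ∀ n ∈ I, ∀ m ∈ I, n < m → Fintype.card (F n) < Fintype.card (F m))
    (hm : Monotone H) (hu : ∀ g, ∃ t, g ∈ H t) : ∃ t, H t = ⊤ := by
  obtain ⟨D, t, ht⟩ := big_step hm hu
  have hbig : Good H {n | D ≤ d n} := ⟨t, fun g hg => ht g fun n hn => hg n (not_le.mpr hn)⟩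
  have hsmall : Good H (⋃ d₀ ∈ Set.Iio D, ⋃ q₀ ∈ (fun n => Fintype.card (F n)) '' {n | d n = d₀},
      {n | d n = d₀ ∧ Fintype.card (F n) = q₀}) :=
    Good.biUnion hm _ (Set.finite_Iio D) _ fun d₀ _ =>
      Good.biUnion hm _ (finite_cards d₀ h2) _ fun q₀ _ => class_good d₀ q₀ hperf hm hu
  obtain ⟨t, ht⟩ := Good.union hm hbig hsmall
  refine ⟨t, (Subgroup.eq_top_iff' _).mpr fun g => ht g fun n hn => (hn ?_).elim⟩
  by_cases h : D ≤ d n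
  · exact Or.inl h
  · refine Or.inr ?_
    simp only [Set.mem_iUnion]
    exact ⟨d n, not_le.mp h, _, ⟨n, rfl, rfl⟩, rfl, rfl⟩

end Glue

section Perfect

open Matrix

theorem diag2n_eq {ι F : Type*} [Fintype ι] [DecidableEq ι] [Field F] {i j : ι} (h : i ≠ j) {c : F}
    (hc : c ≠ 0) : SpecialLinearGroup.diag2n h c hc =
      SpecialLinearGroup.transvection h c * SpecialLinearGroup.transvection h.symm (-c⁻¹) *
      SpecialLinearGroup.transvection h c * SpecialLinearGroup.transvection h (-1) *
      SpecialLinearGroup.transvection h.symm 1 * SpecialLinearGroup.transvection h (-1) := by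
  apply Subtype.ext
  have e : (SpecialLinearGroup.diag2n h c hc).1 =
      1 + single i i (c - 1) + single j j (c⁻¹ - 1) := by
    rw [SpecialLinearGroup.diag2n_coe]
    ext a b
    by_cases hab : a = b
    · subst hab
      by_cases hi : a = i
      · subst hi; simp [h.symm]
      · by_cases hj : a = j
        · subst hj; simp [hi, h]
        · simp [hi, hj, Ne.symm hi, Ne.symm hj]
    · simp [hab, single_apply]
      grind
  rw [e]
  show _ = (1 + single i j c) * (1 + single j i (-c⁻¹)) * (1 + single i j c) *
    (1 + single i j (-1)) * (1 + single j i 1) * (1 + single i j (-1))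
  have hh := h.symm
  simp only [mul_add, add_mul, mul_one, one_mul, single_mul_single_same,
    single_mul_single_of_ne _ _ _ _ h, single_mul_single_of_ne _ _ _ _ hh, add_zero, zero_add]
  have h3 : c * c⁻¹ = 1 := mul_inv_cancel₀ hc
  have h4 : c⁻¹ * c = 1 := inv_mul_cancel₀ hc
  ext a b
  simp only [Matrix.add_apply, single_apply, one_apply]
  by_cases hai : i = a
  · subst hai
    by_cases hbi : i = b
    · subst hbi; simp [h, hh, h3, h4]
    · by_cases hbj : j = b
      · subst hbj; simp [h, hh, h3, h4]
      · simp [h, hh, hbi, hbj]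
  · by_cases haj : j = a
    · subst haj
      by_cases hbi : i = b
      · subst hbi; simp [h, hh, h3, h4]
      · by_cases hbj : j = b
        · subst hbj; simp [h, hh, h3, h4]
        · simp [h, hh, hbi, hbj]
    · simp [hai, haj]

theorem perfect_ge3 {ι F : Type*} [Fintype ι] [DecidableEq ι] [Field F] (h3 : 2 < Fintype.card ι) :
    commutator (SpecialLinearGroup ι F) = ⊤ := by
  have : Nontrivial ι := Fintype.one_lt_card_iff_nontrivial.mp (by omega)
  have ht : ∀ (i j : ι) (hij : i ≠ j) (a : F),
      SpecialLinearGroup.transvection hij a ∈ commutator (SpecialLinearGroup ι F) := by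
    intro i j hij a
    obtain ⟨k, hk⟩ : ∃ k, k ∉ ({i, j} : Finset ι) := by
      by_contra hcon
      push Not at hcon
      have h1 : (Finset.univ : Finset ι) ⊆ {i, j} := fun x _ => hcon x
      have h2 := (Finset.card_le_card h1).trans Finset.card_le_two
      rw [Finset.card_univ] at h2
      omega
    simp only [Finset.mem_insert, Finset.mem_singleton, not_or] at hk
    have key := comm_formula (g := SpecialLinearGroup.transvection (Ne.symm hk.1) a)
      (x := SpecialLinearGroup.transvection hk.2 (1 : F))
      (y := SpecialLinearGroup.transvection hij a) rfl rfl
      (by rw [single_mul_single_same, mul_one]; rfl)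
      (single_mul_single_of_ne _ _ _ _ hij.symm _) (single_mul_single_of_ne _ _ _ _ (Ne.symm hk.2) _)
    rw [key, ← commutatorElement_def]
    exact Subgroup.commutator_mem_commutator (Subgroup.mem_top _) (Subgroup.mem_top _)
  refine (Subgroup.eq_top_iff' _).mpr fun M => ?_
  refine SpecialLinearGroup.diagonal_transvection_induction' (· ∈ commutator _) M ?_ ht
    fun _ _ => mul_mem
  intro i j hij c hc
  rw [diag2n_eq]
  refine mul_mem (mul_mem (mul_mem (mul_mem (mul_mem ?_ ?_) ?_) ?_) ?_) ?_ <;> exact ht _ _ _ _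

theorem perfect_SL (d : ℕ) (F : Type*) [Field F] [Fintype F] (hd : 2 ≤ d)
    (h1 : d = 2 → 3 < Fintype.card F) :
    commutator (SpecialLinearGroup (Fin d) F) = ⊤ := by
  classical
  rcases hd.lt_or_eq with h | h
  · exact perfect_ge3 (by rwa [Fintype.card_fin])
  · subst h
    obtain ⟨a, ha⟩ : ∃ a, a ∉ ({0, 1, -1} : Finset F) := by
      by_contra hcon
      push Not at hcon
      have h2 : (Finset.univ : Finset F) ⊆ {0, 1, -1} := fun x _ => hcon x
      have h3 := (Finset.card_le_card h2).trans Finset.card_le_three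
      rw [Finset.card_univ] at h3
      have := h1 rfl
      omega
    simp only [Finset.mem_insert, Finset.mem_singleton, not_or] at ha
    refine Matrix.SL2.commutator_eq_top ha.1 fun h => ?_
    rcases eq_or_eq_neg_of_sq_eq_sq a 1 (by rw [h, one_pow]) with h | h
    · exact ha.2.1 h
    · exact ha.2.2 h

end Perfect
/-- Let `dₙ ≥ 2` and let `Fₙ` be finite fields (of cardinality `qₙ`) such that
(1) `qₙ > 3` whenever `dₙ = 2`, and (2) there is no infinite `I ⊆ ℕ` on which the `dₙ`
are constant and the `qₙ` strictly increasing. Then `∏ n, SL(dₙ, Fₙ)` cannot be written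
as the union of a countable increasing chain of proper subgroups. -/
theorem stmt_11 (d : ℕ → ℕ) (F : ℕ → Type*) [∀ n, Field (F n)] [∀ n, Fintype (F n)]
    (hd : ∀ n, 2 ≤ d n)
    (h1 : ∀ n, d n = 2 → 3 < Fintype.card (F n))
    (h2 : ¬ ∃ (I : Set ℕ) (d₀ : ℕ), I.Infinite ∧ (∀ n ∈ I, d n = d₀) ∧
        ∀ n ∈ I, ∀ m ∈ I, n < m → Fintype.card (F n) < Fintype.card (F m)) :
    ¬ ∃ H : ℕ → Subgroup (∀ n, Matrix.SpecialLinearGroup (Fin (d n)) (F n)),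
        Monotone H ∧ (∀ t, H t ≠ ⊤) ∧
          ∀ g : ∀ n, Matrix.SpecialLinearGroup (Fin (d n)) (F n), ∃ t, g ∈ H t := by

  rintro ⟨H, hm, hne, hu⟩
  obtain ⟨t, ht⟩ := glue (fun n => perfect_SL (d n) (F n) (hd n) (h1 n)) h2 hm hu
  exact hne t ht
end

section
/- Let n ≥ 1, let q be a prime power, and let p be an odd prime which is a primitive prime divisor of q^{4n} − 1 (i.e., p divides q^{4n} − 1 but p does not divide q^k − 1 for any 1 ≤ k < 4n). Let C(4n, q) be the set of elements of SL(4n, GF(q)) that are conjugate in GL(4n, GF(q)) to the permutation matrix of a fixed-point-free involution of the index set {1, …, 4n}. Then there exist an element ψ ∈ SL(4n, GF(q)) of order p and elements π_1, π_2 ∈ C(4n, q) such that ψ = π_1 π_2. -/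
/-- Membership in the class `C(m, q)`: an element of `SL(m, F)` conjugate in `GL(m, F)`
to the permutation matrix of a fixed-point-free involution of `Fin m`. -/
def MemC (m : ℕ) (F : Type*) [Field F] (x : Matrix.SpecialLinearGroup (Fin m) F) : Prop :=
  ∃ (σ : Equiv.Perm (Fin m)) (g : GL (Fin m) F),
    σ ^ 2 = 1 ∧ (∀ i, σ i ≠ i) ∧
    (g : Matrix (Fin m) (Fin m) F) * (x : Matrix (Fin m) (Fin m) F) *
        ((g⁻¹ : GL (Fin m) F) : Matrix (Fin m) (Fin m) F) = σ.permMatrix F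

/-- An abstract version: matrices `T = perm σ`, a power `χ` with the right relations. -/
theorem stmt_12_aux (n : ℕ) (F : Type*) [Field F] (p : ℕ)
    (σ : Equiv.Perm (Fin (4 * n))) (hσ : σ ^ 2 = 1) (hfix : ∀ i, σ i ≠ i)
    (X Y : Matrix (Fin (4 * n)) (Fin (4 * n)) F) (hXY : X * Y = 1)
    (hT : X * σ.permMatrix F = σ.permMatrix F * Y)
    (hord : orderOf (X * X) = p) :
    ∃ ψ π₁ π₂ : Matrix.SpecialLinearGroup (Fin (4 * n)) F,
      orderOf ψ = p ∧ MemC (4 * n) F π₁ ∧ MemC (4 * n) F π₂ ∧ ψ = π₁ * π₂ := by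
  have hYX : Y * X = 1 := mul_eq_one_comm.mp hXY
  have hTT : σ.permMatrix F * σ.permMatrix F = 1 := by
    rw [← Matrix.permMatrix_mul, ← pow_two, hσ, Matrix.permMatrix_one]
  have hdT : (σ.permMatrix F).det = 1 := by
    rw [Matrix.det_permutation, Equiv.Perm.sign_of_pow_two_eq_one hσ]
    have h0 : Fintype.card (Function.fixedPoints σ) = 0 := by
      rw [Fintype.card_eq_zero_iff]
      exact ⟨fun x => hfix x.1 x.2⟩
    rw [h0]
    have : (Fintype.card (Fin (4 * n)) - 0) / 2 = 2 * n := by simp; omega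
    rw [this]
    simp [pow_mul]
  generalize hTdef : σ.permMatrix F = T at *
  have hconj : X * (T * (X * X)) * Y = T := by
    calc X * (T * (X * X)) * Y = (X * T) * X * (X * Y) := by simp only [mul_assoc]
      _ = T * (Y * X) := by rw [hT, hXY]; simp only [mul_assoc, mul_one]
      _ = T := by rw [hYX, mul_one]
  have hdXY : X.det * Y.det = 1 := by rw [← Matrix.det_mul, hXY, Matrix.det_one]
  have hdP : (T * (X * X)).det = 1 := by
    have := congrArg Matrix.det hconj
    rw [Matrix.det_mul, Matrix.det_mul, hdT] at this
    linear_combination this - (T * (X * X)).det * hdXY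
  let π₁ : Matrix.SpecialLinearGroup (Fin (4 * n)) F := ⟨T, hdT⟩
  let π₂ : Matrix.SpecialLinearGroup (Fin (4 * n)) F := ⟨T * (X * X), hdP⟩
  refine ⟨π₁ * π₂, π₁, π₂, ?_, ⟨σ, 1, hσ, hfix, ?_⟩, ⟨σ, ⟨X, Y, hXY, hYX⟩, hσ, hfix, ?_⟩, rfl⟩
  · rw [← hord]
    have hcoe : ((π₁ * π₂ : Matrix.SpecialLinearGroup (Fin (4 * n)) F) :
        Matrix (Fin (4 * n)) (Fin (4 * n)) F) = X * X := by
      change T * (T * (X * X)) = X * X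
      rw [← mul_assoc, hTT, one_mul]
    rw [← hcoe]
    apply orderOf_eq_orderOf_iff.mpr
    intro k
    rw [← Matrix.SpecialLinearGroup.coe_pow, ← Matrix.SpecialLinearGroup.coe_one]
    exact Subtype.ext_iff
  · rw [hTdef]; simp [π₁]
  · rw [hTdef]; exact hconj

/-- Let `n ≥ 1`, `F` a finite field of cardinality `q`, and `p` an odd prime which is a
primitive prime divisor of `q^{4n} - 1`. Then some element `ψ ∈ SL(4n, F)` of order `p`
is a product of two elements of the class `C(4n, q)`. -/
theorem stmt_12 (n : ℕ) (hn : 1 ≤ n) (F : Type*) [Field F] [Fintype F]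
    (p : ℕ) (hp : p.Prime) (hodd : Odd p)
    (hdvd : p ∣ Fintype.card F ^ (4 * n) - 1)
    (hppd : ∀ k, 1 ≤ k → k < 4 * n → ¬ p ∣ Fintype.card F ^ k - 1) :
    ∃ ψ π₁ π₂ : Matrix.SpecialLinearGroup (Fin (4 * n)) F,
      orderOf ψ = p ∧ MemC (4 * n) F π₁ ∧ MemC (4 * n) F π₂ ∧ ψ = π₁ * π₂ := by
  classical
  set q := Fintype.card F with hq
  obtain ⟨r, hr⟩ := CharP.exists F
  have : Fact r.Prime := ⟨CharP.char_is_prime F r⟩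
  have : NeZero (4 * n) := ⟨by omega⟩
  let K := FiniteField.Extension F r (4 * n)
  let : Fintype K := Fintype.ofFinite K
  have hcardK : Fintype.card K = q ^ (4 * n) := by
    rw [Fintype.card_eq_nat_card, FiniteField.natCard_extension, Nat.card_eq_fintype_card]
  have hq1 : 1 < q := Fintype.one_lt_card
  have : Fact p.Prime := ⟨hp⟩
  obtain ⟨u, hu⟩ := exists_prime_orderOf_dvd_card (G := Kˣ) p
    (by rw [Fintype.card_units, hcardK]; exact hdvd)
  let τ : Gal(K/F) := FiniteField.Extension.frob F r (4 * n) ^ (2 * n)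
  have hτ : ∀ x, τ x = x ^ (q ^ (2 * n)) := by
    intro x
    simp only [τ]
    rw [FiniteField.Extension.frob_iterate_apply, Nat.card_eq_fintype_card]
  have hττ : τ * τ = 1 := by
    ext x
    rw [AlgEquiv.mul_apply, hτ, hτ, ← pow_mul, ← pow_add, show 2 * n + 2 * n = 4 * n by ring, ← hcardK]
    exact FiniteField.pow_card x
  -- `τ` inverts `u`
  have hdv : p ∣ q ^ (2 * n) + 1 := by
    have h1 : q ^ (4 * n) - 1 = (q ^ (2 * n) + 1) * (q ^ (2 * n) - 1) := by
      rw [← Nat.sq_sub_sq, ← pow_mul]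
      norm_num
      ring_nf
    rw [h1] at hdvd
    exact (hp.dvd_mul.mp hdvd).resolve_right (hppd _ (by omega) (by omega))
  have huinv : u ^ (q ^ (2 * n)) * u = 1 := by
    rw [← pow_succ]
    exact orderOf_dvd_iff_pow_eq_one.mp (hu ▸ hdv)
  obtain ⟨m, hm⟩ := hodd
  have hup : u ^ p = 1 := hu ▸ pow_orderOf_eq_one u
  let v : Kˣ := u ^ (m + 1)
  have hvv : v * v = u := by
    rw [← pow_add, show m + 1 + (m + 1) = p + 1 by omega, pow_succ, hup, one_mul]
  have hvinv : v ^ (q ^ (2 * n)) * v = 1 := by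
    rw [← pow_mul, mul_comm (m + 1), pow_mul, ← mul_pow, huinv, one_pow]
  have hτv : τ (v : K) = ((v⁻¹ : Kˣ) : K) := by
    rw [hτ, ← Units.val_pow_eq_pow_val, eq_inv_of_mul_eq_one_left hvinv]
  have hτ1 : τ ≠ 1 := by
    intro h
    have h2 := hτ (u : K)
    rw [h, AlgEquiv.one_apply, ← Units.val_pow_eq_pow_val, Units.val_inj] at h2
    rw [← h2, ← pow_two, ← orderOf_dvd_iff_pow_eq_one, hu] at huinv
    have := Nat.le_of_dvd (by norm_num) huinv
    have := hp.two_le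
    omega
  let e : Gal(K/F) ≃ Fin (4 * n) := Fintype.equivFinOfCardEq
    (FiniteField.card_algEquiv_extension F r (4 * n))
  let b : Module.Basis (Fin (4 * n)) F K := (IsGalois.normalBasis F K).reindex e
  let σ : Equiv.Perm (Fin (4 * n)) := e.permCongr (Equiv.mulLeft τ)
  have hσ2 : σ ^ 2 = 1 := by
    ext i
    simp [σ, pow_two, ← mul_assoc, hττ]
  have hσf : ∀ i, σ i ≠ i := by
    intro i hi
    apply hτ1
    have : τ * e.symm i = e.symm i := by
      apply e.injective
      simpa [σ] using hi
    simpa using this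
  have hτb : ∀ i, τ (b i) = b (σ i) := by
    intro i
    simp only [b, σ, Module.Basis.reindex_apply, Equiv.permCongr_apply, Equiv.symm_apply_apply,
      Equiv.coe_mulLeft]
    rw [IsGalois.normalBasis_apply (τ * e.symm i), IsGalois.normalBasis_apply (e.symm i),
      AlgEquiv.mul_apply]
  have hσσ : ∀ i, σ (σ i) = i := fun i => by
    have := congrArg (fun s : Equiv.Perm _ => s i) hσ2
    simpa [pow_two] using this
  have hTm : LinearMap.toMatrixAlgEquiv b (τ.toLinearMap) = σ.permMatrix F := by
    ext i j
    rw [LinearMap.toMatrixAlgEquiv_apply]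
    simp only [AlgEquiv.toLinearMap_apply, hτb, Module.Basis.repr_self]
    unfold Equiv.Perm.permMatrix
    rw [PEquiv.toMatrix_apply, Finsupp.single_apply]
    have : σ j = i ↔ σ i = j := ⟨fun h => h ▸ hσσ j, fun h => h ▸ hσσ i⟩
    simp [this]
  have hlm : ∀ x : K, Algebra.leftMulMatrix b x =
      LinearMap.toMatrixAlgEquiv b (Algebra.lmul F K x) := fun x => rfl
  refine stmt_12_aux n F p σ hσ2 hσf (Algebra.leftMulMatrix b (v : K))
    (Algebra.leftMulMatrix b ((v⁻¹ : Kˣ) : K)) ?_ ?_ ?_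
  · rw [← map_mul, Units.mul_inv, map_one]
  · rw [← hTm, hlm, hlm, ← map_mul, ← map_mul]
    congr 1
    ext x
    simp only [Module.End.mul_apply, AlgEquiv.toLinearMap_apply, Algebra.coe_lmul_eq_mul,
      LinearMap.mul_apply', map_mul]
    rw [← hτv, ← AlgEquiv.mul_apply τ τ, hττ, AlgEquiv.one_apply]
  · rw [← map_mul, ← Units.val_mul, hvv, ← hu, ← orderOf_units (y := u)]
    exact orderOf_injective (Algebra.leftMulMatrix b).toRingHom.toMonoidHom
      (Algebra.leftMulMatrix_injective b) _
end

section
/- Let m = 4n for some n ≥ 1 and let q be a prime power. Let C(m, q) be the set of elements of SL(m, GF(q)) that are conjugate in GL(m, GF(q)) to the permutation matrix of a fixed-point-free involution of the index set {1, …, m}. Then for every φ ∈ SL(m, GF(q)) there exist π_1, …, π_10 ∈ C(m, q) such that φ = π_1 π_2 ⋯ π_10. -/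
namespace Ten

open Matrix

section A
variable {ι F : Type*} [Fintype ι] [DecidableEq ι] [Field F]

/-- The block swap matrix. -/
def S (ι F : Type*) [DecidableEq ι] [Field F] : Matrix (ι ⊕ ι) (ι ⊕ ι) F :=
  fromBlocks 0 1 1 0

/-- Conjugates of the block swap. -/
def InC (x : Matrix (ι ⊕ ι) (ι ⊕ ι) F) : Prop :=
  ∃ g h : Matrix (ι ⊕ ι) (ι ⊕ ι) F, g * h = 1 ∧ h * g = 1 ∧ x = g * S ι F * h

/-- Products of `j` conjugates of the block swap. -/
def Prd : ℕ → Matrix (ι ⊕ ι) (ι ⊕ ι) F → Prop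
  | 0, x => x = 1
  | j + 1, x => ∃ y z, InC y ∧ Prd j z ∧ x = y * z

theorem S_sq : S ι F * S ι F = 1 := by
  simp [S, fromBlocks_multiply]

theorem inC_of {g h x : Matrix (ι ⊕ ι) (ι ⊕ ι) F} (hg : g * h = 1) (hx : x * g = g * S ι F) :
    InC x := by
  refine ⟨g, h, hg, mul_eq_one_comm.mp hg, ?_⟩
  rw [← hx, mul_assoc, hg, mul_one]

theorem InC.sq {x : Matrix (ι ⊕ ι) (ι ⊕ ι) F} (hx : InC x) : x * x = 1 := by
  obtain ⟨g, h, h1, h2, rfl⟩ := hx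
  calc g * S ι F * h * (g * S ι F * h) = g * S ι F * (h * g) * S ι F * h := by
        simp only [mul_assoc]
    _ = 1 := by rw [h2, mul_one, mul_assoc g, S_sq, mul_one, h1]

theorem InC.conj {x : Matrix (ι ⊕ ι) (ι ⊕ ι) F} (hx : InC x) {a b : Matrix (ι ⊕ ι) (ι ⊕ ι) F}
    (hab : a * b = 1) : InC (a * x * b) := by
  obtain ⟨g, h, h1, h2, rfl⟩ := hx
  have hba := mul_eq_one_comm.mp hab
  refine ⟨a * g, h * b, ?_, ?_, ?_⟩
  · calc a * g * (h * b) = a * (g * h) * b := by simp only [mul_assoc]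
      _ = 1 := by rw [h1, mul_one, hab]
  · calc h * b * (a * g) = h * (b * a) * g := by simp only [mul_assoc]
      _ = 1 := by rw [hba, mul_one, h2]
  · simp only [mul_assoc]

theorem Prd.mul {i j : ℕ} {x y : Matrix (ι ⊕ ι) (ι ⊕ ι) F} (hx : Prd i x) (hy : Prd j y) :
    Prd (i + j) (x * y) := by
  induction i generalizing x with
  | zero =>
    have : x = 1 := hx
    subst this
    simpa using hy
  | succ i ih =>
    obtain ⟨u, v, hu, hv, rfl⟩ := hx
    rw [Nat.add_right_comm]
    exact ⟨u, v * y, hu, ih hv, mul_assoc _ _ _⟩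

theorem InC.prd {x : Matrix (ι ⊕ ι) (ι ⊕ ι) F} (hx : InC x) : Prd 1 x :=
  ⟨x, 1, hx, rfl, (mul_one _).symm⟩

theorem Prd.conj {j : ℕ} {x a b : Matrix (ι ⊕ ι) (ι ⊕ ι) F} (hx : Prd j x)
    (hab : a * b = 1) : Prd j (a * x * b) := by
  have hba := mul_eq_one_comm.mp hab
  induction j generalizing x with
  | zero =>
    have : x = 1 := hx
    subst this
    simp [Prd, hab]
  | succ i ih =>
    obtain ⟨u, v, hu, hv, rfl⟩ := hx
    refine ⟨a * u * b, a * v * b, hu.conj hab, ih hv, ?_⟩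
    calc a * (u * v) * b = a * u * 1 * v * b := by simp only [mul_assoc, mul_one]
      _ = _ := by rw [← hba]; simp only [mul_assoc]

/-- Antidiagonal elements. -/
theorem inC_anti {A B : Matrix ι ι F} (h : A * B = 1) : InC (fromBlocks 0 A B 0) := by
  have h' := mul_eq_one_comm.mp h
  refine inC_of (g := fromBlocks A 0 0 1) (h := fromBlocks B 0 0 1) ?_ ?_
  · simp [fromBlocks_multiply, h]
  · simp [fromBlocks_multiply, S, h']

theorem inC_S : InC (S ι F) := inC_anti (mul_one _)

theorem U_mul (A B : Matrix ι ι F) :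
    (fromBlocks 1 A 0 1 : Matrix (ι ⊕ ι) (ι ⊕ ι) F) * fromBlocks 1 B 0 1 =
      fromBlocks 1 (A + B) 0 1 := by
  simp [fromBlocks_multiply, add_comm]

theorem U_inv (A : Matrix ι ι F) :
    (fromBlocks 1 A 0 1 : Matrix (ι ⊕ ι) (ι ⊕ ι) F) * fromBlocks 1 (-A) 0 1 = 1 := by
  simp [U_mul]

theorem prd_U_odd (h2 : (2 : F) ≠ 0) (A : Matrix ι ι F) : Prd 2 (fromBlocks 1 A 0 1) := by
  have hd : InC (fromBlocks 1 0 0 (-1) : Matrix (ι ⊕ ι) (ι ⊕ ι) F) := by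
    refine inC_of (g := fromBlocks 1 1 1 (-1))
      (h := (2 : F)⁻¹ • fromBlocks 1 1 1 (-1)) ?_ ?_
    · have : (2 : F)⁻¹ * 2 = 1 := inv_mul_cancel₀ h2
      rw [Matrix.mul_smul, fromBlocks_multiply]
      have h3 : (2 : F)⁻¹ • (1 + 1 : Matrix ι ι F) = 1 := by
        rw [← two_smul F, smul_smul, this, one_smul]
      simp [fromBlocks_smul, h3, -smul_add]
    · simp [fromBlocks_multiply, S]
  have e2 := hd.conj (U_inv ((-(2 : F)⁻¹) • A))
  have h3 : (2 : F)⁻¹ • A + (2 : F)⁻¹ • A = A := by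
    rw [← add_smul, ← two_mul, mul_inv_cancel₀ h2, one_smul]
  have e3 : fromBlocks 1 A 0 1 = (fromBlocks 1 0 0 (-1) : Matrix (ι ⊕ ι) (ι ⊕ ι) F) *
      (fromBlocks 1 (-(2 : F)⁻¹ • A) 0 1 * fromBlocks 1 0 0 (-1) *
        fromBlocks 1 (-(-(2 : F)⁻¹ • A)) 0 1) := by
    simp [fromBlocks_multiply, h3]
  rw [e3]
  exact hd.prd.mul e2.prd

theorem inC_U_even (h2 : (2 : F) = 0) {A B : Matrix ι ι F} (h : A * B = 1) :
    InC (fromBlocks 1 A 0 1) := by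
  have hA : A + A = 0 := by rw [← two_smul F, h2, zero_smul]
  have h' := mul_eq_one_comm.mp h
  refine inC_of (g := fromBlocks 0 A 1 1) (h := fromBlocks (-B) 1 B 0) ?_ ?_
  · simp [fromBlocks_multiply, h]
  · simp [fromBlocks_multiply, S, hA]

/-- Index types that split in two halves: every matrix is a sum of two invertible ones. -/
theorem sum_two_units {κ : Type*} [Fintype κ] [DecidableEq κ] (f : ι ≃ κ ⊕ κ) (A : Matrix ι ι F) :
    ∃ A1 B1 A2 B2 : Matrix ι ι F, A1 * B1 = 1 ∧ A2 * B2 = 1 ∧ A = A1 + A2 := by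
  obtain ⟨L, L', D, hD⟩ := Matrix.Pivot.exists_list_transvec_mul_diagonal_mul_list_transvec A
  set P := (L.map TransvectionStruct.toMatrix).prod
  set Q := (L'.map TransvectionStruct.toMatrix).prod
  have hP : IsUnit P.det := by simp [P]
  have hQ : IsUnit Q.det := by simp [Q]
  let D1 : Matrix κ κ F := diagonal fun i => D (f.symm (Sum.inl i))
  let D2 : Matrix κ κ F := diagonal fun i => D (f.symm (Sum.inr i))
  let r := reindexAlgEquiv F F f.symm
  have hr : diagonal D = r (fromBlocks 0 1 1 D2) + r (fromBlocks D1 (-1) (-1) 0) := by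
    rw [← map_add, fromBlocks_add]
    apply (reindexAlgEquiv F F f).injective
    simp only [r, coe_reindexAlgEquiv]
    ext i j
    rcases i with i | i <;> rcases j with j | j <;> simp [D1, D2, diagonal_apply]
  have h1 : r (fromBlocks 0 1 1 D2) * r (fromBlocks (-D2) 1 1 0) = 1 := by
    rw [← map_mul]; simp [fromBlocks_multiply]
  have h2 : r (fromBlocks D1 (-1) (-1) 0) * r (fromBlocks 0 (-1) (-1) (-D1)) = 1 := by
    rw [← map_mul]; simp [fromBlocks_multiply]
  have key : ∀ X Y : Matrix ι ι F, X * Y = 1 → (P * X * Q) * (Q⁻¹ * Y * P⁻¹) = 1 := by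
    intro X Y h
    calc _ = P * (X * (Q * Q⁻¹) * Y) * P⁻¹ := by simp only [mul_assoc]
      _ = 1 := by rw [mul_nonsing_inv _ hQ, mul_one, h, mul_one, mul_nonsing_inv _ hP]
  refine ⟨_, _, _, _, key _ _ h1, key _ _ h2, ?_⟩
  rw [hD, hr, mul_add, add_mul]

theorem prd_U {κ : Type*} [Fintype κ] [DecidableEq κ] (f : ι ≃ κ ⊕ κ) (A : Matrix ι ι F) :
    Prd 2 (fromBlocks 1 A 0 1) := by
  by_cases h2 : (2 : F) = 0
  · obtain ⟨A1, B1, A2, B2, h1, h2', rfl⟩ := sum_two_units f A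
    rw [← U_mul]
    exact (inC_U_even h2 h1).prd.mul (inC_U_even h2 h2').prd
  · exact prd_U_odd h2 A

/-- Stable range one. -/
theorem stable_range (a c α β : Matrix ι ι F) (h : α * a + β * c = 1) :
    ∃ t k : Matrix ι ι F, (a - t * c) * k = 1 := by
  obtain ⟨L, L', D, hD⟩ := Matrix.Pivot.exists_list_transvec_mul_diagonal_mul_list_transvec a
  set P := (L.map TransvectionStruct.toMatrix).prod
  set Q := (L'.map TransvectionStruct.toMatrix).prod
  have hP : IsUnit P.det := by simp [P]
  have hQ : IsUnit Q.det := by simp [Q]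
  classical
  let π : Matrix ι ι F := diagonal fun i => if D i = 0 then 1 else 0
  let w : Matrix ι ι F := diagonal fun i => if D i = 0 then 1 else (D i)⁻¹
  have hw : (diagonal D + π) * w = 1 := by
    simp only [π, w, diagonal_add, diagonal_mul_diagonal]
    rw [← diagonal_one]; congr 1; ext i
    by_cases hi : D i = 0 <;> simp [hi]
  have hπD : diagonal D * w * π = 0 := by
    simp only [π, w, diagonal_mul_diagonal]
    rw [← diagonal_zero]; congr 1; ext i
    by_cases hi : D i = 0 <;> simp [hi]
  have h' : (Q * α * P) * diagonal D + (Q * β) * (c * Q⁻¹) = 1 := by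
    calc _ = Q * (α * (P * diagonal D * Q) + β * c) * Q⁻¹ := by
          simp only [mul_add, add_mul, mul_assoc, mul_nonsing_inv _ hQ, mul_one]
      _ = 1 := by rw [← hD, h, mul_one, mul_nonsing_inv _ hQ]
  set α' := Q * α * P
  refine ⟨-(P * π * (Q * β)), Q⁻¹ * (w * (1 + π * α' * (diagonal D * w))) * P⁻¹, ?_⟩
  have e1 : a - -(P * π * (Q * β)) * c = P * (diagonal D + π * ((Q * β) * (c * Q⁻¹))) * Q := by
    rw [hD]
    simp only [mul_add, add_mul, mul_assoc, nonsing_inv_mul _ hQ, mul_one, neg_mul, sub_neg_eq_add]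
  have e2 : (Q * β) * (c * Q⁻¹) = 1 - α' * diagonal D := by rw [← h']; abel
  have e3 : (diagonal D + π * (1 - α' * diagonal D)) * w = 1 - π * α' * (diagonal D * w) := by
    have e4 : π * w = 1 - diagonal D * w := by rw [← hw]; noncomm_ring
    calc _ = diagonal D * w + π * w - π * α' * (diagonal D * w) := by noncomm_ring
      _ = _ := by rw [e4]; noncomm_ring
  rw [e1, e2]
  calc _ = P * (diagonal D + π * (1 - α' * diagonal D)) * (Q * Q⁻¹) * w *
          (1 + π * α' * (diagonal D * w)) * P⁻¹ := by simp only [mul_assoc]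
    _ = P * ((diagonal D + π * (1 - α' * diagonal D)) * w *
          (1 + π * α' * (diagonal D * w))) * P⁻¹ := by
        rw [mul_nonsing_inv _ hQ]; simp only [mul_assoc, mul_one]
    _ = 1 := by
        rw [e3]
        have : (1 - π * α' * (diagonal D * w)) * (1 + π * α' * (diagonal D * w)) =
            1 - π * α' * (diagonal D * w * π) * (α' * (diagonal D * w)) := by noncomm_ring
        rw [this, hπD]
        simp [mul_nonsing_inv _ hP]

/-- Commutators of invertible matrices. -/
def Comm (c : Matrix ι ι F) : Prop :=
  ∃ a a' b b' : Matrix ι ι F, a * a' = 1 ∧ b * b' = 1 ∧ c = a * b * a' * b'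

theorem prd_comm {j : ℕ} {c e : Matrix ι ι F} (hc : Comm c)
    (h : Prd j (fromBlocks 0 e 1 0)) : Prd (j + 2) (fromBlocks 0 (c * e) 1 0) := by
  obtain ⟨a, a', b, b', ha, hb, rfl⟩ := hc
  have ha' := mul_eq_one_comm.mp ha
  have hb' := mul_eq_one_comm.mp hb
  have h1 := (((inC_anti ha').prd.mul (inC_anti hb).prd).mul h)
  have h2 : (fromBlocks (a * b) 0 0 1 : Matrix (ι ⊕ ι) (ι ⊕ ι) F) *
      fromBlocks (b' * a') 0 0 1 = 1 := by
    have : a * b * (b' * a') = 1 := by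
      rw [mul_assoc, ← mul_assoc b, hb, one_mul, ha]
    simp [fromBlocks_multiply, this]
  have h3 := h1.conj h2
  rw [show j + 2 = 1 + 1 + j by ring]
  convert h3 using 1
  have : a * (b * (b' * a')) = 1 := by
    rw [← mul_assoc b, hb, one_mul, ha]
  simp [fromBlocks_multiply, mul_assoc, this]

theorem prd_anti_conj {j : ℕ} {e g h : Matrix ι ι F} (hg : g * h = 1)
    (hj : Prd j (fromBlocks 0 e 1 0)) : Prd j (fromBlocks 0 (g * e * h) 1 0) := by
  have h2 : (fromBlocks g 0 0 g : Matrix (ι ⊕ ι) (ι ⊕ ι) F) * fromBlocks h 0 0 h = 1 := by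
    simp [fromBlocks_multiply, hg]
  convert hj.conj h2 using 1
  simp [fromBlocks_multiply, hg]

theorem det_S {κ : Type*} [Fintype κ] [DecidableEq κ] (f : ι ≃ κ ⊕ κ) : (S ι F).det = 1 := by
  have : S ι F = (fromBlocks 1 1 0 1 : Matrix (ι ⊕ ι) (ι ⊕ ι) F) * fromBlocks 1 0 (-1) 1 *
      fromBlocks 1 1 0 1 * fromBlocks (-1) 0 0 1 := by
    simp [S, fromBlocks_multiply]
  rw [this]
  have hc : Fintype.card ι = Fintype.card κ + Fintype.card κ := by
    rw [Fintype.card_congr f, Fintype.card_sum]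
  simp [det_neg, hc, ← two_mul, pow_mul]

theorem InC.det {κ : Type*} [Fintype κ] [DecidableEq κ] (f : ι ≃ κ ⊕ κ)
    {x : Matrix (ι ⊕ ι) (ι ⊕ ι) F} (hx : InC x) : x.det = 1 := by
  obtain ⟨g, h, h1, h2, rfl⟩ := hx
  rw [det_mul, det_mul, det_S f, mul_one, ← det_mul, h1, det_one]

theorem reduction {κ : Type*} [Fintype κ] [DecidableEq κ] (f : ι ≃ κ ⊕ κ)
    (H : ∀ e : Matrix ι ι F, e.det = 1 → Prd 7 (fromBlocks 0 e 1 0))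
    (φ : Matrix (ι ⊕ ι) (ι ⊕ ι) F) (hφ : φ.det = 1) : Prd 10 φ := by
  have hinv : φ⁻¹ * φ = 1 := nonsing_inv_mul _ (by simp [hφ])
  obtain ⟨a, b, c, d, rfl⟩ : ∃ a b c d, φ = fromBlocks a b c d :=
    ⟨_, _, _, _, (fromBlocks_toBlocks φ).symm⟩
  obtain ⟨a1, b1, c1, d1, he⟩ : ∃ a1 b1 c1 d1, (fromBlocks a b c d)⁻¹ = fromBlocks a1 b1 c1 d1 :=
    ⟨_, _, _, _, (fromBlocks_toBlocks _).symm⟩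
  rw [he, fromBlocks_multiply, ← fromBlocks_one, fromBlocks_inj] at hinv
  obtain ⟨t, k, hk⟩ := stable_range a c a1 b1 hinv.1
  have hk' := mul_eq_one_comm.mp hk
  set g' := a - t * c with hg'
  have ha : a = g' + t * c := by rw [hg']; abel
  have hg : (fromBlocks a t c 1 : Matrix (ι ⊕ ι) (ι ⊕ ι) F) *
      fromBlocks k (-(k * t)) (-(c * k)) (1 + c * k * t) = 1 := by
    have : a * k = 1 + t * c * k := by rw [ha, add_mul, hk]
    have h2 : a * (k * t) = t + t * (c * (k * t)) := by
      rw [← mul_assoc, this, add_mul, one_mul]; simp only [mul_assoc]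
    simp [fromBlocks_multiply, mul_assoc, mul_add, h2, this]
  set g : Matrix (ι ⊕ ι) (ι ⊕ ι) F := fromBlocks a t c 1 with hgdef
  set h : Matrix (ι ⊕ ι) (ι ⊕ ι) F :=
    fromBlocks k (-(k * t)) (-(c * k)) (1 + c * k * t) with hhdef
  have hp : InC (g * S ι F * h) := ⟨g, h, hg, mul_eq_one_comm.mp hg, rfl⟩
  set β := k * (b - t * d) with hβ
  set δ := d - c * β with hδ
  have e1 : fromBlocks a b c d = g * fromBlocks 1 β 0 δ := by
    have : a * β + t * δ = b := by
      have h3 : g' * β = b - t * d := by rw [hβ, ← mul_assoc, hk, one_mul]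
      rw [ha, hδ, add_mul, h3]; noncomm_ring
    simp [hgdef, fromBlocks_multiply, this]
    simp [hδ]
  have e2 : g * S ι F * fromBlocks 1 β 0 δ =
      (fromBlocks 1 t 0 1 : Matrix (ι ⊕ ι) (ι ⊕ ι) F) * fromBlocks 0 (g' * δ) 1 0 *
        fromBlocks 1 (c * δ + β) 0 1 := by
    simp [hgdef, fromBlocks_multiply, S]
    rw [ha]
    refine ⟨by noncomm_ring, add_comm _ _⟩
  have e3 : fromBlocks a b c d = (g * S ι F * h) *
      ((fromBlocks 1 t 0 1 : Matrix (ι ⊕ ι) (ι ⊕ ι) F) * fromBlocks 0 (g' * δ) 1 0 *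
        fromBlocks 1 (c * δ + β) 0 1) := by
    rw [← e2]
    calc _ = (g * S ι F * h) * (g * S ι F * h) * (g * fromBlocks 1 β 0 δ) := by
          rw [hp.sq, one_mul, e1]
      _ = g * S ι F * h * (g * S ι F * (h * g) * fromBlocks 1 β 0 δ) := by
          simp only [mul_assoc]
      _ = _ := by rw [mul_eq_one_comm.mp hg, mul_one]
  have hdet : (g' * δ).det = 1 := by
    have e4 : fromBlocks 0 (g' * δ) 1 0 = S ι F * fromBlocks 1 0 0 (g' * δ) := by
      simp [S, fromBlocks_multiply]
    rw [e3, det_mul, hp.det f, e4] at hφ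
    simpa [det_S f] using hφ
  have h7 := H _ hdet
  have h9 := (h7.mul (prd_U f (c * δ + β + t))).conj (U_inv t)
  rw [e3]
  convert hp.prd.mul h9 using 2
  rw [← U_mul (c * δ + β) t]
  calc _ = (fromBlocks 1 t 0 1 : Matrix (ι ⊕ ι) (ι ⊕ ι) F) * fromBlocks 0 (g' * δ) 1 0 * fromBlocks 1 (c * δ + β) 0 1 *
        (fromBlocks 1 t 0 1 * fromBlocks 1 (-t) 0 1) := by rw [U_inv, mul_one]
    _ = _ := by simp only [mul_assoc]

/-- Square-zero unipotents. -/
theorem prd_sqzero {κ : Type*} [Fintype κ] [DecidableEq κ] (f : ι ≃ κ ⊕ κ)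
    {N : Matrix ι ι F} (hN : N * N = 0) : Prd 2 (fromBlocks 1 0 0 (1 + N)) := by
  obtain ⟨π, h1, h2, h3⟩ : ∃ π : Matrix ι ι F, π * π = π ∧ π * N = N ∧ N * π = 0 := by
    obtain ⟨p, hp⟩ := (LinearMap.ker (toLin' N)).exists_isCompl
    let q : (ι → F) →ₗ[F] (ι → F) := (LinearMap.ker (toLin' N)).subtype ∘ₗ
      Submodule.projectionOnto _ _ hp
    have hq : ∀ x, toLin' N x = 0 → q x = x := by
      intro x hx
      exact congrArg Subtype.val (Submodule.projectionOnto_apply_left hp ⟨x, hx⟩)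
    have hq2 : ∀ x, toLin' N (q x) = 0 := fun x =>
      (Submodule.projectionOnto _ _ hp x).2
    refine ⟨LinearMap.toMatrix' q, ?_, ?_, ?_⟩
    · apply toLin'.injective; ext1 x
      simp only [toLin'_mul, toLin'_toMatrix']
      ext1; simp [hq _ (hq2 _)]
    · apply toLin'.injective
      apply LinearMap.ext; intro x
      simp only [toLin'_mul, toLin'_toMatrix', LinearMap.comp_apply]
      apply hq
      rw [← LinearMap.comp_apply, ← toLin'_mul, hN]; simp
    · apply toLin'.injective
      apply LinearMap.ext; intro x
      simp only [toLin'_mul, toLin'_toMatrix', LinearMap.comp_apply, hq2]; simp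
  have hs : (fromBlocks (1 - π) π π (1 - π) : Matrix (ι ⊕ ι) (ι ⊕ ι) F) *
      fromBlocks (1 - π) π π (1 - π) = 1 := by
    simp [fromBlocks_multiply, mul_sub, sub_mul, h1]
  convert (prd_U f N).conj hs using 1
  simp [fromBlocks_multiply, mul_sub, sub_mul, h1, h2, h3, add_mul]
  abel

theorem prd_three_inv {κ : Type*} [Fintype κ] [DecidableEq κ] (f : ι ≃ κ ⊕ κ) (hF : (2 : F) = 0)
    {x y z : Matrix ι ι F} (hx : x * x = 1) (hy : y * y = 1) (hz : z * z = 1) :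
    Prd 7 (fromBlocks 0 (x * y * z) 1 0) := by
  have key : ∀ x : Matrix ι ι F, x * x = 1 → Prd 2 (fromBlocks 1 0 0 x) := by
    intro x hx
    have h2 : ∀ x : Matrix ι ι F, x + x = 0 := fun x => by rw [← two_smul F, hF, zero_smul]
    have : (x - 1) * (x - 1) = 0 := by
      calc _ = x * x + 1 - (x + x) := by noncomm_ring
        _ = 0 := by rw [hx, h2, h2, sub_zero]
    simpa using prd_sqzero f this
  convert inC_S.prd.mul (((key x hx).mul (key y hy)).mul (key z hz)) using 1
  simp [S, fromBlocks_multiply]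

end A

section B
set_option linter.unusedSectionVars false
variable {F : Type*} [Field F]

/-- Bordered matrices. -/
def blk {k : ℕ} (α : F) (y x : Fin k → F) (M : Matrix (Fin k) (Fin k) F) :
    Matrix (Fin (k + 1)) (Fin (k + 1)) F :=
  of (Fin.cons (Fin.cons α y) (fun i => Fin.cons (x i) (M i)))

theorem exists_blk {k : ℕ} (e : Matrix (Fin (k + 1)) (Fin (k + 1)) F) :
    ∃ α y x M, e = blk α y x M := by
  refine ⟨e 0 0, fun j => e 0 j.succ, fun i => e i.succ 0, of fun i j => e i.succ j.succ, ?_⟩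
  ext i j
  refine Fin.cases ?_ (fun i => ?_) i <;> refine Fin.cases ?_ (fun j => ?_) j <;> simp [blk]

@[simp] theorem blk_00 {k : ℕ} (α : F) (y x : Fin k → F) (M : Matrix (Fin k) (Fin k) F) :
    blk α y x M 0 0 = α := by simp [blk]
@[simp] theorem blk_0s {k : ℕ} (α : F) (y x : Fin k → F) (M : Matrix (Fin k) (Fin k) F)
    (j : Fin k) : blk α y x M 0 j.succ = y j := by simp [blk]
@[simp] theorem blk_s0 {k : ℕ} (α : F) (y x : Fin k → F) (M : Matrix (Fin k) (Fin k) F)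
    (i : Fin k) : blk α y x M i.succ 0 = x i := by simp [blk]
@[simp] theorem blk_ss {k : ℕ} (α : F) (y x : Fin k → F) (M : Matrix (Fin k) (Fin k) F)
    (i j : Fin k) : blk α y x M i.succ j.succ = M i j := by simp [blk]

theorem blk_mul {k : ℕ} (α α' : F) (y x y' x' : Fin k → F) (M M' : Matrix (Fin k) (Fin k) F) :
    blk α y x M * blk α' y' x' M' =
      blk (α * α' + y ⬝ᵥ x') (α • y' + y ᵥ* M') (α' • x + M *ᵥ x') (vecMulVec x y' + M * M') := by
  ext i j
  rw [mul_apply, Fin.sum_univ_succ]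
  refine Fin.cases ?_ (fun i => ?_) i <;> refine Fin.cases ?_ (fun j => ?_) j <;>
    simp [dotProduct, vecMul, mulVec, vecMulVec_apply, mul_apply, mul_comm]

theorem blk_one {k : ℕ} : blk (1 : F) 0 0 (1 : Matrix (Fin k) (Fin k) F) = 1 := by
  ext i j
  refine Fin.cases ?_ (fun i => ?_) i <;> refine Fin.cases ?_ (fun j => ?_) j <;>
    simp [one_apply, (Fin.succ_ne_zero _).symm]

theorem blk_diag {k : ℕ} (α : F) (d : Fin k → F) :
    blk α 0 0 (diagonal d) = diagonal (Fin.cons α d) := by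
  ext i j
  refine Fin.cases ?_ (fun i => ?_) i <;> refine Fin.cases ?_ (fun j => ?_) j <;>
    simp [diagonal_apply, (Fin.succ_ne_zero _).symm]

theorem det_blk {k : ℕ} (α : F) (y : Fin k → F) (M : Matrix (Fin k) (Fin k) F) :
    (blk α y 0 M).det = α * M.det := by
  rw [det_succ_column_zero, Fin.sum_univ_succ]
  simp
  left
  congr 1

theorem blk_transpose {k : ℕ} (α : F) (y x : Fin k → F) (M : Matrix (Fin k) (Fin k) F) :
    (blk α y x M)ᵀ = blk α x y Mᵀ := by
  ext i j
  refine Fin.cases ?_ (fun i => ?_) i <;> refine Fin.cases ?_ (fun j => ?_) j <;> simp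

theorem det_blk' {k : ℕ} (α : F) (x : Fin k → F) (M : Matrix (Fin k) (Fin k) F) :
    (blk α 0 x M).det = α * M.det := by
  rw [← det_transpose, blk_transpose, det_blk, det_transpose]

/-- Upper unitriangular. -/
def UT {k : ℕ} (M : Matrix (Fin k) (Fin k) F) : Prop :=
  (∀ i j, j < i → M i j = 0) ∧ ∀ i, M i i = 1

theorem UT.blk {k : ℕ} {M : Matrix (Fin k) (Fin k) F} (h : UT M) (y : Fin k → F) :
    UT (blk 1 y 0 M) := by
  constructor
  · intro i j
    refine Fin.cases ?_ (fun i => ?_) i <;> refine Fin.cases ?_ (fun j => ?_) j <;> simp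
    exact h.1 i j
  · intro i
    refine Fin.cases ?_ (fun i => ?_) i <;> simp [h.2]

theorem UT.exists_blk {k : ℕ} {M : Matrix (Fin (k + 1)) (Fin (k + 1)) F} (h : UT M) :
    ∃ y M', UT M' ∧ M = Ten.blk 1 y 0 M' := by
  obtain ⟨α, y, x, M', rfl⟩ := Ten.exists_blk M
  have h1 : α = 1 := by simpa using h.2 0
  have h2 : x = 0 := by
    ext i; simpa using h.1 i.succ 0 (Fin.succ_pos i)
  subst h1 h2
  refine ⟨y, M', ⟨fun i j hij => ?_, fun i => ?_⟩, rfl⟩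
  · simpa using h.1 i.succ j.succ (by simpa using hij)
  · simpa using h.2 i.succ

theorem UT.one {k : ℕ} : UT (1 : Matrix (Fin k) (Fin k) F) :=
  ⟨fun i j h => by simp [one_apply, h.ne'], fun i => by simp⟩

theorem UT.mul {k : ℕ} {M N : Matrix (Fin k) (Fin k) F} (hM : UT M) (hN : UT N) :
    UT (M * N) := by
  induction k with
  | zero => exact ⟨fun i => i.elim0, fun i => i.elim0⟩
  | succ k ih =>
    obtain ⟨y, M', hM', rfl⟩ := hM.exists_blk
    obtain ⟨z, N', hN', rfl⟩ := hN.exists_blk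
    rw [blk_mul]
    simpa using (ih hM' hN').blk (z + y ᵥ* N')

theorem UT.det {k : ℕ} {M : Matrix (Fin k) (Fin k) F} (hM : UT M) : M.det = 1 := by
  induction k with
  | zero => simp
  | succ k ih =>
    obtain ⟨y, M', hM', rfl⟩ := hM.exists_blk
    rw [det_blk, ih hM', one_mul]

theorem ULDU {k : ℕ} (e : Matrix (Fin k) (Fin k) F) (he : e.det ≠ 0) :
    ∃ (U L U' : Matrix (Fin k) (Fin k) F) (d : Fin k → F),
      UT U ∧ UT Lᵀ ∧ UT U' ∧ e = U * L * diagonal d * U' := by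
  induction k with
  | zero => exact ⟨1, 1, 1, 0, UT.one, by simpa using UT.one, UT.one, by ext i; exact i.elim0⟩
  | succ k ih =>
    obtain ⟨u, u', hu, huu, hne⟩ : ∃ u u' : Matrix (Fin (k + 1)) (Fin (k + 1)) F,
        UT u' ∧ u' * u = 1 ∧ (u * e) 0 0 ≠ 0 := by
      by_cases h0 : e 0 0 = 0
      · obtain ⟨i, hi⟩ : ∃ i, e i 0 ≠ 0 := by
          by_contra! h
          exact he (det_eq_zero_of_column_eq_zero 0 h)
        obtain ⟨α, y, x, M, rfl⟩ := exists_blk e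
        revert hi
        refine Fin.cases (fun h => absurd h0 h) (fun i hi => ?_) i
        refine ⟨blk 1 (Pi.single i 1) 0 1, blk 1 (-Pi.single i 1) 0 1, UT.one.blk _, ?_, ?_⟩
        · rw [blk_mul]; simpa using blk_one
        · rw [blk_mul]
          simp at h0 hi
          simpa [h0] using hi
      · exact ⟨1, 1, UT.one, by simp, by simpa using h0⟩
    have hdet : (u * e).det ≠ 0 := by
      rw [det_mul]
      refine mul_ne_zero ?_ he
      intro h
      have := congrArg Matrix.det huu
      simp [h] at this
    obtain ⟨α, y, x, M, hB⟩ := exists_blk (u * e)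
    rw [hB] at hne hdet
    simp at hne
    have hf : blk α y x M = blk 1 0 (α⁻¹ • x) 1 *
        blk α y 0 (M - vecMulVec (α⁻¹ • x) y) := by
      rw [blk_mul]
      simp [smul_smul, mul_inv_cancel₀ hne]
    rw [hf, det_mul, det_blk, det_blk'] at hdet
    have hS : (M - vecMulVec (α⁻¹ • x) y).det ≠ 0 := by
      intro h; exact hdet (by rw [h]; simp)
    obtain ⟨U, L, U', d, h1, h2, h3, h4⟩ := ih _ hS
    refine ⟨u' * blk 1 0 0 U, blk 1 0 (U⁻¹ *ᵥ (α⁻¹ • x)) L, blk 1 (α⁻¹ • y) 0 U', Fin.cons α d,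
      hu.mul (h1.blk _), ?_, h3.blk _, ?_⟩
    · rw [blk_transpose]; exact h2.blk _
    · have hU : U * U⁻¹ = 1 := mul_nonsing_inv _ (by simp [h1.det])
      have : u * e = blk 1 0 0 U * blk 1 0 (U⁻¹ *ᵥ (α⁻¹ • x)) L * diagonal (Fin.cons α d) *
          blk 1 (α⁻¹ • y) 0 U' := by
        rw [hB, ← blk_diag, blk_mul, blk_mul, blk_mul]
        simp only [mulVec_mulVec, hU]
        have hM : M = vecMulVec (α⁻¹ • x) y + U * L * diagonal d * U' := by rw [← h4]; abel
        have h5 : vecMulVec x (α⁻¹ • y) = vecMulVec (α⁻¹ • x) y := by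
          ext i j; simp [vecMulVec_apply]; ring
        rw [hM]
        simp [smul_smul, mul_inv_cancel₀ hne, -vecMulVec_smul, -smul_vecMulVec, h5]
      calc e = u' * (u * e) := by rw [← mul_assoc, huu, one_mul]
        _ = _ := by rw [this]; simp only [mul_assoc]

/-- The Jordan block. -/
def J : (k : ℕ) → Matrix (Fin (k + 1)) (Fin (k + 1)) F
  | 0 => 1
  | k + 1 => blk 1 (Pi.single 0 1) 0 (J k)

theorem vecMul_J {k : ℕ} (v : Fin (k + 1) → F) :
    v ᵥ* J k = v + Fin.cons 0 (fun j : Fin k => v j.castSucc) := by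
  induction k with
  | zero =>
    ext i; fin_cases i; simp [J]
  | succ k ih =>
    have hv : ∀ j, (v ᵥ* J (k + 1)) j.succ =
        v 0 * (Pi.single 0 1 : Fin (k + 1) → F) j + ((fun i => v i.succ) ᵥ* J k) j := by
      intro j
      simp [J, vecMul, dotProduct, Fin.sum_univ_succ]
    ext i
    refine Fin.cases ?_ (fun i => ?_) i
    · simp [J, vecMul, dotProduct, Fin.sum_univ_succ]
    · rw [hv, ih]
      refine Fin.cases ?_ (fun i => ?_) i
      · simp [add_comm]
      · simp

/-- Regular unitriangular matrices are conjugate to the Jordan block. -/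
theorem conj_J {k : ℕ} (X : Matrix (Fin (k + 1)) (Fin (k + 1)) F) (hX : UT X)
    (hr : ∀ i : Fin k, X i.castSucc i.succ ≠ 0) :
    ∃ T T' : Matrix (Fin (k + 1)) (Fin (k + 1)) F, T * T' = 1 ∧ X * T = T * J k ∧
      T 0 0 ≠ 0 ∧ ∀ i : Fin k, T i.succ 0 = 0 := by
  induction k with
  | zero =>
    refine ⟨1, 1, by simp, ?_, by simp, by simp⟩
    ext i j
    fin_cases i; fin_cases j; simpa [J] using hX.2 0
  | succ k ih =>
    obtain ⟨r, X', hX', rfl⟩ := hX.exists_blk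
    obtain ⟨T, T', h1, h2, h3, h4⟩ := ih X' hX' (fun i => by
      have := hr i.succ
      rwa [Fin.castSucc_succ, blk_ss] at this)
    have hr0 : r 0 ≠ 0 := by
      have := hr 0
      rwa [Fin.castSucc_zero, blk_0s] at this
    have hτ : (r ᵥ* T) 0 ≠ 0 := by
      simp [vecMul, dotProduct, Fin.sum_univ_succ, h4, hr0, h3]
    set w := r ᵥ* T with hw
    let v : Fin (k + 1) → F := Fin.snoc (fun j : Fin k => w j.succ) (0 : F)
    refine ⟨blk (w 0) v 0 T, blk (w 0)⁻¹ (-((w 0)⁻¹ • (v ᵥ* T'))) 0 T', ?_, ?_, by simpa using hτ,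
      by simp⟩
    · rw [blk_mul, ← blk_one]
      simp [hτ, h1, smul_smul]
    · rw [J, blk_mul, blk_mul, h2, vecMul_J]
      have : v + w = w 0 • Pi.single 0 1 + (v + Fin.cons 0 (fun j : Fin k => v j.castSucc)) := by
        ext i
        refine Fin.cases ?_ (fun i => ?_) i
        · simp [add_comm]
        · simp [v]
      simp [← this, ← hw]

theorem comm_UT {k : ℕ} (H3 : ∀ s : F, ∃ y : F, y ≠ 0 ∧ s + y ≠ 0)
    (u : Matrix (Fin (k + 1)) (Fin (k + 1)) F) (hu : UT u) : Comm u := by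
  obtain ⟨Y, hY, hYr, hXr⟩ : ∃ Y : Matrix (Fin (k + 1)) (Fin (k + 1)) F, UT Y ∧
      (∀ i : Fin k, Y i.castSucc i.succ ≠ 0) ∧
      (∀ i : Fin k, (u * Y) i.castSucc i.succ ≠ 0) := by
    induction k with
    | zero => exact ⟨1, UT.one, fun i => i.elim0, fun i => i.elim0⟩
    | succ k ih =>
      obtain ⟨r, u', hu', rfl⟩ := hu.exists_blk
      obtain ⟨Y, h1, h2, h3⟩ := ih u' hu'
      obtain ⟨y, hy, hy'⟩ := H3 (r 0)
      refine ⟨blk 1 (Pi.single 0 y) 0 Y, h1.blk _, fun i => ?_, fun i => ?_⟩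
      · refine Fin.cases ?_ (fun i => ?_) i
        · rw [Fin.castSucc_zero, blk_0s]; simpa using hy
        · rw [Fin.castSucc_succ, blk_ss]; exact h2 i
      · rw [blk_mul]
        refine Fin.cases ?_ (fun i => ?_) i
        · rw [Fin.castSucc_zero, blk_0s]
          have h5 : (r ᵥ* Y) 0 = r 0 := by
            simp only [vecMul, dotProduct, Fin.sum_univ_succ, h1.2]
            simp [h1.1 _ _ (Fin.succ_pos _)]
          simpa [h5, add_comm] using hy'
        · rw [Fin.castSucc_succ, blk_ss]; simpa using h3 i
  obtain ⟨T, T', h1, h2, -⟩ := conj_J Y hY hYr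
  obtain ⟨R, R', h3, h4, -⟩ := conj_J (u * Y) (hu.mul hY) hXr
  have h1' := mul_eq_one_comm.mp h1
  have hYi : Y * Y⁻¹ = 1 := mul_nonsing_inv _ (by simp [hY.det])
  refine ⟨R * T', T * R', Y, Y⁻¹, ?_, hYi, ?_⟩
  · calc R * T' * (T * R') = R * (T' * T) * R' := by simp only [mul_assoc]
      _ = 1 := by rw [h1', mul_one, h3]
  · have e1 : J k = T' * Y * T := by
      rw [mul_assoc, h2, ← mul_assoc, h1', one_mul]
    calc u = u * Y * (R * R') * Y⁻¹ := by rw [h3, mul_one, mul_assoc, hYi, mul_one]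
      _ = (u * Y * R) * R' * Y⁻¹ := by simp only [mul_assoc]
      _ = _ := by rw [h4, e1]; simp only [mul_assoc]

theorem Comm.transpose {ι : Type*} [Fintype ι] [DecidableEq ι] {c : Matrix ι ι F} (h : Comm cᵀ) :
    Comm c := by
  obtain ⟨a, a', b, b', h1, h2, h3⟩ := h
  refine ⟨b'ᵀ, bᵀ, a'ᵀ, aᵀ, ?_, ?_, ?_⟩
  · rw [← transpose_mul, h2, transpose_one]
  · rw [← transpose_mul, h1, transpose_one]
  · rw [← transpose_transpose c, h3]; simp only [transpose_mul, mul_assoc]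

theorem comm_diag {k : ℕ} (d : Fin (k + 1) → F) (hd : ∏ i, d i = 1) : Comm (diagonal d) := by
  have hd0 : ∀ i, d i ≠ 0 := by
    intro i h
    rw [Finset.prod_eq_zero (Finset.mem_univ i) h] at hd
    exact zero_ne_one hd
  have hp : ∀ i, Fin.partialProd d i ≠ 0 := by
    intro i
    induction i using Fin.induction with
    | zero => simp
    | succ i ih => rw [Fin.partialProd_succ]; exact mul_ne_zero ih (hd0 i)
  let f : Fin (k + 1) → F := fun i => Fin.partialProd d i.castSucc
  have hf : ∀ i, f (finRotate _ i) = f i * d i := by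
    intro i
    simp only [f]
    rw [← Fin.partialProd_succ]
    refine Fin.lastCases ?_ (fun i => ?_) i
    · rw [finRotate_last, Fin.succ_last, Fin.castSucc_zero, Fin.partialProd_zero]
      have : Fin.partialProd d (Fin.last (k + 1)) = ∏ i, d i := by
        rw [Fin.partialProd, ← List.prod_ofFn, List.take_of_length_le (by simp)]
      rw [this, hd]
    · congr 1
      rw [finRotate_apply]
      ext; simp
  let B : Matrix (Fin (k + 1)) (Fin (k + 1)) F := of fun i j => if finRotate _ i = j then 1 else 0
  have hB : B * Bᵀ = 1 := by
    ext i j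
    simp [B, mul_apply, one_apply, eq_comm]
  refine ⟨B, Bᵀ, diagonal f, diagonal fun i => (f i)⁻¹, hB, ?_, ?_⟩
  · rw [diagonal_mul_diagonal, ← diagonal_one]; congr 1; ext i; exact mul_inv_cancel₀ (hp _)
  · have : B * diagonal f = diagonal (fun i => f (finRotate _ i)) * B := by
      ext i j
      simp only [mul_diagonal, diagonal_mul, B, of_apply]
      split_ifs with h <;> simp [h]
    rw [this, mul_assoc (diagonal _), hB, mul_one, diagonal_mul_diagonal]
    congr 1; ext i
    rw [hf, mul_comm (f i), mul_assoc, mul_inv_cancel₀ (hp _), mul_one]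
end B

section C
open Polynomial DirectSum

/-- Products of three involutions. -/
def ThreeInv {F V : Type*} [Field F] [AddCommGroup V] [Module F V] (e : Module.End F V) : Prop :=
  ∃ x y z : Module.End F V, x * x = 1 ∧ y * y = 1 ∧ z * z = 1 ∧ e = x * y * z

theorem threeInv_cyclic {F V : Type*} [Field F] [AddCommGroup V] [Module F V]
    (H2 : ∀ y : F, y ≠ 0 → y = 1) {d : ℕ} (b : Module.Basis (Fin (d + 1)) F V)
    (e : Module.End F V) (hs : Function.Surjective e)
    (hb : ∀ i : Fin d, e (b i.castSucc) = b i.succ) : ThreeInv e := by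
  have h20 : (2 : F) = 0 := by
    have := H2 (-1) (by simp)
    linear_combination -this
  let x : Module.End F V := b.constr F (fun i => b (1 - i))
  let y : Module.End F V := b.constr F (fun i => b (-i))
  have hxb : ∀ i, x (b i) = b (1 - i) := fun i => b.constr_basis F _ i
  have hyb : ∀ i, y (b i) = b (-i) := fun i => b.constr_basis F _ i
  have hx : x * x = 1 := b.ext fun i => by simp [hxb]
  have hy : y * y = 1 := b.ext fun i => by simp [hyb]
  let z : Module.End F V := y * x * e
  have hez : e = x * y * z := by
    calc e = x * (y * y) * x * e := by rw [hy, mul_one, hx, one_mul]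
      _ = _ := by simp only [z, mul_assoc]
  have hzs : Function.Surjective z := by
    have h1 : Function.Surjective x := fun v => ⟨x v, by
      rw [← Module.End.mul_apply, hx]; rfl⟩
    have h2 : Function.Surjective y := fun v => ⟨y v, by
      rw [← Module.End.mul_apply, hy]; rfl⟩
    exact (h2.comp h1).comp hs
  have hz1 : ∀ i : Fin d, z (b i.castSucc) = b i.castSucc := by
    intro i
    simp only [z, Module.End.mul_apply, hb, hxb, hyb]
    congr 1
    have : i.succ = i.castSucc + 1 := by ext; simp
    rw [this]; abel
  have hz2 : ∀ w, b.repr w (Fin.last d) = 0 → z w = w := by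
    intro w hw
    conv_lhs => rw [← b.sum_repr w]
    conv_rhs => rw [← b.sum_repr w]
    rw [map_sum]
    refine Finset.sum_congr rfl fun i _ => ?_
    rw [map_smul]
    refine Fin.lastCases ?_ (fun i => ?_) i
    · rw [hw, zero_smul, zero_smul]
    · rw [hz1]
  have hc : b.repr (z (b (Fin.last d))) (Fin.last d) = 1 := by
    apply H2
    intro h0
    have : b.coord (Fin.last d) ∘ₗ z = 0 := by
      refine b.ext fun i => ?_
      refine Fin.lastCases ?_ (fun i => ?_) i
      · simpa using h0
      · simp [hz1, Finsupp.single_apply, Fin.castSucc_ne_last]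
    obtain ⟨w, hw⟩ := hzs (b (Fin.last d))
    have h3 := LinearMap.congr_fun this w
    simp [hw] at h3
  refine ⟨x, y, z, hx, hy, ?_, hez⟩
  refine b.ext fun i => ?_
  refine Fin.lastCases ?_ (fun i => ?_) i
  · have h4 := hz2 (z (b (Fin.last d)) - b (Fin.last d)) (by simp [hc])
    rw [map_sub, sub_eq_iff_eq_add] at h4
    rw [Module.End.mul_apply, h4, Module.End.one_apply]
    have h5 : ∀ v : V, v + v = 0 := fun v => by rw [← two_smul F, h20, zero_smul]
    calc _ = (z (b (Fin.last d)) + z (b (Fin.last d))) - (b (Fin.last d) + b (Fin.last d))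
            + b (Fin.last d) := by abel
      _ = _ := by rw [h5, h5]; simp
  · simp [hz1]

theorem ThreeInv.conj {F V W : Type*} [Field F] [AddCommGroup V] [Module F V]
    [AddCommGroup W] [Module F W] (f : V ≃ₗ[F] W) {e : Module.End F V} (h : ThreeInv e) :
    ThreeInv (f.conj e) := by
  obtain ⟨x, y, z, hx, hy, hz, rfl⟩ := h
  have hm : ∀ a b : Module.End F V, f.conj (a * b) = f.conj a * f.conj b :=
    fun a b => LinearEquiv.conj_comp f b a
  refine ⟨f.conj x, f.conj y, f.conj z, ?_, ?_, ?_, ?_⟩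
  · rw [← hm, hx]; ext; simp
  · rw [← hm, hy]; ext; simp
  · rw [← hm, hz]; ext; simp
  · rw [hm, hm]

theorem threeInv_pi {F ι : Type*} [Field F] {M : ι → Type*} [∀ i, AddCommGroup (M i)]
    [∀ i, Module F (M i)] (e : ∀ i, Module.End F (M i)) (h : ∀ i, ThreeInv (e i)) :
    ThreeInv (LinearMap.pi fun i => e i ∘ₗ LinearMap.proj i : Module.End F (∀ i, M i)) := by
  choose x y z hx hy hz he using h
  refine ⟨LinearMap.pi fun i => x i ∘ₗ LinearMap.proj i,
    LinearMap.pi fun i => y i ∘ₗ LinearMap.proj i,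
    LinearMap.pi fun i => z i ∘ₗ LinearMap.proj i, ?_, ?_, ?_, ?_⟩
  · apply LinearMap.ext; intro v; funext i
    exact LinearMap.congr_fun (hx i) (v i)
  · apply LinearMap.ext; intro v; funext i
    exact LinearMap.congr_fun (hy i) (v i)
  · apply LinearMap.ext; intro v; funext i
    exact LinearMap.congr_fun (hz i) (v i)
  · apply LinearMap.ext; intro v; funext i
    exact LinearMap.congr_fun (he i) (v i)

theorem threeInv_adjoinRoot {F : Type*} [Field F] (H2 : ∀ y : F, y ≠ 0 → y = 1) (q : F[X])
    (hq : q ≠ 0) (hs : Function.Surjective (LinearMap.mulLeft F (AdjoinRoot.root q))) :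
    ThreeInv (LinearMap.mulLeft F (AdjoinRoot.root q)) := by
  let pb := AdjoinRoot.powerBasis hq
  rcases hd : pb.dim with _ | d
  · have : Subsingleton (AdjoinRoot q) := by
      have : IsEmpty (Fin pb.dim) := by rw [hd]; infer_instance
      exact pb.basis.repr.toEquiv.subsingleton
    refine ⟨1, 1, 1, by simp, by simp, by simp, ?_⟩
    apply LinearMap.ext; intro v; exact Subsingleton.elim _ _
  · refine threeInv_cyclic H2 (pb.basis.reindex (finCongr hd)) _ hs ?_
    intro i
    simp [pb, pow_succ']

theorem threeInv_all {F V : Type*} [Field F] [AddCommGroup V] [Module F V] [FiniteDimensional F V]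
    (H2 : ∀ y : F, y ≠ 0 → y = 1) (e : Module.End F V) (he : Function.Surjective e) :
    ThreeInv e := by
  classical
  have htor : Module.IsTorsion F[X] (Module.AEval' e) :=
    Module.AEval.isTorsion_of_finiteDimensional F V e
  obtain ⟨ι, _, p, hp, n, ⟨l⟩⟩ := Module.equiv_directSum_of_isTorsion htor
  let l2 : Module.AEval' e ≃ₗ[F[X]] (∀ i, F[X] ⧸ Submodule.span F[X] {p i ^ n i}) :=
    l.trans (DirectSum.linearEquivFunOnFintype F[X] ι _)
  let L : V ≃ₗ[F] (∀ i, AdjoinRoot (p i ^ n i)) :=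
    (Module.AEval'.of e).trans (l2.restrictScalars F)
  have hL : ∀ v i, L (e v) i = AdjoinRoot.root (p i ^ n i) * L v i := by
    intro v i
    change l2 (Module.AEval'.of e (e v)) i = _
    rw [← Module.AEval'.X_smul_of, map_smul]
    rfl
  let E : Module.End F (∀ i, AdjoinRoot (p i ^ n i)) :=
    LinearMap.pi fun i => LinearMap.mulLeft F (AdjoinRoot.root (p i ^ n i)) ∘ₗ LinearMap.proj i
  have hE : ThreeInv E := by
    refine threeInv_pi _ fun i => threeInv_adjoinRoot H2 _ (pow_ne_zero _ (hp i).ne_zero) ?_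
    intro w
    obtain ⟨v, hv⟩ := he (L.symm (Pi.single i w))
    refine ⟨L v i, ?_⟩
    rw [LinearMap.mulLeft_apply, ← hL, hv]; simp
  have : e = L.symm.conj E := by
    apply LinearMap.ext; intro v
    apply L.injective
    funext i
    rw [hL]
    simp [LinearEquiv.conj_apply, E]
  rw [this]
  exact hE.conj _

theorem threeInv_matrix {F ι : Type*} [Field F] [Fintype ι] [DecidableEq ι]
    (H2 : ∀ y : F, y ≠ 0 → y = 1) (e : Matrix ι ι F) (he : e.det = 1) :
    ∃ x y z : Matrix ι ι F, x * x = 1 ∧ y * y = 1 ∧ z * z = 1 ∧ e = x * y * z := by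
  have hs : Function.Surjective (Matrix.toLinAlgEquiv' e) := by
    intro v
    refine ⟨Matrix.toLinAlgEquiv' e⁻¹ v, ?_⟩
    rw [← Module.End.mul_apply, ← map_mul, Matrix.mul_nonsing_inv _ (by simp [he])]
    simp
  obtain ⟨x, y, z, hx, hy, hz, h⟩ := threeInv_all H2 (Matrix.toLinAlgEquiv' e) hs
  refine ⟨Matrix.toLinAlgEquiv'.symm x, Matrix.toLinAlgEquiv'.symm y,
    Matrix.toLinAlgEquiv'.symm z, ?_, ?_, ?_, ?_⟩
  · rw [← map_mul, hx, map_one]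
  · rw [← map_mul, hy, map_one]
  · rw [← map_mul, hz, map_one]
  · rw [← map_mul, ← map_mul, ← h, AlgEquiv.symm_apply_apply]
end C

section D

theorem seven {F : Type*} [Field F] {k : ℕ} {κ : Type*} [Fintype κ] [DecidableEq κ]
    (f : Fin (k + 1) ≃ κ ⊕ κ) (e : Matrix (Fin (k + 1)) (Fin (k + 1)) F) (he : e.det = 1) :
    Prd 7 (fromBlocks 0 e 1 0) := by
  by_cases H3 : ∀ s : F, ∃ y : F, y ≠ 0 ∧ s + y ≠ 0
  · obtain ⟨U, L, U', d, hU, hL, hU', rfl⟩ := ULDU e (by rw [he]; exact one_ne_zero)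
    have hd : ∏ i, d i = 1 := by
      rw [det_mul, det_mul, det_mul, hU.det, hU'.det, ← det_transpose L, hL.det,
        det_diagonal] at he
      simpa using he
    have h0 : Prd 1 (fromBlocks 0 1 1 0 : Matrix (Fin (k + 1) ⊕ Fin (k + 1)) _ F) := inC_S.prd
    have h1 := prd_comm (comm_UT H3 _ (hU'.mul hU)) h0
    have h2 := prd_comm (comm_diag d hd) h1
    have h3 := prd_comm (Comm.transpose (comm_UT H3 _ hL)) h2
    have hUi : U * U⁻¹ = 1 := mul_nonsing_inv _ (by simp [hU.det])
    have h4 := prd_anti_conj hUi h3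
    convert h4 using 2
    rw [mul_one]
    calc U * L * diagonal d * U' = U * L * diagonal d * U' * (U * U⁻¹) := by rw [hUi, mul_one]
      _ = _ := by simp only [mul_assoc]
  · push Not at H3
    obtain ⟨s, hs⟩ := H3
    have h1 := hs 1 one_ne_zero
    have H2 : ∀ y : F, y ≠ 0 → y = 1 := fun y hy => by
      have := hs y hy
      rw [← h1] at this
      exact add_left_cancel this
    have hF : (2 : F) = 0 := by
      have := H2 (-1) (neg_ne_zero.mpr one_ne_zero)
      linear_combination -this
    obtain ⟨x, y, z, hx, hy, hz, rfl⟩ := threeInv_matrix H2 e he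
    exact prd_three_inv f hF hx hy hz

theorem inC_memC {F : Type*} [Field F] {m : ℕ} {ι : Type*} [Fintype ι] [DecidableEq ι]
    (t : Fin m ≃ ι ⊕ ι) (x : SpecialLinearGroup (Fin m) F)
    (hx : InC (reindexAlgEquiv F F t (x : Matrix (Fin m) (Fin m) F))) : MemC m F x := by
  obtain ⟨g, h, hgh, hhg, hx⟩ := hx
  let R := reindexAlgEquiv F F t
  have e1 : R.symm h * R.symm g = 1 := by rw [← map_mul, hhg, map_one]
  have e2 : R.symm g * R.symm h = 1 := by rw [← map_mul, hgh, map_one]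
  refine ⟨(t.trans (Equiv.sumComm ι ι)).trans t.symm, ⟨R.symm h, R.symm g, e1, e2⟩, ?_, ?_, ?_⟩
  · ext i
    simp [pow_two]
  · intro i hi
    simp only [Equiv.trans_apply, Equiv.symm_apply_eq] at hi
    rcases ht : t i with a | a <;> simp [ht] at hi
  · have hx' : (x : Matrix (Fin m) (Fin m) F) = R.symm g * R.symm (S ι F) * R.symm h := by
      rw [← map_mul, ← map_mul, ← hx]
      exact (R.symm_apply_apply _).symm
    change R.symm h * (x : Matrix (Fin m) (Fin m) F) * R.symm g = _
    rw [hx']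
    calc _ = (R.symm h * R.symm g) * R.symm (S ι F) * (R.symm h * R.symm g) := by
          simp only [mul_assoc]
      _ = R.symm (S ι F) := by rw [e1, one_mul, mul_one]
      _ = _ := by
        ext i j
        change S ι F (t i) (t j) = _
        have : j = t.symm (t j) := by simp
        generalize t j = b at *
        subst this
        simp only [Equiv.Perm.permMatrix, PEquiv.toMatrix_apply, Equiv.toPEquiv_apply]
        rcases ht : t i with a | a <;> rcases b with c | c <;>
          simp [S, one_apply, eq_comm, ht]

theorem prd_list {F : Type*} [Field F] {m : ℕ} {ι κ : Type*} [Fintype ι] [DecidableEq ι]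
    [Fintype κ] [DecidableEq κ] (f : ι ≃ κ ⊕ κ)
    (t : Fin m ≃ ι ⊕ ι) (j : ℕ) (x : SpecialLinearGroup (Fin m) F)
    (hx : Prd j (reindexAlgEquiv F F t (x : Matrix (Fin m) (Fin m) F))) :
    ∃ π : Fin j → SpecialLinearGroup (Fin m) F,
      (∀ i, MemC m F (π i)) ∧ x = (List.ofFn π).prod := by
  induction j generalizing x with
  | zero =>
    refine ⟨fun i => i.elim0, fun i => i.elim0, ?_⟩
    have h : reindexAlgEquiv F F t (x : Matrix (Fin m) (Fin m) F) = 1 := hx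
    have h' : (x : Matrix (Fin m) (Fin m) F) = 1 :=
      (reindexAlgEquiv F F t).injective (by rw [h, map_one])
    apply Subtype.ext
    simpa using h'
  | succ j ih =>
    obtain ⟨y, z, hy, hz, hxyz⟩ := hx
    let R := reindexAlgEquiv F F t
    have hdy : (R.symm y).det = 1 := by
      rw [← hy.det f]
      exact det_reindex_self t.symm y
    let Y : SpecialLinearGroup (Fin m) F := ⟨R.symm y, hdy⟩
    have hYy : R (Y : Matrix (Fin m) (Fin m) F) = y := R.apply_symm_apply y
    have hz' : R ((Y⁻¹ * x : SpecialLinearGroup (Fin m) F) : Matrix (Fin m) (Fin m) F) = z := by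
      have h0 : (x : Matrix (Fin m) (Fin m) F) = (Y : Matrix (Fin m) (Fin m) F) *
          ((Y⁻¹ * x : SpecialLinearGroup (Fin m) F) : Matrix (Fin m) (Fin m) F) :=
        congrArg Subtype.val (mul_inv_cancel_left Y x).symm
      have h1 : R (x : Matrix (Fin m) (Fin m) F) = y * z := hxyz
      rw [h0, map_mul, hYy] at h1
      have h2 := congrArg (y * ·) h1
      simpa only [← mul_assoc, hy.sq, one_mul] using h2
    obtain ⟨π, hπ, hprod⟩ := ih (Y⁻¹ * x) (by rw [← hz'] at hz; exact hz)
    refine ⟨Fin.cons Y π, ?_, ?_⟩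
    · intro i
      refine Fin.cases ?_ (fun i => ?_) i
      · exact inC_memC t Y (by rw [← hYy] at hy; exact hy)
      · simpa using hπ i
    · rw [List.ofFn_succ, List.prod_cons]
      simp only [Fin.cons_zero, Fin.cons_succ]
      rw [← hprod, mul_inv_cancel_left]

theorem main {F : Type*} [Field F] {m k n : ℕ} (hm : m = (k + 1) + (k + 1)) (hk : k + 1 = n + n)
    (φ : SpecialLinearGroup (Fin m) F) :
    ∃ π : Fin 10 → SpecialLinearGroup (Fin m) F,
      (∀ i, MemC m F (π i)) ∧ φ = (List.ofFn π).prod := by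
  let t : Fin m ≃ Fin (k + 1) ⊕ Fin (k + 1) := (finCongr hm).trans finSumFinEquiv.symm
  let f : Fin (k + 1) ≃ Fin n ⊕ Fin n := (finCongr hk).trans finSumFinEquiv.symm
  refine prd_list f t 10 φ (reduction f (seven f) _ ?_)
  exact (det_reindex_self t _).trans φ.2

end D

end Ten

/-- Let `m = 4n` with `n ≥ 1` and let `F` be a finite field. Every `φ ∈ SL(m, F)` is a
product of ten elements of the class `C(m, q)`. -/
theorem stmt_13 (n : ℕ) (hn : 1 ≤ n) (F : Type*) [Field F] [Fintype F]
    (φ : Matrix.SpecialLinearGroup (Fin (4 * n)) F) :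
    ∃ π : Fin 10 → Matrix.SpecialLinearGroup (Fin (4 * n)) F,
      (∀ i, MemC (4 * n) F (π i)) ∧ φ = (List.ofFn π).prod := by
  exact Ten.main (k := 2 * n - 1) (n := n) (by omega) (by omega) φ
end

section
/- Let (d_n)_{n∈ℕ} be a sequence of integers with d_n ≥ 3 and let (F_n)_{n∈ℕ} be a sequence of finite fields. For each n, let Sp(2d_n, F_n) be the symplectic group of 2d_n × 2d_n matrices M over F_n satisfying M J Mᵀ = J, where J is the block matrix with blocks 0, 1, −1, 0 (1 the d_n × d_n identity), and let G_n = { diag(A, (A⁻¹)ᵀ) : A ∈ SL(d_n, F_n) } ≤ Sp(2d_n, F_n), the subgroup of block-diagonal matrices with blocks A and the inverse transpose of A. Then ∏_{n∈ℕ} Sp(2d_n, F_n) is finitely generated over the subgroup ∏_{n∈ℕ} G_n: there exists a finite subset S of ∏_n Sp(2d_n, F_n) such that ∏_n Sp(2d_n, F_n) = ⟨∏_n G_n ∪ S⟩. -/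
open Matrix

theorem SpX.exists_symm {l : Type*} [DecidableEq l] [Fintype l] {R : Type*} [Field R]
    {A C : Matrix l l R} (hker : ∀ (x : l → R), (A • x = 0) → (C • x = 0) → x = 0)
    (hsymm : Aᵀ * C = Cᵀ * A) :
    ∃ (X : Matrix l l R), X.IsSymm ∧ IsUnit (A + X * C) := by
  rcases exists_rank_normal_form C with ⟨V, U, s, hV, hU, heq⟩
  set P := V * C * U with P_def; set Q := Vᵀ⁻¹ * A * U with Q_def
  set f := fun (x : Matrix l l R) ↦ x.submatrix s.symm s.symm
  have hf (x) : f x = x.submatrix s.symm s.symm := rfl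
  have f_unit {x} : IsUnit x → IsUnit (f x) := (isUnit_submatrix_equiv ..).2
  have f_mul (x y) : f (x * y) = f x * f y := submatrix_mul _ _ _ _ _ s.symm.bijective
  have _ : Invertible V := hV.invertible
  have _ : Invertible U := hU.invertible
  have _ : Invertible (f Vᵀ) := (f_unit (V.isUnit_transpose.2 hV)).invertible
  have con1 (x : Fin C.rank ⊕ Fin (Fintype.card l - C.rank) → R)
      (heq1 : (f Q) • x = 0) (heq2 : (f P) • x = 0) : x = 0 := by
    refine (f_unit hU).smul_left_cancel.1 ?_
    rw [f_mul, f_mul, mul_assoc, mul_smul, IsUnit.smul_eq_zero, mul_smul, hf,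
      smul_eq_mulVec, submatrix_mulVec_equiv, Equiv.symm_symm] at heq1 heq2
    · rw [Equiv.comp_symm_eq, Pi.zero_comp] at heq1 heq2
      exact s.surjective.injective_comp_right <| by simpa using hker _ heq1 heq2
    · exact f_unit hV
    · exact f_unit <| isUnit_nonsing_inv_iff.2 <| V.isUnit_transpose.2 hV
  have con2 : Qᵀ * P = Pᵀ * Q := by
    simp only [P_def, mul_assoc, transpose_mul, transpose_nonsing_inv, transpose_transpose, Q_def,
      inv_mul_cancel_left_of_invertible, mul_inv_cancel_left_of_invertible]
    rw [← mul_assoc Aᵀ, hsymm, mul_assoc]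
  replace con2 : (f Q).toBlocks₁₁ᵀ = (f Q).toBlocks₁₁ ∧ (f Q).toBlocks₁₂ = 0 := by
    apply_fun reindex s s at con2
    rw [reindex_apply, reindex_apply, ← hf, ← hf, f_mul, f_mul Pᵀ, heq, hf,
      ← transpose_submatrix, ← hf Q, ← (f Q).fromBlocks_toBlocks, hf (_)ᵀ, hf
      ((fromBlocks 1 0 0 0).submatrix _ _)] at con2
    simp [fromBlocks_transpose, fromBlocks_multiply] at con2; tauto
  have con3 : IsUnit (f Q).toBlocks₂₂ := by
    refine mulVec_injective_iff_isUnit.1 ?_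
    rw [← coe_mulVecLin, ← LinearMap.ker_eq_bot]
    refine ker_mulVecLin_eq_bot_iff.2 fun x hx ↦ Sum.elim_injective' <|
      (con1 _ ?_ ?_).trans Sum.elim_zero_zero.symm
    · rw [← (f Q).fromBlocks_toBlocks]; simp [hx, con2.2, fromBlocks_mulVec]
    · simp [hf, heq, fromBlocks_mulVec]
  set Y : Matrix (Fin C.rank ⊕ Fin (Fintype.card l - C.rank)) (Fin C.rank ⊕
    Fin (Fintype.card l - C.rank)) R := fromBlocks (1 - (f Q).toBlocks₁₁) 0 0 0 with Y_def
  have hY_symm : Y.IsSymm := by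
    rw [Y_def, isSymm_fromBlocks_iff]
    exact ⟨IsSymm.sub isSymm_one con2.1, by simp⟩
  set X := (f Vᵀ) * Y * (f V) with X_def
  refine ⟨X.submatrix s s, IsSymm.submatrix ?_ s, (isUnit_submatrix_equiv s.symm s.symm).1 ?_⟩
  · simp_rw [X_def, Matrix.IsSymm, transpose_mul, hY_symm.eq, hf, transpose_submatrix,
      transpose_transpose, mul_assoc]
  · have heq' : f (A + X.submatrix s s * C) = (f Vᵀ) * (f Q + Y * (f P)) * f (U⁻¹) := by
      simp_rw [hf, submatrix_add, Pi.add_apply, Q_def, P_def, ← hf, f_mul, hf, mul_add, ← mul_assoc,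
        ← inv_submatrix_equiv, add_mul, mul_assoc _ (U.submatrix _ _), mul_inv_of_invertible]
      simp [X_def]; rfl
    rw [← hf, heq', IsUnit.mul_iff, IsUnit.mul_iff]
    refine ⟨⟨isUnit_of_invertible _, ?_⟩, ?_⟩
    · nth_rw 1 [Y_def, heq, ← (f Q).fromBlocks_toBlocks, con2.2]
      simpa [hf, fromBlocks_multiply, fromBlocks_add]
    · exact f_unit <| isUnit_nonsing_inv_iff.2 hU

namespace SpX

theorem two_squares {F : Type*} [Field F] [Fintype F] (x : F) : ∃ a b : F, a * a + b * b = x := by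
  by_cases h : ringChar F = 2
  · obtain ⟨a, ha⟩ := FiniteField.isSquare_of_char_two h x
    exact ⟨a, 0, by simp [ha]⟩
  · have hc := FiniteField.odd_card_of_char_ne_two h
    obtain ⟨a, b, hab⟩ := @FiniteField.exists_root_sum_quadratic F _ _ _ (Polynomial.X ^ 2)
      (Polynomial.X ^ 2 - Polynomial.C x) (Polynomial.degree_X_pow 2)
      (Polynomial.degree_X_pow_sub_C (by decide) _) hc
    refine ⟨a, b, ?_⟩
    simp only [Polynomial.eval_pow, Polynomial.eval_X, Polynomial.eval_sub,
      Polynomial.eval_C] at hab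
    linear_combination hab

/-- third colour -/
def thr (a b : ℕ) : ℕ := if a ≠ 0 ∧ b ≠ 0 then 0 else if a ≠ 1 ∧ b ≠ 1 then 1 else 2

theorem thr_spec (a b : ℕ) : thr a b ≠ a ∧ thr a b ≠ b ∧ thr a b < 3 := by
  unfold thr; split_ifs <;> omega

/-- partial permutation matrix from class `b` to class `c` -/
def Cmat (R : Type*) [Field R] (k b c : ℕ) : Matrix (Fin k) (Fin k) R :=
  of fun i j => if i.val / (k / 3) = c ∧ j.val / (k / 3) = b ∧
    i.val % (k / 3) = j.val % (k / 3) then 1 else 0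

section
variable {R : Type*} [Field R] {k : ℕ} {a b c : ℕ}

theorem Cmat_mul_self (h : c ≠ b) : Cmat R k b c * Cmat R k b c = 0 := by
  ext i j
  simp only [mul_apply, Cmat, of_apply, Matrix.zero_apply]
  refine Finset.sum_eq_zero fun x _ => ?_
  by_cases hx : x.val / (k / 3) = c
  · have : x.val / (k / 3) ≠ b := by omega
    simp [this]
  · simp [hx]

theorem mul_Cmat {W : Matrix (Fin k) (Fin k) R} (h : c ≠ b')
    (hW : ∀ i j : Fin k, j.val / (k / 3) ≠ b' → W i j = 0) : W * Cmat R k b c = 0 := by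
  ext i j
  simp only [mul_apply, Cmat, of_apply, Matrix.zero_apply]
  refine Finset.sum_eq_zero fun x _ => ?_
  by_cases hx : x.val / (k / 3) = c
  · rw [hW i x (by omega), zero_mul]
  · simp [hx]

theorem CmatT_mul {W : Matrix (Fin k) (Fin k) R} (h : c ≠ a)
    (hW : ∀ i j : Fin k, i.val / (k / 3) ≠ a → W i j = 0) : (Cmat R k b c)ᵀ * W = 0 := by
  have := mul_Cmat (b := b) (W := Wᵀ) h (fun i j hj => hW j i hj)
  have h2 := congrArg Matrix.transpose this
  simpa using h2

theorem CmatT_mul_Cmat (hk : 3 ≤ k) (hc : c < 3) :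
    (Cmat R k b c)ᵀ * Cmat R k b c =
      diagonal fun j : Fin k => if j.val / (k / 3) = b then (1 : R) else 0 := by
  have hm : 0 < k / 3 := by omega
  have h3 : 3 * (k / 3) ≤ k := Nat.mul_div_le k 3
  set m := k / 3 with hmdef
  ext i j
  simp only [mul_apply, Cmat, of_apply, transpose_apply, ← hmdef]
  have hlt : c * m + i.val % m < k := by
    have := Nat.mod_lt i.val hm
    have : (c + 1) * m ≤ 3 * m := Nat.mul_le_mul_right _ (by omega)
    have : (c + 1) * m = c * m + m := by ring
    omega
  have hq : (c * m + i.val % m) / m = c := by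
    rw [mul_comm, Nat.mul_add_div hm, Nat.div_eq_of_lt (Nat.mod_lt _ hm), add_zero]
  have hr : (c * m + i.val % m) % m = i.val % m := by
    rw [mul_comm, Nat.mul_add_mod, Nat.mod_mod]
  rw [Finset.sum_eq_single (⟨c * m + i.val % m, hlt⟩ : Fin k)]
  · simp only [hq, hr, diagonal_apply]
    by_cases hij : i = j
    · subst hij; simp
    · by_cases h1 : i.val / m = b ∧ j.val / m = b ∧ i.val % m = j.val % m
      · exfalso; apply hij
        apply Fin.ext
        rw [← Nat.div_add_mod i.val m, ← Nat.div_add_mod j.val m, h1.1, h1.2.1, h1.2.2]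
      · rw [if_neg hij]
        simp
        tauto
  · intro x _ hx
    by_cases h1 : x.val / m = c ∧ i.val / m = b ∧ x.val % m = i.val % m
    · exfalso; apply hx
      apply Fin.ext
      simp only
      rw [← Nat.div_add_mod x.val m, h1.1, h1.2.2, mul_comm]
    · simp [h1]
  · simp

theorem mul_CmatT_mul_Cmat (hk : 3 ≤ k) (hc : c < 3) {W : Matrix (Fin k) (Fin k) R}
    (hW : ∀ i j : Fin k, j.val / (k / 3) ≠ b → W i j = 0) :
    W * (Cmat R k b c)ᵀ * Cmat R k b c = W := by
  rw [Matrix.mul_assoc, CmatT_mul_Cmat hk hc]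
  ext i j
  rw [mul_diagonal]
  by_cases h : j.val / (k / 3) = b
  · simp [h]
  · simp [h, hW i j h]

theorem lemA {C W : Matrix (Fin k) (Fin k) R} (h1 : C * C = 0) (h2 : Cᵀ * W = 0) (h3 : W * C = 0)
    (h4 : W * Cᵀ * C = W) : (1 + W * Cᵀ).det = 1 ∧
      (1 + W * Cᵀ) * (C + Cᵀ) * (1 + W * Cᵀ)ᵀ = (C + Cᵀ) + (W + Wᵀ) := by
  constructor
  · rw [det_one_add_mul_comm, h2, add_zero, det_one]
  · have h1' : Cᵀ * Cᵀ = 0 := by rw [← transpose_mul, h1, transpose_zero]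
    have h4' : Cᵀ * (C * Wᵀ) = Wᵀ := by
      have := congrArg transpose h4; simpa [Matrix.mul_assoc] using this
    have e1 : (1 + W * Cᵀ) * (C + Cᵀ) = C + Cᵀ + W := by
      rw [add_mul, mul_add (W * Cᵀ), h4, Matrix.mul_assoc W, h1']; simp
    rw [e1]
    have e2 : (1 + W * Cᵀ)ᵀ = 1 + C * Wᵀ := by simp
    have e3 : (C + Cᵀ + W) * (C * Wᵀ) = Wᵀ := by
      rw [add_mul, add_mul, h4', ← Matrix.mul_assoc, ← Matrix.mul_assoc, h1, h3]; simp
    rw [e2, mul_add, e3, Matrix.mul_one, add_assoc]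

theorem lemB {C s : Matrix (Fin k) (Fin k) R} (h2 : Cᵀ * s = 0)
    (h4 : s * Cᵀ * C = s) : (1 + s * Cᵀ).det = 1 ∧
      (1 + s * Cᵀ) * (C * Cᵀ) * (1 + s * Cᵀ)ᵀ =
        (C * Cᵀ) + (s * Cᵀ + (s * Cᵀ)ᵀ) + s * sᵀ := by
  constructor
  · rw [det_one_add_mul_comm, h2, add_zero, det_one]
  · have h4' : Cᵀ * (C * sᵀ) = sᵀ := by
      have := congrArg transpose h4; simpa [Matrix.mul_assoc] using this
    have e1 : (1 + s * Cᵀ) * (C * Cᵀ) = C * Cᵀ + s * Cᵀ := by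
      rw [add_mul, ← Matrix.mul_assoc (s * Cᵀ), h4]; simp
    rw [e1]
    simp only [transpose_add, transpose_one, transpose_mul, transpose_transpose, mul_add, add_mul,
      Matrix.mul_one, Matrix.mul_assoc, h4']
    abel

end

/-- Decomposition of symplectic matrices. -/
theorem decomp {k : ℕ} {R : Type*} [Field R]
    (M : symplecticGroup (Fin k) R) : ∃ X Y A Z : Matrix (Fin k) (Fin k) R,
      X.IsSymm ∧ Y.IsSymm ∧ Z.IsSymm ∧ IsUnit A.det ∧
      (M : Matrix (Fin k ⊕ Fin k) (Fin k ⊕ Fin k) R) =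
        fromBlocks 1 X 0 1 * fromBlocks 1 0 Y 1 * fromBlocks A 0 0 (A⁻¹)ᵀ * fromBlocks 1 Z 0 1 := by
  obtain ⟨M, hM⟩ := M
  obtain ⟨A, B, C, D, rfl⟩ : ∃ A B C D, M = fromBlocks A B C D :=
    ⟨_, _, _, _, (fromBlocks_toBlocks M).symm⟩
  have hb := SymplecticGroup.fromBlocks_mem_iff.1 hM
  have hu : IsUnit (fromBlocks A B C D) :=
    (isUnit_iff_isUnit_det _).2 (SymplecticGroup.symplectic_det hM)
  obtain ⟨X, hX, hXu⟩ := exists_symm (A := A) (C := C) (by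
    intro x hx1 hx2
    have hv0 : fromBlocks A B C D *ᵥ (Sum.elim x 0) = fromBlocks A B C D *ᵥ (Sum.elim 0 0) := by
      simp only [smul_eq_mulVec] at hx1 hx2
      simp [fromBlocks_mulVec, hx1, hx2]
    exact (Sum.elim_eq_iff.1 (mulVec_injective_iff_isUnit.2 hu hv0)).1) hb.1
  set A' := A + X * C with hA'
  have hdet : IsUnit A'.det := (isUnit_iff_isUnit_det _).1 hXu
  have hmem : fromBlocks A' (B + X * D) C D ∈ symplecticGroup (Fin k) R := by
    have : fromBlocks A' (B + X * D) C D = fromBlocks 1 X 0 1 * fromBlocks A B C D := by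
      rw [fromBlocks_multiply]; simp [hA']
    rw [this]
    refine mul_mem ?_ hM
    rw [SymplecticGroup.fromBlocks_mem_iff]
    simp [hX.eq]
  have hBX : B = (B + X * D) - X * D := by simp
  generalize hB' : B + X * D = B' at *
  obtain ⟨g1, g2, g3⟩ := SymplecticGroup.fromBlocks_mem_iff.1 hmem
  obtain ⟨k1, k2, k3⟩ := SymplecticGroup.fromBlocks_mem_iff.1
    (by simpa [fromBlocks_transpose] using SymplecticGroup.transpose_mem hmem)
  have i1 : A' * A'⁻¹ = 1 := mul_nonsing_inv _ hdet
  have i2 : A'⁻¹ * A' = 1 := nonsing_inv_mul _ hdet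
  have i1' : (A'⁻¹)ᵀ * A'ᵀ = 1 := by rw [← transpose_mul, i1, transpose_one]
  have i2' : A'ᵀ * (A'⁻¹)ᵀ = 1 := by rw [← transpose_mul, i2, transpose_one]
  simp only [transpose_transpose] at k1 k2 k3
  have hY : (C * A'⁻¹)ᵀ = C * A'⁻¹ := by
    calc (C * A'⁻¹)ᵀ = (A'⁻¹)ᵀ * (Cᵀ * A') * A'⁻¹ := by
          rw [transpose_mul, Matrix.mul_assoc, Matrix.mul_assoc, i1, Matrix.mul_one]
      _ = _ := by rw [← g1, ← Matrix.mul_assoc, i1', Matrix.one_mul]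
  have hZ : (A'⁻¹ * B')ᵀ = A'⁻¹ * B' := by
    calc (A'⁻¹ * B')ᵀ = A'⁻¹ * (A' * B'ᵀ) * (A'⁻¹)ᵀ := by
          rw [transpose_mul, ← Matrix.mul_assoc A'⁻¹, i2, Matrix.one_mul]
      _ = _ := by rw [k1, Matrix.mul_assoc, Matrix.mul_assoc, i2', Matrix.mul_one]
  refine ⟨-X, C * A'⁻¹, A', A'⁻¹ * B', ?_, hY, hZ, hdet, ?_⟩
  · exact hX.neg
  · have hD : C * A'⁻¹ * B' + (A'⁻¹)ᵀ = D := by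
      have : D = (A'⁻¹)ᵀ * (A'ᵀ * D) := by rw [← Matrix.mul_assoc, i1', Matrix.one_mul]
      rw [sub_eq_iff_eq_add.1 g3, mul_add, Matrix.mul_one, ← Matrix.mul_assoc,
        ← transpose_mul, hY] at this
      rw [this, add_comm]
    have e : fromBlocks 1 0 (C * A'⁻¹) 1 * fromBlocks A' 0 0 (A'⁻¹)ᵀ *
        fromBlocks 1 (A'⁻¹ * B') 0 1 = fromBlocks A' B' C D := by
      simp only [fromBlocks_multiply, Matrix.mul_one, Matrix.mul_zero, Matrix.one_mul,
        Matrix.zero_mul, add_zero, zero_add]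
      rw [← Matrix.mul_assoc A', i1, Matrix.one_mul, Matrix.mul_assoc C A'⁻¹ A', i2,
        Matrix.mul_one, ← Matrix.mul_assoc C, hD]
    rw [Matrix.mul_assoc, Matrix.mul_assoc, ← Matrix.mul_assoc (fromBlocks 1 0 (C * A'⁻¹) 1), e,
      fromBlocks_multiply]
    simp [hA', hBX, sub_eq_add_neg]

section prod
universe u
variable (d : ℕ → ℕ) (F : ℕ → Type u) [∀ n, Field (F n)]

/-- product of symplectic groups -/
abbrev SpP := ∀ n, ↥(symplecticGroup (Fin (d n)) (F n))
/-- product of matrix spaces -/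
abbrev MatP := ∀ n, Matrix (Fin (d n)) (Fin (d n)) (F n)

variable {d F}

/-- the sequences `X` with upper unipotent element in `H` -/
def PG (H : Subgroup (SpP d F)) : AddSubgroup (MatP d F) where
  carrier := {X | ∃ g ∈ H, ∀ n, (g n).1 = fromBlocks 1 (X n) 0 1}
  zero_mem' := ⟨1, H.one_mem, fun n => by simp⟩
  add_mem' := by
    rintro X Y ⟨g, hg, hgX⟩ ⟨h, hh, hhY⟩
    refine ⟨g * h, H.mul_mem hg hh, fun n => ?_⟩
    simp only [Pi.mul_apply, Submonoid.coe_mul, hgX, hhY, fromBlocks_multiply, Pi.add_apply]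
    simp [add_comm]
  neg_mem' := by
    rintro X ⟨g, hg, hgX⟩
    refine ⟨g⁻¹, H.inv_mem hg, fun n => ?_⟩
    rw [Pi.inv_apply, SymplecticGroup.coe_inv']
    apply inv_eq_right_inv
    rw [hgX, fromBlocks_multiply]
    simp

theorem PG_conj {H : Subgroup (SpP d F)}
    (hSL : ∀ A B : MatP d F, (∀ n, (A n).det = 1) → (∀ n, A n * B n = 1) → ∃ g ∈ H, ∀ n,
      (g n).1 = fromBlocks (A n) 0 0 (B n)ᵀ)
    (A : MatP d F) (hA : ∀ n, (A n).det = 1) {X : MatP d F} (hX : X ∈ PG H) :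
    (fun n => A n * X n * (A n)ᵀ) ∈ PG H := by
  obtain ⟨u, hu, huX⟩ := hX
  have e : ∀ n, A n * (adjugate (A n)) = 1 := fun n => by rw [mul_adjugate, hA, one_smul]
  have e' : ∀ n, (adjugate (A n)) * A n = 1 := fun n => by rw [adjugate_mul, hA, one_smul]
  have e3 : ∀ n, (adjugate (A n))ᵀ * (A n)ᵀ = 1 := fun n => by
    rw [← transpose_mul, e, transpose_one]
  obtain ⟨g, hg, hgA⟩ := hSL A (fun n => adjugate (A n)) hA e
  obtain ⟨h, hh, hhA⟩ := hSL (fun n => adjugate (A n)) A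
    (fun n => by rw [det_adjugate, hA, one_pow]) e'
  refine ⟨g * u * h, H.mul_mem (H.mul_mem hg hu) hh, fun n => ?_⟩
  simp [fromBlocks_multiply, huX, hgA, hhA, e, e3]

/-- block restriction -/
def blk {R : Type*} [Field R] {k : ℕ} (a b : ℕ) (T : Matrix (Fin k) (Fin k) R) :
    Matrix (Fin k) (Fin k) R :=
  of fun i j => if i.val / (k / 3) = a ∧ j.val / (k / 3) = b then T i j else 0

theorem colour_lt {k : ℕ} (hk : 3 ≤ k) (i : Fin k) : i.val / (k / 3) < 6 := by
  rw [Nat.div_lt_iff_lt_mul (by omega)]; omega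

theorem sum_blk {R : Type*} [Field R] {k : ℕ} (hk : 3 ≤ k) (T : Matrix (Fin k) (Fin k) R) :
    ∑ a ∈ Finset.range 6, ∑ b ∈ Finset.range 6, blk a b T = T := by
  ext i j
  simp only [Matrix.sum_apply, blk, of_apply]
  rw [Finset.sum_eq_single (i.val / (k / 3)), Finset.sum_eq_single (j.val / (k / 3))]
  · simp
  · intro b _ hb; simp [hb.symm]
  · intro h; exact absurd (Finset.mem_range.2 (colour_lt hk j)) h
  · intro b _ hb
    exact Finset.sum_eq_zero fun x _ => by simp [hb.symm]
  · intro h; exact absurd (Finset.mem_range.2 (colour_lt hk i)) h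

variable (hd : ∀ n, 3 ≤ d n) {H : Subgroup (SpP d F)}
    (hSL : ∀ A B : MatP d F, (∀ n, (A n).det = 1) → (∀ n, A n * B n = 1) → ∃ g ∈ H, ∀ n,
      (g n).1 = fromBlocks (A n) 0 0 (B n)ᵀ)
    (hZ : ∀ a < 6, ∀ b < 6, (fun n => Cmat (F n) (d n) b (thr a b) +
      (Cmat (F n) (d n) b (thr a b))ᵀ : MatP d F) ∈ PG H)
    (hE : ∀ a < 6, (fun n => Cmat (F n) (d n) a (thr a a) *
      (Cmat (F n) (d n) a (thr a a))ᵀ : MatP d F) ∈ PG H)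

include hd hSL hZ in
theorem PG_sym (T : MatP d F) : (fun n => T n + (T n)ᵀ) ∈ PG H := by
  have key : ∀ a ∈ Finset.range 6, ∀ b ∈ Finset.range 6,
      (fun n => blk a b (T n) + (blk a b (T n))ᵀ : MatP d F) ∈ PG H := by
    intro a ha b hb
    rw [Finset.mem_range] at ha hb
    obtain ⟨t1, t2, t3⟩ := thr_spec a b
    have hz := hZ a ha b hb
    have hl : ∀ n, _ := fun n => lemA (C := Cmat (F n) (d n) b (thr a b)) (W := blk a b (T n))
      (Cmat_mul_self t2) (CmatT_mul t1 fun i j h => by simp [blk, h])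
      (mul_Cmat t2 fun i j h => by simp [blk, h])
      (mul_CmatT_mul_Cmat (hd n) t3 fun i j h => by simp [blk, h])
    have := (PG H).sub_mem (PG_conj hSL _ (fun n => (hl n).1) hz) hz
    convert this using 1
    funext n
    simp only [Pi.sub_apply, (hl n).2]
    abel
  have := (PG H).sum_mem fun a ha => (PG H).sum_mem fun b hb => key a ha b hb
  convert this using 1
  funext n
  conv_lhs => rw [← sum_blk (hd n) (T n)]
  simp only [Finset.sum_apply, Finset.sum_add_distrib, transpose_sum]

include hd hSL hZ hE in
theorem PG_sq (s : ∀ n, Fin (d n) → F n) :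
    (fun n => diagonal (fun i => s n i * s n i) : MatP d F) ∈ PG H := by
  have key : ∀ a ∈ Finset.range 6,
      (fun n => blk a a (diagonal (fun i => s n i * s n i)) : MatP d F) ∈ PG H := by
    intro a ha
    rw [Finset.mem_range] at ha
    obtain ⟨t1, t2, t3⟩ := thr_spec a a
    have hz := hE a ha
    have hl : ∀ n, _ := fun n => lemB (C := Cmat (F n) (d n) a (thr a a))
      (s := blk a a (diagonal (s n)))
      (CmatT_mul t1 fun i j h => by simp [blk, h])
      (mul_CmatT_mul_Cmat (hd n) t3 fun i j h => by simp [blk, h])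
    have := (PG H).sub_mem ((PG H).sub_mem (PG_conj hSL _ (fun n => (hl n).1) hz) hz)
      (PG_sym hd hSL hZ
        (fun n => blk a a (diagonal (s n)) * (Cmat (F n) (d n) a (thr a a))ᵀ))
    convert this using 1
    funext n
    simp only [Pi.sub_apply, (hl n).2]
    have hb : ∀ v : Fin (d n) → F n, blk a a (diagonal v) =
        diagonal fun i => if i.val / (d n / 3) = a then v i else 0 := by
      intro v
      ext i j
      by_cases hij : i = j
      · subst hij; simp [blk]
      · simp [blk, hij]
    have : blk a a (diagonal (s n)) * (blk a a (diagonal (s n)))ᵀ =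
        blk a a (diagonal (fun i => s n i * s n i)) := by
      rw [hb, hb, diagonal_transpose, diagonal_mul_diagonal]
      congr 1
      funext i
      split_ifs <;> simp
    rw [this]
    abel
  have := (PG H).sum_mem fun a ha => key a ha
  convert this using 1
  funext n
  rw [Finset.sum_apply]
  conv_lhs => rw [← sum_blk (hd n) (diagonal (fun i => s n i * s n i))]
  refine Finset.sum_congr rfl fun a ha => ?_
  rw [Finset.sum_eq_single a]
  · intro b _ hb
    ext i j
    simp only [blk, of_apply, Matrix.zero_apply]
    by_cases hij : i = j
    · subst hij; simp; intro h1 h2; omega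
    · simp [hij]
  · intro h; exact absurd ha h

include hd hSL hZ hE in
theorem PG_all [∀ n, Fintype (F n)] (X : MatP d F) (hX : ∀ n, (X n).IsSymm) : X ∈ PG H := by
  choose s r hsr using fun n (i : Fin (d n)) => two_squares (X n i i)
  have := (PG H).add_mem (PG_sym hd hSL hZ
    (fun n => of fun i j => if i < j then X n i j else 0))
    ((PG H).add_mem (PG_sq hd hSL hZ hE s) (PG_sq hd hSL hZ hE r))
  convert this using 1
  funext n
  ext i j
  have h := (hX n).apply i j
  rcases lt_trichotomy i j with hij | hij | hij
  · simp [hij, hij.ne, hij.not_gt]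
  · subst hij; simp [hsr]
  · simp [hij, hij.ne', hij.not_gt, h]

variable (hJ : (fun n => SymplecticGroup.symJ (Fin (d n)) (F n) : SpP d F) ∈ H)

include hJ in
theorem low {X : MatP d F} (hX : -X ∈ PG H) : ∃ g ∈ H, ∀ n, (g n).1 = fromBlocks 1 0 (X n) 1 := by
  obtain ⟨g, hg, h⟩ := hX
  refine ⟨_, H.mul_mem (H.mul_mem (H.mul_mem (H.mul_mem hJ hg) hJ) hJ) hJ, fun n => ?_⟩
  simp [h, J, fromBlocks_multiply]

include hd hSL hZ hE hJ in
theorem diag_mem [∀ n, Fintype (F n)] (X : MatP d F) (hX : ∀ n, (X n).IsSymm)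
    (hu : ∀ n, IsUnit (X n).det) : ∃ g ∈ H, ∀ n, (g n).1 = fromBlocks (X n) 0 0 ((X n)⁻¹)ᵀ := by
  obtain ⟨g, hg, h⟩ := PG_all hd hSL hZ hE X hX
  have hXi : ∀ n, ((X n)⁻¹)ᵀ = (X n)⁻¹ := fun n => by rw [transpose_nonsing_inv, (hX n).eq]
  obtain ⟨g', hg', h'⟩ := low (H := H) hJ (X := fun n => -(X n)⁻¹)
    (PG_all hd hSL hZ hE _ fun n => by simp [IsSymm, hXi])
  refine ⟨_, H.mul_mem (H.mul_mem (H.mul_mem hg hg') hg) hJ, fun n => ?_⟩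
  have i1 : X n * (X n)⁻¹ = 1 := mul_nonsing_inv _ (hu n)
  have i2 : (X n)⁻¹ * X n = 1 := nonsing_inv_mul _ (hu n)
  simp [h, h', J, fromBlocks_multiply, hXi, i1, i2]

include hd hSL hZ hE hJ in
theorem gl_mem [∀ n, Fintype (F n)] (A : MatP d F)
    (hu : ∀ n, IsUnit (A n).det) : ∃ g ∈ H, ∀ n, (g n).1 = fromBlocks (A n) 0 0 ((A n)⁻¹)ᵀ := by
  let i0 : ∀ n, Fin (d n) := fun n => ⟨0, by have := hd n; omega⟩
  let D : MatP d F := fun n => diagonal (Function.update 1 (i0 n) (A n).det)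
  have hD : ∀ n, (D n).det = (A n).det := fun n => by
    simp only [D, det_diagonal]
    rw [Finset.prod_update_of_mem (Finset.mem_univ _)]
    simp
  have hDu : ∀ n, IsUnit (D n).det := fun n => by rw [hD]; exact hu n
  obtain ⟨g, hg, h⟩ := diag_mem hd hSL hZ hE hJ D (fun n => by simp [D, IsSymm]) hDu
  have hdet : ∀ n, (A n * (D n)⁻¹).det = 1 := fun n => by
    rw [det_mul, ← hD n, ← det_mul, mul_nonsing_inv _ (hDu n), det_one]
  have i2 : ∀ n, (D n)⁻¹ * D n = 1 := fun n => nonsing_inv_mul _ (hDu n)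
  have i3 : ∀ n, A n * (A n)⁻¹ = 1 := fun n => mul_nonsing_inv _ (hu n)
  obtain ⟨g', hg', h'⟩ := hSL (fun n => A n * (D n)⁻¹) (fun n => D n * (A n)⁻¹) hdet (fun n => by
    rw [Matrix.mul_assoc, ← Matrix.mul_assoc (D n)⁻¹, i2, Matrix.one_mul, i3])
  refine ⟨_, H.mul_mem hg' hg, fun n => ?_⟩
  simp only [Pi.mul_apply, Submonoid.coe_mul, h, h',
    fromBlocks_multiply, Matrix.mul_zero, Matrix.zero_mul, add_zero, zero_add, ← transpose_mul]
  rw [Matrix.mul_assoc, i2, Matrix.mul_one, ← Matrix.mul_assoc, i2, Matrix.one_mul]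

include hd hSL hZ hE hJ in
theorem all_mem [∀ n, Fintype (F n)] (g : SpP d F) : g ∈ H := by
  choose X Y A Z hX hY hZ' hA hg using fun n => decomp (g n)
  obtain ⟨g1, m1, e1⟩ := PG_all hd hSL hZ hE X hX
  obtain ⟨g2, m2, e2⟩ := low (H := H) hJ (X := Y)
    (PG_all hd hSL hZ hE _ fun n => (hY n).neg)
  obtain ⟨g3, m3, e3⟩ := gl_mem hd hSL hZ hE hJ A hA
  obtain ⟨g4, m4, e4⟩ := PG_all hd hSL hZ hE Z hZ'
  have : g = g1 * g2 * g3 * g4 := by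
    funext n
    apply Subtype.ext
    simp [hg, e1, e2, e3, e4]
  rw [this]
  exact H.mul_mem (H.mul_mem (H.mul_mem m1 m2) m3) m4

end prod

/-- upper unipotent symplectic matrix -/
def up {k : ℕ} {R : Type*} [Field R] (X : Matrix (Fin k) (Fin k) R) (h : X.IsSymm) :
    symplecticGroup (Fin k) R :=
  ⟨fromBlocks 1 X 0 1, by rw [SymplecticGroup.fromBlocks_mem_iff]; simp [h.eq]⟩

end SpX

/-- `∏ n, Sp(2dₙ, Fₙ)` is finitely generated over the subgroup `∏ n, Gₙ`, where
`Gₙ = {diag(A, (A⁻¹)ᵀ) : A ∈ SL(dₙ, Fₙ)}` consists of the block-diagonal symplectic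
matrices with blocks `A` and the inverse transpose of `A`. Here `dₙ ≥ 3` and the
symplectic group consists of the `2d × 2d` matrices `M` with `M J Mᵀ = J` for the
standard block form `J`. -/
theorem stmt_17 (d : ℕ → ℕ) (hd : ∀ n, 3 ≤ d n) (F : ℕ → Type*)
    [∀ n, Field (F n)] [∀ n, Fintype (F n)] :
    ∃ S : Finset (∀ n, ↥(Matrix.symplecticGroup (Fin (d n)) (F n))),
      Subgroup.closure
        ({g : ∀ n, ↥(Matrix.symplecticGroup (Fin (d n)) (F n)) |
            ∀ n, ∃ A : Matrix.SpecialLinearGroup (Fin (d n)) (F n),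
              (g n : Matrix (Fin (d n) ⊕ Fin (d n)) (Fin (d n) ⊕ Fin (d n)) (F n)) =
                Matrix.fromBlocks (A : Matrix (Fin (d n)) (Fin (d n)) (F n)) 0 0
                  (((A⁻¹ : Matrix.SpecialLinearGroup (Fin (d n)) (F n)) :
                      Matrix (Fin (d n)) (Fin (d n)) (F n))ᵀ)}
          ∪ (S : Set (∀ n, ↥(Matrix.symplecticGroup (Fin (d n)) (F n))))) = ⊤ := by
  classical
  let S1 : ℕ × ℕ → (∀ n, ↥(Matrix.symplecticGroup (Fin (d n)) (F n))) := fun p n =>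
    SpX.up (SpX.Cmat (F n) (d n) p.2 (SpX.thr p.1 p.2) +
      (SpX.Cmat (F n) (d n) p.2 (SpX.thr p.1 p.2))ᵀ) (by simp [IsSymm, add_comm])
  let S2 : ℕ → (∀ n, ↥(Matrix.symplecticGroup (Fin (d n)) (F n))) := fun a n =>
    SpX.up (SpX.Cmat (F n) (d n) a (SpX.thr a a) *
      (SpX.Cmat (F n) (d n) a (SpX.thr a a))ᵀ) (by simp [IsSymm])
  refine ⟨{fun n => SymplecticGroup.symJ (Fin (d n)) (F n)} ∪
    (Finset.range 6 ×ˢ Finset.range 6).image S1 ∪ (Finset.range 6).image S2, ?_⟩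
  rw [eq_top_iff]
  intro g _
  refine SpX.all_mem hd ?_ ?_ ?_ ?_ g
  · intro A B hA hAB
    have hBA : ∀ n, B n * A n = 1 := fun n => mul_eq_one_comm.1 (hAB n)
    refine ⟨fun n => ⟨fromBlocks (A n) 0 0 (B n)ᵀ, ?_⟩, Subgroup.subset_closure
      (Or.inl fun n => ⟨⟨A n, hA n⟩, ?_⟩), fun n => rfl⟩
    · rw [SymplecticGroup.fromBlocks_mem_iff]
      simp only [Matrix.mul_zero, Matrix.zero_mul, transpose_zero, sub_zero, ← transpose_mul,
        hBA, transpose_one, and_self]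
    · have : B n = adjugate (A n) := by
        have h2 : A n * adjugate (A n) = 1 := by rw [mul_adjugate, hA, one_smul]
        rw [← Matrix.mul_one (B n), ← h2, ← Matrix.mul_assoc, hBA, Matrix.one_mul]
      simp only [this]
      rfl
  · intro a ha b hb
    refine ⟨S1 (a, b), Subgroup.subset_closure (Or.inr ?_), fun n => rfl⟩
    rw [Finset.mem_coe]
    refine Finset.mem_union_left _ (Finset.mem_union_right _ (Finset.mem_image_of_mem _ ?_))
    simp [ha, hb]
  · intro a ha
    refine ⟨S2 a, Subgroup.subset_closure (Or.inr ?_), fun n => rfl⟩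
    rw [Finset.mem_coe]
    exact Finset.mem_union_right _ (Finset.mem_image_of_mem _ (Finset.mem_range.2 ha))
  · refine Subgroup.subset_closure (Or.inr ?_)
    rw [Finset.mem_coe]
    exact Finset.mem_union_left _ (Finset.mem_union_left _ (Finset.mem_singleton_self _))
end
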